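/- There exists ε₀ > 0 such that for every ε ∈ (0,ε₀) and every global C^∞ solution u of the Cauchy problem, for j = 1,2, the limit V_j⁺(σ,ω) = lim_{t→+∞} V_j(t;σ,ω) exists for each (σ,ω) ∈ ℝ×S¹ and, setting V_j^{+,#}(t,x) = |x|^{−1/2} V_j⁺(|x|−t, x/|x|) and ω̂(x) = (−1, x₁/|x|, x₂/|x|), one has lim_{t→∞} ‖∂u_j(t,·) − ω̂(·)V_j^{+,#}(t,·)‖_{L²(ℝ²)} = 0, where ∂u_j = (∂ₜu_j, ∂₁u_j, ∂₂u_j). -/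

import Mathlib

/-!
The system is treated by the vector field method, followed by an analysis of the profile
`V = D(r^{1/2} u)` along outgoing rays `r = t + σ`.  Throughout, `R` bounds the radius of the support
of the data, so that `u` vanishes for `r ≥ t + R` (`finite_propagation`), and
`p = t + R + 1 - r ≥ 1` measures the distance to the light cone; on a ray it is the constant
`R + 1 - σ`.  Products `Γ^w` of the seven fields `S, L₁, L₂, Ω, ∂ₜ, ∂₁, ∂₂` commute with `□` up to
multiples of `□`.

**Global decay.**  The following bounds are propagated simultaneously (`bootstrap`):
* energy (`EB`): `∫ |∂Γ^w u|² ≤ A² (1+t)^{(|w|+1)/100}` for `|w| ≤ 10`;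
* crude decay (`CT`), a consequence of the energy bound and the Klainerman–Sobolev inequality
  (`klainerman_sobolev`, `crude`): `|∂Γ^w u| ≤ c (1+t)^{-7/16} p^{-1/2}` for `|w| ≤ 7`;
* sharp decay (`MB`): `|∂Γ^w u| ≤ M (1+t)^{|w|/200 - 1/2}` for `|w| ≤ 5`.

Crude decay makes `V_j' = -½ (∂ₜu_{j+1})² V_j + (integrable error)` along every ray (`ray_eq`).  The
first term on the right is a damping, whatever the other component does, so `V_j` stays of the size
of the data (`damped`, `ray_V0`).  This is where the sign of the nonlinearity enters, and it gives the
rate `t^{-1/2}` for `∂u` without loss.  The commuted equations are then integrated with the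
nonlinearity as a source, at the price of a factor `t^{|w|/200}` (`ray_V1`, `M_close`), and the sharp
decay makes the energies grow at most like small powers of `t` (`E_close`).  The initial energies are
`O(ε²)` (`init_energy`), so that the bootstrap closes for small `ε`.

**Limits.**  After adding an explicit decaying correction `|V|` is non-increasing along a ray
(`ray_mono`), and a continuous function whose absolute value converges in this manner converges
(`converges`).  This gives `V⁺` (`prf`).

**Mean-square convergence.**  The multiplier `S + 1/2` controls the energy with weight `p`
(`weighted_energy`): `∫ p |∂u|² ≤ C (1+t)^{1/4}`; Klainerman–Sobolev with this weight gives
`|∂u| ≤ C (1+t)^{-3/8} p^{-1}` (`weighted_decay`).  Evaluated where a ray enters the region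
`p² ≤ 1 + t`, this yields `|V|, |V⁺| ≤ K p^{-3/4}` (`prof_dom`, `prf_dom`), and `p^{-3/2}` is
integrable in `σ`.  The `L²` distance is then split (`defect_le`): in the region `p² ≤ 1 + t` the
difference `∂u - ω̂ r^{-1/2} V` is small (`grad_err`) and `V - V⁺` tends to zero in `L²(dσ dθ)` by
dominated convergence (`kf_tendsto`), while outside this region `∂u` is controlled by the weighted
energy and `V⁺` by dominated convergence again (`scat_tendsto`).
-/


open Real MeasureTheory Filter Topology

noncomputable section

/-- Partial derivative in `t`. -/
def pt (u : ℝ → ℝ → ℝ → ℝ) : ℝ → ℝ → ℝ → ℝ :=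
  fun t x1 x2 => deriv (fun s => u s x1 x2) t

/-- Partial derivative in `x₁`. -/
def p1 (u : ℝ → ℝ → ℝ → ℝ) : ℝ → ℝ → ℝ → ℝ :=
  fun t x1 x2 => deriv (fun y => u t y x2) x1

/-- Partial derivative in `x₂`. -/
def p2 (u : ℝ → ℝ → ℝ → ℝ) : ℝ → ℝ → ℝ → ℝ :=
  fun t x1 x2 => deriv (fun y => u t x1 y) x2

/-- The d'Alembertian `□ = ∂ₜ² − ∂₁² − ∂₂²`. -/
def dAlembert (u : ℝ → ℝ → ℝ → ℝ) : ℝ → ℝ → ℝ → ℝ :=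
  fun t x1 x2 => pt (pt u) t x1 x2 - p1 (p1 u) t x1 x2 - p2 (p2 u) t x1 x2

/-- `u : ℝ×ℝ² → ℝ` (curried) is C^∞. -/
def Smooth3 (u : ℝ → ℝ → ℝ → ℝ) : Prop :=
  ContDiff ℝ (⊤ : ℕ∞) (fun p : ℝ × ℝ × ℝ => u p.1 p.2.1 p.2.2)

/-- Compactly supported C^∞ function on ℝ². -/
def SmoothCompact2 (f : ℝ → ℝ → ℝ) : Prop :=
  ContDiff ℝ (⊤ : ℕ∞) (fun p : ℝ × ℝ => f p.1 p.2) ∧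
    HasCompactSupport (fun p : ℝ × ℝ => f p.1 p.2)

/-- Global C^∞ solution of the Cauchy problem
`□u₁ = −(∂ₜu₂)²∂ₜu₁`, `□u₂ = −(∂ₜu₁)²∂ₜu₂` with data `(εf_j, εg_j)`. -/
structure IsSolution (ε : ℝ) (f1 f2 g1 g2 : ℝ → ℝ → ℝ)
    (u1 u2 : ℝ → ℝ → ℝ → ℝ) : Prop where
  smooth1 : Smooth3 u1
  smooth2 : Smooth3 u2
  pde1 : ∀ t x1 x2 : ℝ, 0 < t →
    dAlembert u1 t x1 x2 = -(pt u2 t x1 x2) ^ 2 * pt u1 t x1 x2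
  pde2 : ∀ t x1 x2 : ℝ, 0 < t →
    dAlembert u2 t x1 x2 = -(pt u1 t x1 x2) ^ 2 * pt u2 t x1 x2
  init1 : ∀ x1 x2 : ℝ, u1 0 x1 x2 = ε * f1 x1 x2
  init2 : ∀ x1 x2 : ℝ, u2 0 x1 x2 = ε * f2 x1 x2
  initd1 : ∀ x1 x2 : ℝ, pt u1 0 x1 x2 = ε * g1 x1 x2
  initd2 : ∀ x1 x2 : ℝ, pt u2 0 x1 x2 = ε * g2 x1 x2

/-- `‖u(t)‖_E²  = ½∫ ((∂ₜu)² + (∂₁u)² + (∂₂u)²) dx`. -/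
def energySq (u : ℝ → ℝ → ℝ → ℝ) (t : ℝ) : ℝ :=
  (1 / 2) * ∫ x : ℝ × ℝ,
    ((pt u t x.1 x.2) ^ 2 + (p1 u t x.1 x.2) ^ 2 + (p2 u t x.1 x.2) ^ 2)

/-- The energy norm `‖u(t)‖_E`. -/
def energyNorm (u : ℝ → ℝ → ℝ → ℝ) (t : ℝ) : ℝ :=
  Real.sqrt (energySq u t)

/-- `|x|` in coordinates. -/
def radius (x1 x2 : ℝ) : ℝ := Real.sqrt (x1 ^ 2 + x2 ^ 2)

/-- The Japanese bracket `⟨z⟩ = (1+z²)^{1/2}`. -/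
def jb (z : ℝ) : ℝ := Real.sqrt (1 + z ^ 2)

/-- `U(t,x) = D(|x|^{1/2}u(t,x))` where `D = ½(∂_r − ∂ₜ)`. -/
def Uop (u : ℝ → ℝ → ℝ → ℝ) : ℝ → ℝ → ℝ → ℝ :=
  fun t x1 x2 =>
    (1 / 2) * ((x1 / radius x1 x2) *
        p1 (fun s y1 y2 => radius y1 y2 ^ ((1 : ℝ) / 2) * u s y1 y2) t x1 x2
      + (x2 / radius x1 x2) *
        p2 (fun s y1 y2 => radius y1 y2 ^ ((1 : ℝ) / 2) * u s y1 y2) t x1 x2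
      - pt (fun s y1 y2 => radius y1 y2 ^ ((1 : ℝ) / 2) * u s y1 y2) t x1 x2)

/-- `V(t;σ,ω) = U(t,(t+σ)ω)`. -/
def Vop (u : ℝ → ℝ → ℝ → ℝ) (t σ ω1 ω2 : ℝ) : ℝ :=
  Uop u t ((t + σ) * ω1) ((t + σ) * ω2)

/-- The rotation vector field `Ω = x₁∂₂ − x₂∂₁`. -/
def rot (u : ℝ → ℝ → ℝ → ℝ) : ℝ → ℝ → ℝ → ℝ :=
  fun t x1 x2 => x1 * p2 u t x1 x2 - x2 * p1 u t x1 x2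

/-- `H` for component `a` (the other component being `b`):
`H_a = ½(|x|^{1/2}(∂ₜu_b)²(∂ₜu_a) + t⁻¹U_b²U_a) − (8|x|^{3/2})⁻¹(4Ω²+1)u_a`. -/
def Hfun (ua ub : ℝ → ℝ → ℝ → ℝ) (t x1 x2 : ℝ) : ℝ :=
  (1 / 2) * (radius x1 x2 ^ ((1 : ℝ) / 2) * (pt ub t x1 x2) ^ 2 * pt ua t x1 x2
      + (1 / t) * (Uop ub t x1 x2) ^ 2 * Uop ua t x1 x2)
    - (1 / (8 * radius x1 x2 ^ ((3 : ℝ) / 2))) *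
        (4 * rot (rot ua) t x1 x2 + ua t x1 x2)

/-- `K_a(t;σ,ω) = H_a(t,(t+σ)ω)`. -/
def Kfun (ua ub : ℝ → ℝ → ℝ → ℝ) (t σ ω1 ω2 : ℝ) : ℝ :=
  Hfun ua ub t ((t + σ) * ω1) ((t + σ) * ω2)

/-- `ρ = V₁K₁ − V₂K₂`. -/
def rhoFun (u1 u2 : ℝ → ℝ → ℝ → ℝ) (t σ ω1 ω2 : ℝ) : ℝ :=
  Vop u1 t σ ω1 ω2 * Kfun u1 u2 t σ ω1 ω2 -
    Vop u2 t σ ω1 ω2 * Kfun u2 u1 t σ ω1 ω2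

/-- The Radon transform: line integral of `φ` over `{y : y·ω = s}`. -/
def Rline (φ : ℝ → ℝ → ℝ) (s ω1 ω2 : ℝ) : ℝ :=
  ∫ τ : ℝ, φ (s * ω1 - τ * ω2) (s * ω2 + τ * ω1)

/-- `R₂[φ](σ,ω) = (2√2π)⁻¹ ∫_σ^∞ R[φ](s,ω)(s−σ)^{−1/2} ds`. -/
def R2 (φ : ℝ → ℝ → ℝ) (σ ω1 ω2 : ℝ) : ℝ :=
  (1 / (2 * Real.sqrt 2 * Real.pi)) *
    ∫ s in Set.Ioi σ, Rline φ s ω1 ω2 / Real.sqrt (s - σ)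

/-- The Friedlander radiation field `F₀[φ,ψ] = −∂_σR₂[φ] + R₂[ψ]`. -/
def F0 (φ ψ : ℝ → ℝ → ℝ) (σ ω1 ω2 : ℝ) : ℝ :=
  -deriv (fun σ' => R2 φ σ' ω1 ω2) σ + R2 ψ σ ω1 ω2

/-- `∂_σF₀[φ,ψ]`. -/
def dF0 (φ ψ : ℝ → ℝ → ℝ) (σ ω1 ω2 : ℝ) : ℝ :=
  deriv (fun σ' => F0 φ ψ σ' ω1 ω2) σ

/-- The vector fields `Γ = (S, L₁, L₂, Ω, ∂ₜ, ∂₁, ∂₂)`. -/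
def Gam (i : Fin 7) (u : ℝ → ℝ → ℝ → ℝ) : ℝ → ℝ → ℝ → ℝ :=
  match i with
  | 0 => fun t x1 x2 => t * pt u t x1 x2 + x1 * p1 u t x1 x2 + x2 * p2 u t x1 x2
  | 1 => fun t x1 x2 => t * p1 u t x1 x2 + x1 * pt u t x1 x2
  | 2 => fun t x1 x2 => t * p2 u t x1 x2 + x2 * pt u t x1 x2
  | 3 => rot u
  | 4 => pt u
  | 5 => p1 u
  | 6 => p2 u

/-- `Γ^α = Γ₀^{α₀}⋯Γ₆^{α₆}`. -/
def GamMulti (α : Fin 7 → ℕ) (u : ℝ → ℝ → ℝ → ℝ) : ℝ → ℝ → ℝ → ℝ :=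
  (Gam 0)^[α 0] ((Gam 1)^[α 1] ((Gam 2)^[α 2] ((Gam 3)^[α 3]
    ((Gam 4)^[α 4] ((Gam 5)^[α 5] ((Gam 6)^[α 6] u))))))

/-- Pointwise norm `|φ(t,x)|_s = Σ_{|α|≤s}|Γ^αφ(t,x)|`, for a (finite) family of
components, `|Γ^αφ|` being the Euclidean norm of the vector of components. -/
def ptwiseNorm (s : ℕ) (us : List (ℝ → ℝ → ℝ → ℝ)) (t x1 x2 : ℝ) : ℝ :=
  ∑ α : Fin 7 → Fin (s + 1),
    if (∑ i, (α i : ℕ)) ≤ s then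
      Real.sqrt ((us.map fun u => (GamMulti (fun i => (α i : ℕ)) u t x1 x2) ^ 2).sum)
    else 0

/-- `‖φ(t)‖_s = Σ_{|α|≤s}‖Γ^αφ(t,·)‖_{L²(ℝ²)}`. -/
def sobNorm (s : ℕ) (us : List (ℝ → ℝ → ℝ → ℝ)) (t : ℝ) : ℝ :=
  ∑ α : Fin 7 → Fin (s + 1),
    if (∑ i, (α i : ℕ)) ≤ s then
      Real.sqrt (∫ x : ℝ × ℝ,
        (us.map fun u => (GamMulti (fun i => (α i : ℕ)) u t x.1 x.2) ^ 2).sum)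
    else 0

/-- The components of `∂u = (∂ₜu₁,∂₁u₁,∂₂u₁,∂ₜu₂,∂₁u₂,∂₂u₂)`. -/
def dList (u1 u2 : ℝ → ℝ → ℝ → ℝ) : List (ℝ → ℝ → ℝ → ℝ) :=
  [pt u1, p1 u1, p2 u1, pt u2, p1 u2, p2 u2]

/-- Smooth solution of the free wave equation with data `(φ0,φ1)`. -/
def IsFreeSolution (φ0 φ1 : ℝ → ℝ → ℝ) (φ : ℝ → ℝ → ℝ → ℝ) : Prop :=
  Smooth3 φ ∧ (∀ t x1 x2 : ℝ, 0 < t → dAlembert φ t x1 x2 = 0) ∧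
    (∀ x1 x2 : ℝ, φ 0 x1 x2 = φ0 x1 x2) ∧
    (∀ x1 x2 : ℝ, pt φ 0 x1 x2 = φ1 x1 x2)

/-- Mixed space-time partial `∂^α = ∂ₜ^{α₀}∂₁^{α₁}∂₂^{α₂}`. -/
def dmix (α : Fin 3 → ℕ) (u : ℝ → ℝ → ℝ → ℝ) : ℝ → ℝ → ℝ → ℝ :=
  pt^[α 0] (p1^[α 1] (p2^[α 2] u))

/-- `V^{+,#}(t,x) = |x|^{−1/2} V⁺(|x|−t, x/|x|)`. -/
def Vsharp (Vp : ℝ → ℝ → ℝ → ℝ) (t y1 y2 : ℝ) : ℝ :=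
  radius y1 y2 ^ (-(1 : ℝ) / 2) *
    Vp (radius y1 y2 - t) (y1 / radius y1 y2) (y2 / radius y1 y2)

/-- `‖∂u(t,·) − ω̂(·)V^{+,#}(t,·)‖_{L²(ℝ²)}` with `ω̂ = (−1, x₁/|x|, x₂/|x|)`. -/
def scatDist (u : ℝ → ℝ → ℝ → ℝ) (Vp : ℝ → ℝ → ℝ → ℝ) (t : ℝ) : ℝ :=
  Real.sqrt (∫ x : ℝ × ℝ,
    ((pt u t x.1 x.2 - (-1) * Vsharp Vp t x.1 x.2) ^ 2 +
     (p1 u t x.1 x.2 - (x.1 / radius x.1 x.2) * Vsharp Vp t x.1 x.2) ^ 2 +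
     (p2 u t x.1 x.2 - (x.2 / radius x.1 x.2) * Vsharp Vp t x.1 x.2) ^ 2))

set_option linter.all false

/-! ### Smooth functions and the commuting vector fields -/

/-- Uncurried form of a space-time function. -/
def unc (u : ℝ → ℝ → ℝ → ℝ) : ℝ × ℝ × ℝ → ℝ := fun p => u p.1 p.2.1 p.2.2

/-- Smooth space-time functions `ℝ × ℝ² → ℝ` (curried). -/
structure SF where
  /-- the underlying function -/
  val : ℝ → ℝ → ℝ → ℝ
  /-- smoothness of the underlying function -/
  prop : Smooth3 val

namespace SF

lemma val_injective : Function.Injective SF.val := fun a b h => by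
  cases a; cases b; cases h; rfl

lemma sm3_iff (u : ℝ → ℝ → ℝ → ℝ) : Smooth3 u ↔ ContDiff ℝ (⊤ : ℕ∞) (unc u) := Iff.rfl

instance : Zero SF := ⟨⟨0, (sm3_iff _).2 contDiff_const⟩⟩
instance : One SF := ⟨⟨1, (sm3_iff _).2 contDiff_const⟩⟩
instance : Add SF := ⟨fun a b => ⟨a.val + b.val,
  (sm3_iff _).2 (((sm3_iff _).1 a.prop).add ((sm3_iff _).1 b.prop))⟩⟩
instance : Mul SF := ⟨fun a b => ⟨a.val * b.val,
  (sm3_iff _).2 (((sm3_iff _).1 a.prop).mul ((sm3_iff _).1 b.prop))⟩⟩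
instance : Neg SF := ⟨fun a => ⟨-a.val, (sm3_iff _).2 (((sm3_iff _).1 a.prop).neg)⟩⟩
instance : Sub SF := ⟨fun a b => ⟨a.val - b.val,
  (sm3_iff _).2 (((sm3_iff _).1 a.prop).sub ((sm3_iff _).1 b.prop))⟩⟩
instance : SMul ℝ SF := ⟨fun c a => ⟨c • a.val,
  (sm3_iff _).2 (contDiff_const.mul ((sm3_iff _).1 a.prop))⟩⟩
instance : SMul ℕ SF := ⟨fun c a => ⟨c • a.val, by
  have := (sm3_iff ((c : ℝ) • a.val)).2 (contDiff_const.mul ((sm3_iff _).1 a.prop))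
  rwa [Nat.cast_smul_eq_nsmul] at this⟩⟩
instance : SMul ℤ SF := ⟨fun c a => ⟨c • a.val, by
  have := (sm3_iff ((c : ℝ) • a.val)).2 (contDiff_const.mul ((sm3_iff _).1 a.prop))
  rwa [Int.cast_smul_eq_zsmul] at this⟩⟩
instance : Pow SF ℕ := ⟨fun a n => ⟨a.val ^ n, (sm3_iff _).2 (((sm3_iff _).1 a.prop).pow n)⟩⟩
instance : NatCast SF := ⟨fun n => ⟨n, (sm3_iff _).2 contDiff_const⟩⟩
instance : IntCast SF := ⟨fun n => ⟨n, (sm3_iff _).2 contDiff_const⟩⟩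

instance : CommRing SF := val_injective.commRing SF.val rfl rfl (fun _ _ => rfl) (fun _ _ => rfl)
  (fun _ => rfl) (fun _ _ => rfl) (fun _ _ => rfl) (fun _ _ => rfl) (fun _ _ => rfl)
  (fun _ => rfl) (fun _ => rfl)

instance : Module ℝ SF := val_injective.module ℝ
  (⟨⟨SF.val, rfl⟩, fun _ _ => rfl⟩ : SF →+ (ℝ → ℝ → ℝ → ℝ)) (fun _ _ => rfl)

instance : Algebra ℝ SF := Algebra.ofModule
  (fun _ _ _ => val_injective (smul_mul_assoc _ _ _))
  (fun _ _ _ => val_injective (mul_smul_comm _ _ _))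

variable (f g : SF) (t x y c : ℝ)

@[simp] lemma add_app : (f + g).1 t x y = f.1 t x y + g.1 t x y := rfl
@[simp] lemma mul_app : (f * g).1 t x y = f.1 t x y * g.1 t x y := rfl
@[simp] lemma sub_app : (f - g).1 t x y = f.1 t x y - g.1 t x y := rfl
@[simp] lemma neg_app : (-f).1 t x y = -f.1 t x y := rfl
@[simp] lemma smul_app : (c • f).1 t x y = c * f.1 t x y := rfl
@[simp] lemma smul_app' : (f • g).1 t x y = f.1 t x y * g.1 t x y := rfl
@[simp] lemma zero_app : (0 : SF).1 t x y = 0 := rfl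
@[simp] lemma one_app : (1 : SF).1 t x y = 1 := rfl
@[simp] lemma pow_app (n : ℕ) : (f ^ n).1 t x y = (f.1 t x y) ^ n := rfl
@[simp] lemma ofNat_app (n : ℕ) [n.AtLeastTwo] :
    (OfNat.ofNat n : SF).1 t x y = OfNat.ofNat n := rfl
@[simp] lemma sum_app {ι : Type*} (s : Finset ι) (F : ι → SF) :
    (∑ i ∈ s, F i).1 t x y = ∑ i ∈ s, (F i).1 t x y := by
  classical
  induction s using Finset.induction_on with
  | empty => simp
  | insert a s ha ih => rw [Finset.sum_insert ha, Finset.sum_insert ha, add_app, ih]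

lemma ext' {f g : SF} (h : ∀ t x y, f.1 t x y = g.1 t x y) : f = g :=
  val_injective (funext fun t => funext fun x => funext fun y => h t x y)

lemma smooth : ContDiff ℝ (⊤ : ℕ∞) (unc f.1) := f.prop

lemma diff : Differentiable ℝ (unc f.1) := f.smooth.differentiable (by simp)

lemma cont : Continuous (unc f.1) := f.smooth.continuous

/-- The `a`-th unit vector of space-time, `a = 0` being time. -/
def ev : Fin 3 → ℝ × ℝ × ℝ := ![(1, 0, 0), (0, 1, 0), (0, 0, 1)]

/-- The `a`-th coordinate partial derivative (`a = 0` being time), as a derivation of `SF`. -/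
def Dd (a : Fin 3) : Derivation ℝ SF SF where
  toFun f := mk (fun t x y => fderiv ℝ (unc f.1) (t, x, y) (ev a)) (by
    have h : ContDiff ℝ (⊤ : ℕ∞) (fun p => fderiv ℝ (unc f.1) p (ev a)) :=
      (f.smooth.fderiv_right (m := (⊤ : ℕ∞)) (by simp)).clm_apply contDiff_const
    exact h)
  map_add' f g := ext' fun t x y => by
    have : unc (f + g).1 = unc f.1 + unc g.1 := rfl
    simp only [add_app, this]
    rw [fderiv_add (f.diff _) (g.diff _)]; rfl
  map_smul' c f := ext' fun t x y => by
    have : unc (c • f).1 = c • unc f.1 := rfl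
    simp only [RingHom.id_apply, smul_app, this]
    rw [fderiv_const_smul (f.diff _)]; rfl
  map_one_eq_zero' := ext' fun t x y => by
    have : unc (1 : SF).1 = fun _ => (1 : ℝ) := rfl
    show fderiv ℝ (unc (1 : SF).1) (t, x, y) (ev a) = 0
    rw [this, fderiv_const_apply]; rfl
  leibniz' f g := ext' fun t x y => by
    have : unc (f * g).1 = unc f.1 * unc g.1 := rfl
    simp only [LinearMap.coe_mk, AddHom.coe_mk, this, smul_eq_mul, add_app, mul_app]
    rw [fderiv_mul (f.diff _) (g.diff _)]; simp [unc]

lemma Dd_app (a : Fin 3) : (Dd a f).1 t x y = fderiv ℝ (unc f.1) (t, x, y) (ev a) := rfl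

lemma Dd_comm (a b : Fin 3) : Dd a (Dd b f) = Dd b (Dd a f) := by
  apply ext'; intro t x y
  have key : ∀ a b : Fin 3, (Dd a (Dd b f)).1 t x y =
      fderiv ℝ (fderiv ℝ (unc f.1)) (t, x, y) (ev a) (ev b) := by
    intro a b
    rw [Dd_app]
    have h : unc (Dd b f).1 = fun p => fderiv ℝ (unc f.1) p (ev b) := rfl
    have hd : DifferentiableAt ℝ (fderiv ℝ (unc f.1)) (t, x, y) :=
      ((f.smooth.fderiv_right (m := (⊤ : ℕ∞)) (by simp)).differentiable (by simp)) _
    rw [h, fderiv_clm_apply hd (differentiableAt_const _)]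
    simp
  rw [key, key]
  exact (f.smooth.contDiffAt.isSymmSndFDerivAt (by simp; exact WithTop.coe_le_coe.2 (le_top : (2 : ℕ∞) ≤ ⊤))) _ _

lemma D10 : Dd 1 (Dd 0 f) = Dd 0 (Dd 1 f) := Dd_comm f 1 0
lemma D20 : Dd 2 (Dd 0 f) = Dd 0 (Dd 2 f) := Dd_comm f 2 0
lemma D21 : Dd 2 (Dd 1 f) = Dd 1 (Dd 2 f) := Dd_comm f 2 1

/-- Chain rule along a curve. -/
lemma hasDerivAt_curve {a b c : ℝ → ℝ} {a' b' c' s : ℝ} (ha : HasDerivAt a a' s)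
    (hb : HasDerivAt b b' s) (hc : HasDerivAt c c' s) :
    HasDerivAt (fun s => f.1 (a s) (b s) (c s))
      (a' * (Dd 0 f).1 (a s) (b s) (c s) + b' * (Dd 1 f).1 (a s) (b s) (c s)
        + c' * (Dd 2 f).1 (a s) (b s) (c s)) s := by
  have h1 : HasDerivAt (fun s => (a s, b s, c s)) (a', b', c') s := ha.prodMk (hb.prodMk hc)
  have h2 := (f.diff (a s, b s, c s)).hasFDerivAt.comp_hasDerivAt s h1
  refine h2.congr_deriv ?_
  have : ((a', b', c') : ℝ × ℝ × ℝ) = a' • ev 0 + b' • ev 1 + c' • ev 2 := by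
    simp [ev]
  rw [this, map_add, map_add, map_smul, map_smul, map_smul]
  simp [Dd_app]

lemma hasDerivAt_t : HasDerivAt (fun s => f.1 s x y) ((Dd 0 f).1 t x y) t := by
  simpa using f.hasDerivAt_curve (hasDerivAt_id t) (hasDerivAt_const t x) (hasDerivAt_const t y)
lemma hasDerivAt_x : HasDerivAt (fun s => f.1 t s y) ((Dd 1 f).1 t x y) x := by
  simpa using f.hasDerivAt_curve (hasDerivAt_const x t) (hasDerivAt_id x) (hasDerivAt_const x y)
lemma hasDerivAt_y : HasDerivAt (fun s => f.1 t x s) ((Dd 2 f).1 t x y) y := by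
  simpa using f.hasDerivAt_curve (hasDerivAt_const y t) (hasDerivAt_const y x) (hasDerivAt_id y)

lemma pt_eq : pt f.1 = (Dd 0 f).1 := by
  funext t x y; exact (f.hasDerivAt_t t x y).deriv
lemma p1_eq : p1 f.1 = (Dd 1 f).1 := by
  funext t x y; exact (f.hasDerivAt_x t x y).deriv
lemma p2_eq : p2 f.1 = (Dd 2 f).1 := by
  funext t x y; exact (f.hasDerivAt_y t x y).deriv

/-- The time coordinate. -/
def cT : SF := mk (fun t _ _ => t) (contDiff_fst : ContDiff ℝ _ (fun p : ℝ × ℝ × ℝ => p.1))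
/-- The first space coordinate. -/
def cX : SF := mk (fun _ x _ => x) (contDiff_snd.fst : ContDiff ℝ _ (fun p : ℝ × ℝ × ℝ => p.2.1))
/-- The second space coordinate. -/
def cY : SF := mk (fun _ _ y => y) (contDiff_snd.snd : ContDiff ℝ _ (fun p : ℝ × ℝ × ℝ => p.2.2))

@[simp] lemma cT_app : cT.1 t x y = t := rfl
@[simp] lemma cX_app : cX.1 t x y = x := rfl
@[simp] lemma cY_app : cY.1 t x y = y := rfl

lemma Dd_unique0 {r : ℝ} (h : HasDerivAt (fun s => f.1 s x y) r t) : (Dd 0 f).1 t x y = r :=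
  (f.hasDerivAt_t t x y).unique h
lemma Dd_unique1 {r : ℝ} (h : HasDerivAt (fun s => f.1 t s y) r x) : (Dd 1 f).1 t x y = r :=
  (f.hasDerivAt_x t x y).unique h
lemma Dd_unique2 {r : ℝ} (h : HasDerivAt (fun s => f.1 t x s) r y) : (Dd 2 f).1 t x y = r :=
  (f.hasDerivAt_y t x y).unique h

@[simp] lemma D0T : Dd 0 cT = 1 := ext' fun t x y => Dd_unique0 _ _ _ _ (hasDerivAt_id t)
@[simp] lemma D1T : Dd 1 cT = 0 := ext' fun t x y => Dd_unique1 _ _ _ _ (hasDerivAt_const x t)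
@[simp] lemma D2T : Dd 2 cT = 0 := ext' fun t x y => Dd_unique2 _ _ _ _ (hasDerivAt_const y t)
@[simp] lemma D0X : Dd 0 cX = 0 := ext' fun t x y => Dd_unique0 _ _ _ _ (hasDerivAt_const t x)
@[simp] lemma D1X : Dd 1 cX = 1 := ext' fun t x y => Dd_unique1 _ _ _ _ (hasDerivAt_id x)
@[simp] lemma D2X : Dd 2 cX = 0 := ext' fun t x y => Dd_unique2 _ _ _ _ (hasDerivAt_const y x)
@[simp] lemma D0Y : Dd 0 cY = 0 := ext' fun t x y => Dd_unique0 _ _ _ _ (hasDerivAt_const t y)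
@[simp] lemma D1Y : Dd 1 cY = 0 := ext' fun t x y => Dd_unique1 _ _ _ _ (hasDerivAt_const x y)
@[simp] lemma D2Y : Dd 2 cY = 1 := ext' fun t x y => Dd_unique2 _ _ _ _ (hasDerivAt_id y)

/-- The vector fields `(S, L₁, L₂, Ω, ∂ₜ, ∂₁, ∂₂)` as derivations of `SF`. -/
def G (i : Fin 7) : Derivation ℝ SF SF :=
  match i with
  | 0 => cT • Dd 0 + cX • Dd 1 + cY • Dd 2
  | 1 => cT • Dd 1 + cX • Dd 0
  | 2 => cT • Dd 2 + cY • Dd 0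
  | 3 => cX • Dd 2 - cY • Dd 1
  | 4 => Dd 0
  | 5 => Dd 1
  | 6 => Dd 2

lemma G0 : G 0 f = cT * Dd 0 f + cX * Dd 1 f + cY * Dd 2 f := rfl
lemma G1 : G 1 f = cT * Dd 1 f + cX * Dd 0 f := rfl
lemma G2 : G 2 f = cT * Dd 2 f + cY * Dd 0 f := rfl
lemma G3 : G 3 f = cX * Dd 2 f - cY * Dd 1 f := rfl
lemma G4 : G 4 f = Dd 0 f := rfl
lemma G5 : G 5 f = Dd 1 f := rfl
lemma G6 : G 6 f = Dd 2 f := rfl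

/-- The d'Alembertian on `SF`. -/
def Box (f : SF) : SF := Dd 0 (Dd 0 f) - Dd 1 (Dd 1 f) - Dd 2 (Dd 2 f)

set_option maxHeartbeats 4000000 in
/-- Commutation of the vector fields with the coordinate derivatives. -/
lemma G_Dd (i : Fin 7) (a : Fin 3) : ∃ (b : Fin 3) (s : ℝ), |s| ≤ 1 ∧
    ∀ f : SF, G i (Dd a f) = Dd a (G i f) + s • Dd b f := by
  have hm : |(-1 : ℝ)| ≤ 1 := by simp
  have hz : |(0 : ℝ)| ≤ 1 := by simp
  have ho : |(1 : ℝ)| ≤ 1 := by simp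
  fin_cases i <;> fin_cases a <;>
    simp only [Fin.mk_zero, Fin.zero_eta, Fin.mk_one, Fin.reduceFinMk, G0, G1, G2, G3, G4, G5, G6]
  all_goals first
    | (refine ⟨0, 0, hz, fun f => ?_⟩
       simp only [map_add, map_sub, Derivation.leibniz, smul_eq_mul, D0T, D1T, D2T, D0X, D1X, D2X,
         D0Y, D1Y, D2Y, D10, D20, D21, neg_smul, one_smul, zero_smul]; ring1)
    | (refine ⟨0, -1, hm, fun f => ?_⟩
       simp only [map_add, map_sub, Derivation.leibniz, smul_eq_mul, D0T, D1T, D2T, D0X, D1X, D2X,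
         D0Y, D1Y, D2Y, D10, D20, D21, neg_smul, one_smul, zero_smul]; ring1)
    | (refine ⟨1, -1, hm, fun f => ?_⟩
       simp only [map_add, map_sub, Derivation.leibniz, smul_eq_mul, D0T, D1T, D2T, D0X, D1X, D2X,
         D0Y, D1Y, D2Y, D10, D20, D21, neg_smul, one_smul, zero_smul]; ring1)
    | (refine ⟨2, -1, hm, fun f => ?_⟩
       simp only [map_add, map_sub, Derivation.leibniz, smul_eq_mul, D0T, D1T, D2T, D0X, D1X, D2X,
         D0Y, D1Y, D2Y, D10, D20, D21, neg_smul, one_smul, zero_smul]; ring1)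
    | (refine ⟨1, 1, ho, fun f => ?_⟩
       simp only [map_add, map_sub, Derivation.leibniz, smul_eq_mul, D0T, D1T, D2T, D0X, D1X, D2X,
         D0Y, D1Y, D2Y, D10, D20, D21, neg_smul, one_smul, zero_smul]; ring1)

set_option maxHeartbeats 4000000 in
/-- Every field commutes with `□` except the scaling field, for which `[□, S] = 2□`. -/
lemma Box_G (i : Fin 7) (f : SF) :
    Box (G i f) = G i (Box f) + (if i = 0 then (2 : ℝ) else 0) • Box f := by
  have h2 : ((2 : ℝ) • Box f) = Box f + Box f := two_smul ℝ _
  fin_cases i <;>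
    simp [G0, G1, G2, G3, G4, G5, G6, h2] <;>
    simp only [Box, map_add, map_sub, Derivation.leibniz, smul_eq_mul, D0T, D1T, D2T, D0X, D1X, D2X,
         D0Y, D1Y, D2Y, D10, D20, D21, map_zero, Derivation.map_one_eq_zero] <;> ring1

/-- Iterated vector fields; the head of the word is applied first. -/
def GW : List (Fin 7) → SF → SF
  | [], f => f
  | i :: w, f => GW w (G i f)

@[simp] lemma GW_nil : GW [] f = f := rfl
@[simp] lemma GW_cons (i : Fin 7) (w : List (Fin 7)) : GW (i :: w) f = GW w (G i f) := rfl

lemma GW_add (w : List (Fin 7)) (f g : SF) : GW w (f + g) = GW w f + GW w g := by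
  induction w generalizing f g with
  | nil => rfl
  | cons i w ih => simp [ih]

lemma GW_smul (w : List (Fin 7)) (c : ℝ) (f : SF) : GW w (c • f) = c • GW w f := by
  induction w generalizing f with
  | nil => rfl
  | cons i w ih => simp [ih]

lemma GW_append (w w' : List (Fin 7)) (f : SF) : GW (w ++ w') f = GW w' (GW w f) := by
  induction w generalizing f with
  | nil => rfl
  | cons i w ih => simp [ih]

end SF

/-! ### Supports and spatial integrals -/

namespace SF

lemma radius_nonneg (x y : ℝ) : 0 ≤ radius x y := Real.sqrt_nonneg _
lemma radius_sq (x y : ℝ) : radius x y ^ 2 = x ^ 2 + y ^ 2 := Real.sq_sqrt (by positivity)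
lemma abs_x_le (x y : ℝ) : |x| ≤ radius x y := by
  rw [← Real.sqrt_sq_eq_abs]; exact Real.sqrt_le_sqrt (by nlinarith [sq_nonneg y])
lemma abs_y_le (x y : ℝ) : |y| ≤ radius x y := by
  rw [← Real.sqrt_sq_eq_abs]; exact Real.sqrt_le_sqrt (by nlinarith [sq_nonneg x])
lemma radius_smul (c x y : ℝ) (hc : 0 ≤ c) : radius (c * x) (c * y) = c * radius x y := by
  unfold radius
  rw [show (c * x) ^ 2 + (c * y) ^ 2 = c ^ 2 * (x ^ 2 + y ^ 2) by ring,
    Real.sqrt_mul (sq_nonneg c), Real.sqrt_sq hc]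
lemma radius_cont : Continuous (fun z : ℝ × ℝ => radius z.1 z.2) := by
  unfold radius; fun_prop

/-- `f` vanishes outside the forward light cone `|x| < t + R`, for nonnegative times. -/
def Supp (R : ℝ) (f : SF) : Prop := ∀ t x y, 0 ≤ t → t + R ≤ radius x y → f.1 t x y = 0

section supp
variable {R : ℝ} {f g : SF}

lemma Supp.zero : Supp R 0 := fun _ _ _ _ _ => rfl
lemma Supp.add (hf : Supp R f) (hg : Supp R g) : Supp R (f + g) := fun t x y h h' => by
  simp [hf t x y h h', hg t x y h h']
lemma Supp.sub (hf : Supp R f) (hg : Supp R g) : Supp R (f - g) := fun t x y h h' => by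
  simp [hf t x y h h', hg t x y h h']
lemma Supp.neg (hf : Supp R f) : Supp R (-f) := fun t x y h h' => by
  simp [hf t x y h h']
lemma Supp.mul_left (hf : Supp R f) (g : SF) : Supp R (g * f) := fun t x y h h' => by
  simp [hf t x y h h']
lemma Supp.mul_right (hf : Supp R f) (g : SF) : Supp R (f * g) := fun t x y h h' => by
  simp [hf t x y h h']
lemma Supp.smul (hf : Supp R f) (c : ℝ) : Supp R (c • f) := fun t x y h h' => by
  simp [hf t x y h h']
lemma Supp.pow (hf : Supp R f) {n : ℕ} (hn : n ≠ 0) : Supp R (f ^ n) := fun t x y h h' => by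
  simp [hf t x y h h', hn]
lemma Supp.sum {ι : Type*} (s : Finset ι) {F : ι → SF} (h : ∀ i ∈ s, Supp R (F i)) :
    Supp R (∑ i ∈ s, F i) := fun t x y h1 h2 => by
  rw [sum_app]; exact Finset.sum_eq_zero fun i hi => h i hi t x y h1 h2

/-- Vanishing in the open exterior region is enough. -/
lemma Supp.of_interior (hR : 0 < R)
    (h : ∀ t x y, 0 < t → t + R < radius x y → f.1 t x y = 0) : Supp R f := by
  intro t x y ht hr
  have hc : Continuous (fun s : ℝ => f.1 (t + s) ((1 + 2 * s / R) * x) ((1 + 2 * s / R) * y)) :=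
    f.cont.comp (f := fun s : ℝ => ((t + s), ((1 + 2 * s / R) * x), ((1 + 2 * s / R) * y)))
      (by fun_prop)
  have hl : Tendsto (fun s : ℝ => f.1 (t + s) ((1 + 2 * s / R) * x) ((1 + 2 * s / R) * y))
      (𝓝[>] 0) (𝓝 (f.1 t x y)) := by
    have := hc.tendsto 0
    simp only [add_zero, mul_zero, zero_div, one_mul] at this
    exact this.mono_left nhdsWithin_le_nhds
  refine tendsto_nhds_unique hl (tendsto_const_nhds.congr' ?_)
  filter_upwards [self_mem_nhdsWithin] with s hs
  have hs : 0 < s := hs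
  refine (h _ _ _ (by linarith) ?_).symm
  rw [radius_smul _ _ _ (by positivity)]
  have : s ≤ 2 * s / R * radius x y - s := by
    rw [div_mul_eq_mul_div, le_sub_iff_add_le, le_div_iff₀ hR]; nlinarith
  nlinarith

lemma Supp.eventually (hf : Supp R f) {t x y : ℝ} (ht : 0 < t) (hr : t + R < radius x y) :
    unc f.1 =ᶠ[𝓝 (t, x, y)] fun _ => 0 := by
  have h1 : ∀ᶠ p : ℝ × ℝ × ℝ in 𝓝 (t, x, y), 0 < p.1 :=
    continuous_fst.continuousAt.eventually (lt_mem_nhds ht)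
  have h2 : ∀ᶠ p : ℝ × ℝ × ℝ in 𝓝 (t, x, y), p.1 + R < radius p.2.1 p.2.2 :=
    ContinuousAt.eventually_lt (by fun_prop)
      (radius_cont.comp continuous_snd).continuousAt hr
  filter_upwards [h1, h2] with p hp1 hp2
  exact hf _ _ _ hp1.le hp2.le

lemma Supp.Dd (hR : 0 < R) (hf : Supp R f) (a : Fin 3) : Supp R (Dd a f) := by
  refine Supp.of_interior hR fun t x y ht hr => ?_
  rw [Dd_app, (hf.eventually ht hr).fderiv_eq, fderiv_const_apply]; rfl

lemma Supp.G (hR : 0 < R) (hf : Supp R f) (i : Fin 7) : Supp R (G i f) := by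
  have := hf.Dd hR
  fin_cases i <;>
    simp only [Fin.mk_zero, Fin.zero_eta, Fin.mk_one, Fin.reduceFinMk, G0, G1, G2, G3, G4, G5, G6]
  · exact (((this 0).mul_left _).add ((this 1).mul_left _)).add ((this 2).mul_left _)
  · exact ((this 1).mul_left _).add ((this 0).mul_left _)
  · exact ((this 2).mul_left _).add ((this 0).mul_left _)
  · exact ((this 2).mul_left _).sub ((this 1).mul_left _)
  all_goals exact this _

lemma Supp.GW (hR : 0 < R) (w : List (Fin 7)) {f : SF} (hf : Supp R f) : Supp R (GW w f) := by
  induction w generalizing f with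
  | nil => exact hf
  | cons i w ih => exact ih (hf.G hR i)

lemma Supp.box (hR : 0 < R) (hf : Supp R f) : Supp R (Box f) :=
  (((hf.Dd hR 0).Dd hR 0).sub ((hf.Dd hR 1).Dd hR 1)).sub ((hf.Dd hR 2).Dd hR 2)

end supp

/-- The spatial integral of `f` at time `t`. -/
def I (f : SF) (t : ℝ) : ℝ := ∫ z : ℝ × ℝ, f.1 t z.1 z.2

lemma cont_slice (f : SF) (t : ℝ) : Continuous (fun z : ℝ × ℝ => f.1 t z.1 z.2) :=
  f.cont.comp (f := fun z : ℝ × ℝ => (t, z.1, z.2)) (by fun_prop)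

/-- A compact square containing the supports of the slices up to time `M - R`. -/
def sq (M : ℝ) : Set (ℝ × ℝ) := Set.Icc (-M) M ×ˢ Set.Icc (-M) M
lemma sq_compact (M : ℝ) : IsCompact (sq M) := isCompact_Icc.prod isCompact_Icc
lemma notMem_sq {M : ℝ} {z : ℝ × ℝ} (h : z ∉ sq M) : M < radius z.1 z.2 := by
  by_contra hc
  push Not at hc
  apply h
  exact ⟨abs_le.1 ((abs_x_le _ _).trans hc), abs_le.1 ((abs_y_le _ _).trans hc)⟩

variable {R : ℝ} {f g : SF} {t : ℝ}

lemma Supp.compact (hf : Supp R f) (ht : 0 ≤ t) :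
    HasCompactSupport (fun z : ℝ × ℝ => f.1 t z.1 z.2) :=
  HasCompactSupport.intro (sq_compact (t + R)) fun z hz => hf _ _ _ ht (notMem_sq hz).le

lemma Supp.integrable (hf : Supp R f) (ht : 0 ≤ t) :
    Integrable (fun z : ℝ × ℝ => f.1 t z.1 z.2) :=
  (cont_slice f t).integrable_of_hasCompactSupport (hf.compact ht)

lemma I_add (hf : Supp R f) (hg : Supp R g) (ht : 0 ≤ t) : I (f + g) t = I f t + I g t :=
  integral_add (hf.integrable ht) (hg.integrable ht)
lemma I_sub (hf : Supp R f) (hg : Supp R g) (ht : 0 ≤ t) : I (f - g) t = I f t - I g t :=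
  integral_sub (hf.integrable ht) (hg.integrable ht)
lemma I_neg : I (-f) t = - I f t := integral_neg _
lemma I_smul (c : ℝ) : I (c • f) t = c * I f t := integral_const_mul _ _
lemma I_zero : I 0 t = 0 := integral_zero _ _

lemma I_mono (hf : Supp R f) (hg : Supp R g) (ht : 0 ≤ t)
    (h : ∀ x y, f.1 t x y ≤ g.1 t x y) : I f t ≤ I g t :=
  integral_mono (hf.integrable ht) (hg.integrable ht) fun z => h _ _

lemma I_nonneg (h : ∀ x y, 0 ≤ f.1 t x y) : 0 ≤ I f t := integral_nonneg fun z => h _ _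

/-- Differentiation under the integral sign, on a compact set containing the supports. -/
lemma I_hasDerivAt (hR : 0 < R) (hf : Supp R f) (ht : 0 < t) :
    HasDerivAt (I f) (I (Dd 0 f) t) t := by
  have hK : IsCompact (Set.Icc 0 (t + 1) ×ˢ sq (t + 1 + R)) := isCompact_Icc.prod (sq_compact _)
  obtain ⟨C, hC⟩ := hK.exists_bound_of_continuousOn (Dd 0 f).cont.continuousOn
  refine (hasDerivAt_integral_of_dominated_loc_of_deriv_le (μ := volume)
    (F := fun s z : _ => f.1 s (z : ℝ × ℝ).1 z.2) (F' := fun s z => (Dd 0 f).1 s z.1 z.2)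
    (s := Set.Ioo 0 (t + 1)) (bound := (sq (t + 1 + R)).indicator fun _ => C)
    (Ioo_mem_nhds ht (by linarith)) ?_ (hf.integrable ht.le) ?_ ?_ ?_ ?_).2
  · exact Eventually.of_forall fun s => (cont_slice f s).aestronglyMeasurable
  · exact (cont_slice _ t).aestronglyMeasurable
  · refine Eventually.of_forall fun z s hs => ?_
    by_cases hz : z ∈ sq (t + 1 + R)
    · rw [Set.indicator_of_mem hz]
      exact hC (s, z) ⟨⟨hs.1.le, hs.2.le⟩, hz⟩
    · rw [Set.indicator_of_notMem hz, (hf.Dd hR 0) _ _ _ hs.1.le, norm_zero]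
      linarith [notMem_sq hz, hs.2]
  · rw [integrable_indicator_iff (sq_compact _).measurableSet]
    exact integrableOn_const (sq_compact _).measure_lt_top.ne
  · exact Eventually.of_forall fun z s _ => hasDerivAt_t f s z.1 z.2

lemma I_continuousOn (hf : Supp R f) (T : ℝ) : ContinuousOn (I f) (Set.Icc 0 T) := by
  refine continuousOn_integral_of_compact_support (μ := volume)
    (f := fun s z : _ => f.1 s (z : ℝ × ℝ).1 z.2) (sq_compact (T + R)) ?_ ?_
  · exact (f.cont.comp (f := fun p : ℝ × ℝ × ℝ => (p.1, p.2.1, p.2.2)) (by fun_prop)).continuousOn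
  · intro s z hs hz
    exact hf _ _ _ hs.1 (by linarith [notMem_sq hz, hs.2])

/-- Divergences of functions supported in the cone integrate to zero. -/
lemma I_D1 (hR : 0 < R) (hf : Supp R f) (ht : 0 ≤ t) : I (Dd 1 f) t = 0 := by
  have hi := (hf.Dd hR 1).integrable ht
  unfold I
  rw [Measure.volume_eq_prod] at hi ⊢
  rw [integral_prod_symm _ hi]
  refine integral_eq_zero_of_ae (Eventually.of_forall fun y => ?_)
  have hcs : ∀ g : SF, Supp R g → Integrable (fun x => g.1 t x y) := fun g hg =>
    (((cont_slice g t).comp (f := fun x : ℝ => (x, y)) (by fun_prop))).integrable_of_hasCompactSupport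
      (HasCompactSupport.intro (K := Set.Icc (-(t + R)) (t + R)) isCompact_Icc fun x hx =>
        hg _ _ _ ht (by
          by_contra hc
          exact hx (abs_le.1 ((abs_x_le x y).trans (not_le.1 hc).le))))
  exact integral_eq_zero_of_hasDerivAt_of_integrable (fun x => hasDerivAt_x f t x y)
    (hcs _ (hf.Dd hR 1)) (hcs _ hf)

lemma I_D2 (hR : 0 < R) (hf : Supp R f) (ht : 0 ≤ t) : I (Dd 2 f) t = 0 := by
  have hi := (hf.Dd hR 2).integrable ht
  unfold I
  rw [Measure.volume_eq_prod] at hi ⊢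
  rw [integral_prod _ hi]
  refine integral_eq_zero_of_ae (Eventually.of_forall fun x => ?_)
  have hcs : ∀ g : SF, Supp R g → Integrable (fun y => g.1 t x y) := fun g hg =>
    (((cont_slice g t).comp (f := fun y : ℝ => (x, y)) (by fun_prop))).integrable_of_hasCompactSupport
      (HasCompactSupport.intro (K := Set.Icc (-(t + R)) (t + R)) isCompact_Icc fun y hx =>
        hg _ _ _ ht (by
          by_contra hc
          exact hx (abs_le.1 ((abs_y_le x y).trans (not_le.1 hc).le))))
  exact integral_eq_zero_of_hasDerivAt_of_integrable (fun y => hasDerivAt_y f t x y)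
    (hcs _ (hf.Dd hR 2)) (hcs _ hf)

end SF

/-! ### Energy identity and finite speed of propagation -/

namespace SF

/-- The cut-off phase `a - t - √(|x - X|² + d²)`. -/
def phase (a d X Y : ℝ) (t x y : ℝ) : ℝ := a - t - √((x - X) ^ 2 + (y - Y) ^ 2 + d ^ 2)

/-- A smooth weight supported in a (mollified) backward light cone. -/
def cone (a d X Y : ℝ) (hd : 0 < d) : SF :=
  ⟨fun t x y => expNegInvGlue (phase a d X Y t x y), (sm3_iff _).2 (by
    have h : ContDiff ℝ (⊤ : ℕ∞) (fun p : ℝ × ℝ × ℝ =>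
        √((p.2.1 - X) ^ 2 + (p.2.2 - Y) ^ 2 + d ^ 2)) :=
      ContDiff.sqrt (by fun_prop) fun p => by positivity
    exact expNegInvGlue.contDiff.comp (((contDiff_const.sub contDiff_fst)).sub h))⟩

/-- The weight decreases in time, and its spatial gradient is shorter than its time derivative. -/
lemma cone_deriv (a d X Y : ℝ) (hd : 0 < d) (t x y : ℝ) : ∃ k : ℝ, 0 ≤ k ∧
    (Dd 0 (cone a d X Y hd)).1 t x y = -k ∧
    (Dd 1 (cone a d X Y hd)).1 t x y = -(k * ((x - X) / √((x - X) ^ 2 + (y - Y) ^ 2 + d ^ 2))) ∧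
    (Dd 2 (cone a d X Y hd)).1 t x y = -(k * ((y - Y) / √((x - X) ^ 2 + (y - Y) ^ 2 + d ^ 2))) := by
  have hH : ∀ s, HasDerivAt expNegInvGlue (deriv expNegInvGlue s) s := fun s =>
    ((expNegInvGlue.contDiff (n := 1)).differentiable (by simp) s).hasDerivAt
  have hpos : 0 < (x - X) ^ 2 + (y - Y) ^ 2 + d ^ 2 := by positivity
  refine ⟨deriv expNegInvGlue (phase a d X Y t x y), expNegInvGlue.monotone.deriv_nonneg, ?_, ?_, ?_⟩
  · refine Dd_unique0 _ _ _ _ ?_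
    have h : HasDerivAt (fun s => phase a d X Y s x y) (-1) t := by
      simpa [phase] using ((hasDerivAt_id t).const_sub a).sub_const
        (√((x - X) ^ 2 + (y - Y) ^ 2 + d ^ 2))
    exact ((hH _).comp t h).congr_deriv (by ring)
  · refine Dd_unique1 _ _ _ _ ?_
    have h : HasDerivAt (fun s => phase a d X Y t s y)
        (-((x - X) / √((x - X) ^ 2 + (y - Y) ^ 2 + d ^ 2))) x := by
      have h1 : HasDerivAt (fun s => (s - X) ^ 2 + (y - Y) ^ 2 + d ^ 2) (2 * (x - X)) x := by
        simpa using ((((hasDerivAt_id x).sub_const X).pow 2).add_const ((y - Y) ^ 2)).add_const (d ^ 2)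
      have := (h1.sqrt hpos.ne').const_sub (a - t)
      refine this.congr_deriv ?_
      field_simp
    exact ((hH _).comp x h).congr_deriv (by ring)
  · refine Dd_unique2 _ _ _ _ ?_
    have h : HasDerivAt (fun s => phase a d X Y t x s)
        (-((y - Y) / √((x - X) ^ 2 + (y - Y) ^ 2 + d ^ 2))) y := by
      have h1 : HasDerivAt (fun s => (x - X) ^ 2 + (s - Y) ^ 2 + d ^ 2) (2 * (y - Y)) y := by
        simpa using ((((hasDerivAt_id y).sub_const Y).pow 2).const_add ((x - X) ^ 2)).add_const (d ^ 2)
      have := (h1.sqrt hpos.ne').const_sub (a - t)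
      refine this.congr_deriv ?_
      field_simp
    exact ((hH _).comp y h).congr_deriv (by ring)

/-- The energy density `½ Σ_a (∂_a f)²`. -/
def en (f : SF) : SF := (1 / 2 : ℝ) • (Dd 0 f ^ 2 + Dd 1 f ^ 2 + Dd 2 f ^ 2)

lemma en_app (f : SF) (t x y : ℝ) : (en f).1 t x y =
    1 / 2 * ((Dd 0 f).1 t x y ^ 2 + (Dd 1 f).1 t x y ^ 2 + (Dd 2 f).1 t x y ^ 2) := rfl

lemma en_nonneg (f : SF) (t x y : ℝ) : 0 ≤ (en f).1 t x y := by
  rw [en_app]; positivity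

lemma sq_le_en (f : SF) (t x y : ℝ) (a : Fin 3) : (Dd a f).1 t x y ^ 2 ≤ 2 * (en f).1 t x y := by
  rw [en_app]
  have h0 := sq_nonneg ((Dd 0 f).1 t x y)
  have h1 := sq_nonneg ((Dd 1 f).1 t x y)
  have h2 := sq_nonneg ((Dd 2 f).1 t x y)
  fin_cases a
  · show (Dd 0 f).1 t x y ^ 2 ≤ _
    linarith
  · show (Dd 1 f).1 t x y ^ 2 ≤ _
    linarith
  · show (Dd 2 f).1 t x y ^ 2 ≤ _
    linarith

lemma D0_en (f : SF) : Dd 0 (en f) = Dd 0 f * Dd 0 (Dd 0 f) + Dd 1 f * Dd 0 (Dd 1 f)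
    + Dd 2 f * Dd 0 (Dd 2 f) := by
  apply ext'; intro t x y
  simp [en, pow_two, Derivation.leibniz]; ring

/-- Differential form of the weighted energy identity. -/
lemma energy_identity (χ f : SF) : Dd 0 (χ * en f) =
    Dd 1 (χ * (Dd 0 f * Dd 1 f)) + Dd 2 (χ * (Dd 0 f * Dd 2 f))
    + (Dd 0 χ * en f + χ * (Dd 0 f * Box f) - Dd 0 f * (Dd 1 χ * Dd 1 f + Dd 2 χ * Dd 2 f)) := by
  rw [Derivation.leibniz, D0_en]
  simp only [Box, map_add, map_sub, Derivation.leibniz, smul_eq_mul, D10, D20, D21]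
  ring

/-- Such a weight makes the flux term of the energy identity nonpositive: `|∂ₜf ∇f| ≤ e`. -/
lemma cone_term (k c s p q r e : ℝ) (hk : 0 ≤ k) (hcs : c ^ 2 + s ^ 2 ≤ 1)
    (he : e = 1 / 2 * (p ^ 2 + q ^ 2 + r ^ 2)) :
    -k * e - p * (-(k * c) * q + -(k * s) * r) ≤ 0 := by
  have : p * (c * q + s * r) ≤ e := by
    nlinarith [sq_nonneg (p - (c * q + s * r)), sq_nonneg (c * r - s * q),
      mul_nonneg (sub_nonneg.2 hcs) (add_nonneg (sq_nonneg q) (sq_nonneg r))]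
  nlinarith

/-- `u` solves the system in `t > 0`. -/
def Solves (u : Fin 2 → SF) : Prop := ∀ j t x y, 0 < t → (Box (u j)).1 t x y =
  -((Dd 0 (u (j + 1))).1 t x y) ^ 2 * (Dd 0 (u j)).1 t x y

/-- The energy with a weight decreasing along the light cone does not grow. -/
lemma weighted_le {R : ℝ} (hR : 0 < R) {χ : SF} (hsχ : Supp R χ) {u : Fin 2 → SF} (hu : Solves u)
    {t : ℝ} (ht : 0 < t) (hχ0 : ∀ x y, 0 ≤ χ.1 t x y)
    (hk : ∀ x y, ∃ k c s : ℝ, 0 ≤ k ∧ c ^ 2 + s ^ 2 ≤ 1 ∧ (Dd 0 χ).1 t x y = -k ∧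
      (Dd 1 χ).1 t x y = -(k * c) ∧ (Dd 2 χ).1 t x y = -(k * s)) :
    I (Dd 0 (χ * en (u 0) + χ * en (u 1))) t ≤ 0 := by
  have e1 : Dd 0 (χ * en (u 0) + χ * en (u 1)) = (Dd 1 (χ * (Dd 0 (u 0) * Dd 1 (u 0)) + χ * (Dd 0 (u 1) * Dd 1 (u 1)))
    + Dd 2 (χ * (Dd 0 (u 0) * Dd 2 (u 0)) + χ * (Dd 0 (u 1) * Dd 2 (u 1))))
    + ((Dd 0 χ * en (u 0) + χ * (Dd 0 (u 0) * Box (u 0))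
        - Dd 0 (u 0) * (Dd 1 χ * Dd 1 (u 0) + Dd 2 χ * Dd 2 (u 0)))
      + (Dd 0 χ * en (u 1) + χ * (Dd 0 (u 1) * Box (u 1))
        - Dd 0 (u 1) * (Dd 1 χ * Dd 1 (u 1) + Dd 2 χ * Dd 2 (u 1)))) := by
    rw [map_add, energy_identity, energy_identity, map_add, map_add]; ring
  have s1 := ((hsχ.mul_right (Dd 0 (u 0) * Dd 1 (u 0))).add
    (hsχ.mul_right (Dd 0 (u 1) * Dd 1 (u 1))))
  have s2 := ((hsχ.mul_right (Dd 0 (u 0) * Dd 2 (u 0))).add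
    (hsχ.mul_right (Dd 0 (u 1) * Dd 2 (u 1))))
  have s3 : ∀ f : SF, Supp R (Dd 0 χ * en f + χ * (Dd 0 f * Box f)
        - Dd 0 f * (Dd 1 χ * Dd 1 f + Dd 2 χ * Dd 2 f)) := fun f =>
    (((hsχ.Dd hR 0).mul_right _).add (hsχ.mul_right _)).sub
      ((((hsχ.Dd hR 1).mul_right _).add ((hsχ.Dd hR 2).mul_right _)).mul_left _)
  rw [e1, I_add ((s1.Dd hR 1).add (s2.Dd hR 2)) ((s3 _).add (s3 _)) ht.le,
    I_add (s1.Dd hR 1) (s2.Dd hR 2) ht.le, I_D1 hR s1 ht.le, I_D2 hR s2 ht.le, zero_add,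
    zero_add, ← I_zero (t := t)]
  refine I_mono ((s3 _).add (s3 _)) Supp.zero ht.le fun x y => ?_
  obtain ⟨k, c, s, hk, hcs, k0, k1, k2⟩ := hk x y
  simp only [add_app, sub_app, mul_app, zero_app, k0, k1, k2, hu 0 t x y ht, hu 1 t x y ht]
  have c0 := cone_term k _ _ _ _ _ _ hk hcs (en_app (u 0) t x y)
  have c1 := cone_term k _ _ _ _ _ _ hk hcs (en_app (u 1) t x y)
  have c2 : 0 ≤ χ.1 t x y * ((Dd 0 (u 0)).1 t x y * (Dd 0 (u 1)).1 t x y) ^ 2 :=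
    mul_nonneg (hχ0 _ _) (sq_nonneg _)
  have e01 : u (0 + 1) = u 1 := rfl
  have e11 : u (1 + 1) = u 0 := rfl
  rw [e01, e11]
  nlinarith

lemma eq_zero_of_I {R : ℝ} {f : SF} {t : ℝ} (hf : Supp R f) (ht : 0 ≤ t)
    (h0 : ∀ x y, 0 ≤ f.1 t x y) (hI : I f t = 0) (x y : ℝ) : f.1 t x y = 0 := by
  have h1 : 0 ≤ fun z : ℝ × ℝ => f.1 t z.1 z.2 := fun z => h0 _ _
  have hae : (fun z : ℝ × ℝ => f.1 t z.1 z.2) =ᵐ[volume] fun _ => (0 : ℝ) :=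
    (integral_eq_zero_iff_of_nonneg h1 (hf.integrable ht)).1 hI
  exact congrFun ((Continuous.ae_eq_iff_eq (μ := (volume : Measure (ℝ × ℝ))) (cont_slice f t)
      continuous_const).1 hae) (x, y)

set_option maxHeartbeats 400000 in
/-- Domain of dependence for the gradient: no signal travels faster than light. -/
lemma grad_zero {R : ℝ} {u : Fin 2 → SF} (hu : Solves u)
    (h0 : ∀ j x y, R < radius x y → ∀ a, (Dd a (u j)).1 0 x y = 0)
    {T X Y : ℝ} (hT : 0 < T) (hX : T + R < radius X Y) (j : Fin 2) (a : Fin 3) :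
    (Dd a (u j)).1 T X Y = 0 := by
  -- `δ` is half the distance from `(X, Y)` to the domain of influence at time `T`. The weight `χ` is
  -- positive at `(T, X, Y)`, and its support at time `0` does not meet the disc `|x| ≤ R`.
  set δ := (radius X Y - T - R) / 2 with hδ
  have hδ0 : 0 < δ := by simp only [hδ]; linarith
  have hδ2 : 0 < δ / 2 := half_pos hδ0
  set χ := cone (T + δ) (δ / 2) X Y hδ2 with hχ
  have hχ0 : ∀ t x y, 0 ≤ χ.1 t x y := fun t x y => expNegInvGlue.nonneg _
  have tri : ∀ x y, radius X Y ≤ radius x y + radius (x - X) (y - Y) := by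
    intro x y
    unfold radius
    have h1 := norm_sub_le (!₂[x, y] : EuclideanSpace ℝ (Fin 2)) !₂[x - X, y - Y]
    simpa [EuclideanSpace.norm_eq] using h1
  have hbig : ∀ t x y, 0 ≤ t → T + δ ≤ radius (x - X) (y - Y) → χ.1 t x y = 0 := by
    intro t x y ht h
    refine expNegInvGlue.zero_of_nonpos ?_
    have : radius (x - X) (y - Y) ≤ √((x - X) ^ 2 + (y - Y) ^ 2 + (δ / 2) ^ 2) :=
      Real.sqrt_le_sqrt (by nlinarith [sq_nonneg δ])
    unfold phase; linarith
  have tri2 : ∀ x y, radius x y ≤ radius X Y + radius (x - X) (y - Y) := by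
    intro x y
    unfold radius
    have h1 := norm_add_le (!₂[X, Y] : EuclideanSpace ℝ (Fin 2)) !₂[x - X, y - Y]
    simpa [EuclideanSpace.norm_eq] using h1
  set R' := radius X Y + T + δ with hR'
  have hR'0 : 0 < R' := by have := radius_nonneg X Y; positivity
  have hsχ : Supp R' χ := fun t x y ht h => hbig t x y ht (by linarith [tri2 x y])
  set E : SF := χ * en (u 0) + χ * en (u 1) with hE
  have hsE : Supp R' E := (hsχ.mul_right _).add (hsχ.mul_right _)
  have hder : ∀ t, 0 < t → I (Dd 0 E) t ≤ 0 := fun t ht =>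
    weighted_le hR'0 hsχ hu ht (fun x y => hχ0 t x y) fun x y => by
      obtain ⟨k, hk, k0, k1, k2⟩ := cone_deriv (T + δ) (δ / 2) X Y hδ2 t x y
      refine ⟨k, _, _, hk, ?_, k0, k1, k2⟩
      rw [div_pow (x - X), div_pow (y - Y), ← add_div, Real.sq_sqrt (by positivity)]
      exact div_le_one_of_le₀ (by nlinarith [sq_nonneg δ]) (by positivity)
  have hanti : AntitoneOn (I E) (Set.Icc 0 T) := by
    refine antitoneOn_of_deriv_nonpos (convex_Icc _ _) (I_continuousOn hsE T) ?_ ?_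
    · intro t ht
      rw [interior_Icc] at ht
      exact (I_hasDerivAt hR'0 hsE ht.1).differentiableAt.differentiableWithinAt
    · intro t ht
      rw [interior_Icc] at ht
      rw [(I_hasDerivAt hR'0 hsE ht.1).deriv]
      exact hder t ht.1
  have hI0 : I E 0 = 0 := by
    unfold I
    refine integral_eq_zero_of_ae (Eventually.of_forall fun z => ?_)
    rcases le_or_gt (T + δ) (radius (z.1 - X) (z.2 - Y)) with h | h
    · simp [hE, hbig 0 _ _ le_rfl h]
    · have hr : R < radius z.1 z.2 := by linarith [tri z.1 z.2]
      simp [hE, en_app, h0 _ _ _ hr]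
  have hE0 : ∀ x y, 0 ≤ E.1 T x y := fun x y => by
    have := hχ0 T x y
    simp only [hE, add_app, mul_app, en_app]
    positivity
  have hle : I E T ≤ I E 0 := hanti ⟨le_rfl, hT.le⟩ ⟨hT.le, le_rfl⟩ hT.le
  have hIT : I E T = 0 := le_antisymm (hle.trans_eq hI0) (I_nonneg hE0)
  have hz : E.1 T X Y = 0 := eq_zero_of_I hsE hT.le hE0 hIT X Y
  have hχp : 0 < χ.1 T X Y := by
    refine expNegInvGlue.pos_of_pos ?_
    have : √((X - X) ^ 2 + (Y - Y) ^ 2 + (δ / 2) ^ 2) = δ / 2 := by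
      rw [sub_self, sub_self, zero_pow two_ne_zero, zero_add, zero_add, Real.sqrt_sq hδ2.le]
    unfold phase; linarith
  have hz' : (en (u 0)).1 T X Y + (en (u 1)).1 T X Y = 0 := by
    have : χ.1 T X Y * ((en (u 0)).1 T X Y + (en (u 1)).1 T X Y) = 0 := by
      rw [← hz]; simp [hE]; ring
    exact (mul_eq_zero.1 this).resolve_left hχp.ne'
  have key : (Dd a (u j)).1 T X Y ^ 2 ≤ 0 := by
    have e1 := sq_le_en (u j) T X Y a
    have e2 : (en (u j)).1 T X Y ≤ (en (u 0)).1 T X Y + (en (u 1)).1 T X Y := by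
      have n0 := en_nonneg (u 0) T X Y
      have n1 := en_nonneg (u 1) T X Y
      rcases Fin.exists_fin_two.1 ⟨j, rfl⟩ with h | h <;> rw [h] <;> linarith
    linarith
  exact pow_eq_zero_iff (two_ne_zero) |>.1 (le_antisymm key (sq_nonneg _))

/-- Finite speed of propagation. -/
lemma finite_propagation {R : ℝ} (hR : 0 < R) {u : Fin 2 → SF} (hu : Solves u)
    (h0 : ∀ j x y, R < radius x y → (u j).1 0 x y = 0 ∧ (Dd 0 (u j)).1 0 x y = 0) (j : Fin 2) :
    Supp R (u j) := by
  have hg : ∀ j x y, R < radius x y → ∀ a, (Dd a (u j)).1 0 x y = 0 := by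
    intro j x y hr a
    have hev : ∀ᶠ z : ℝ × ℝ in 𝓝 (x, y), R < radius z.1 z.2 :=
      radius_cont.continuousAt.eventually (lt_mem_nhds hr)
    fin_cases a
    · exact (h0 j x y hr).2
    · refine Dd_unique1 _ _ _ _ ((hasDerivAt_const x (0 : ℝ)).congr_of_eventuallyEq ?_)
      have hc : ContinuousAt (fun s : ℝ => (s, y)) x := by fun_prop
      filter_upwards [hc.eventually hev] with s hs using (h0 j _ _ hs).1
    · refine Dd_unique2 _ _ _ _ ((hasDerivAt_const y (0 : ℝ)).congr_of_eventuallyEq ?_)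
      have hc : ContinuousAt (fun s : ℝ => (x, s)) y := by fun_prop
      filter_upwards [hc.eventually hev] with s hs using (h0 j _ _ hs).1
  refine Supp.of_interior hR fun t x y ht hr => ?_
  have hc : ∀ s ∈ Set.Icc 0 t, (u j).1 s x y = (u j).1 0 x y := by
    refine constant_of_has_deriv_right_zero ?_ fun s hs => ?_
    · exact (HasDerivAt.continuousOn fun s _ => hasDerivAt_t (u j) s x y)
    · have : (Dd 0 (u j)).1 s x y = 0 := by
        rcases eq_or_lt_of_le hs.1 with h | h
        · rw [← h]; exact hg j x y (by linarith) 0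
        · exact grad_zero hu hg h (by linarith [hs.2]) j 0
      rw [← this]; exact (hasDerivAt_t (u j) s x y).hasDerivWithinAt
  rw [hc t ⟨ht.le, le_rfl⟩, (h0 j x y (by linarith)).1]

end SF

/-! ### Commutators and the cubic nonlinearity -/

namespace SF

/-- Agreement at positive times. -/
def EqPos (f g : SF) : Prop := ∀ t x y, 0 < t → f.1 t x y = g.1 t x y

lemma EqPos.Dd {f g : SF} (h : EqPos f g) (a : Fin 3) : EqPos (Dd a f) (Dd a g) := by
  intro t x y ht
  rw [Dd_app, Dd_app]
  have h1 : ∀ᶠ p : ℝ × ℝ × ℝ in 𝓝 (t, x, y), 0 < p.1 :=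
    continuous_fst.continuousAt.eventually (lt_mem_nhds ht)
  have : unc f.1 =ᶠ[𝓝 (t, x, y)] unc g.1 := by
    filter_upwards [h1] with p hp using h _ _ _ hp
  rw [this.fderiv_eq]

lemma EqPos.G {f g : SF} (h : EqPos f g) (i : Fin 7) : EqPos (G i f) (G i g) := by
  intro t x y ht
  have h0 := h.Dd 0 t x y ht
  have h1 := h.Dd 1 t x y ht
  have h2 := h.Dd 2 t x y ht
  fin_cases i <;>
    simp only [Fin.mk_zero, Fin.zero_eta, Fin.mk_one, Fin.reduceFinMk, G0, G1, G2, G3, G4, G5, G6,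
      add_app, sub_app, mul_app, h0, h1, h2]

lemma EqPos.GW (w : List (Fin 7)) {f g : SF} (h : EqPos f g) : EqPos (GW w f) (GW w g) := by
  induction w generalizing f g with
  | nil => exact h
  | cons i w ih => exact ih (h.G i)

lemma EqPos.eq {f g : SF} (h : EqPos f g) {t : ℝ} (ht : 0 ≤ t) (x y : ℝ) :
    f.1 t x y = g.1 t x y := by
  have hc : ∀ f : SF, Tendsto (fun s => f.1 s x y) (𝓝[>] t) (𝓝 (f.1 t x y)) := fun f =>
    ((hasDerivAt_t f t x y).continuousAt.tendsto).mono_left nhdsWithin_le_nhds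
  refine tendsto_nhds_unique (hc f) ((hc g).congr' ?_)
  filter_upwards [self_mem_nhdsWithin] with s hs
  exact (h s x y (lt_of_le_of_lt ht hs)).symm

/-- Words of vector fields applied to `∂f` are controlled by `∂` of shorter words applied
to `f`. -/
lemma GW_Dd_le (w : List (Fin 7)) : ∀ (f : SF) (a : Fin 3) (t x y : ℝ) (B : ℕ → ℝ)
    (hB : Monotone B)
    (h : ∀ w' : List (Fin 7), w'.length ≤ w.length → ∀ b, |(Dd b (GW w' f)).1 t x y| ≤ B w'.length),
    |(GW w (Dd a f)).1 t x y| ≤ 2 ^ w.length * B w.length := by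
  induction w with
  | nil => intro f a t x y B hB h; simpa using h [] le_rfl a
  | cons i w ih =>
    intro f a t x y B hB h
    obtain ⟨b, s, hs, e⟩ := G_Dd i a
    have h1 := ih (G i f) a t x y (fun n => B (n + 1)) (fun m n hmn => hB (by omega))
      (fun w' hw' b => by simpa using h (i :: w') (by simpa using hw') b)
    have h2 := ih f b t x y B hB (fun w' hw' b => h w' (by simp; omega) b)
    have h3 : B w.length ≤ B (w.length + 1) := hB (Nat.le_succ _)
    have hp : (0 : ℝ) < 2 ^ w.length := by positivity
    rw [GW_cons, e, GW_add, GW_smul, add_app, smul_app, List.length_cons, pow_succ]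
    have h4 : |s * (GW w (Dd b f)).1 t x y| ≤ |(GW w (Dd b f)).1 t x y| := by
      rw [abs_mul]; exact mul_le_of_le_one_left (abs_nonneg _) hs
    have h5 := abs_add_le ((GW w (Dd a (G i f))).1 t x y) (s * (GW w (Dd b f)).1 t x y)
    nlinarith

/-- The commutators with `S` only add multiples of lower-order terms `Γ^{w'} □f`, `|w'| < |w|`. -/
lemma Box_GW_le (w : List (Fin 7)) : ∀ (f : SF) (t x y : ℝ) (B : ℕ → ℝ)
    (hB : Monotone B)
    (h : ∀ w' : List (Fin 7), w'.length ≤ w.length → |(GW w' (Box f)).1 t x y| ≤ B w'.length),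
    |(Box (GW w f)).1 t x y| ≤ 3 ^ w.length * B w.length := by
  induction w with
  | nil => intro f t x y B hB h; simpa using h [] le_rfl
  | cons i w ih =>
    intro f t x y B hB h
    have h1 := ih (G i f) t x y (fun n => 3 * B (n + 1))
      (fun m n hmn => by have := hB (show m + 1 ≤ n + 1 by omega); simp only; linarith)
      (fun w' hw' => by
        rw [Box_G, GW_add, GW_smul, add_app, smul_app]
        have e1 := h (i :: w') (by simpa using hw')
        have e2 := h w' (by simp; omega)
        have e3 : B w'.length ≤ B (w'.length + 1) := hB (Nat.le_succ _)
        rw [GW_cons, List.length_cons] at e1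
        have h5 := abs_add_le ((GW w' (G i (Box f))).1 t x y)
          ((if i = 0 then (2 : ℝ) else 0) * (GW w' (Box f)).1 t x y)
        have h6 : |(if i = 0 then (2 : ℝ) else 0) * (GW w' (Box f)).1 t x y|
            ≤ 2 * |(GW w' (Box f)).1 t x y| := by
          rw [abs_mul]; gcongr; split_ifs <;> norm_num
        linarith)
    rw [GW_cons, List.length_cons, pow_succ]
    linarith

/-- Pointwise bounds for the words applied to a factor on which `α` vector fields already act:
words of total order at most `K` are bounded by `m`, those of total order at most `N` by `Y`,
with a loss `θ` for each vector field. -/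
def Fac (K N : ℕ) (m Y θ t x y : ℝ) (α : ℕ) (f : SF) : Prop :=
  (∀ w : List (Fin 7), w.length + α ≤ K → |(GW w f).1 t x y| ≤ m * θ ^ (w.length + α)) ∧
  (∀ w : List (Fin 7), w.length + α ≤ N → |(GW w f).1 t x y| ≤ Y * θ ^ (w.length + α))

lemma Fac.G {K N : ℕ} {m Y θ t x y : ℝ} {α : ℕ} {f : SF} (h : Fac K N m Y θ t x y α f)
    (i : Fin 7) : Fac K N m Y θ t x y (α + 1) (G i f) := by
  constructor
  · intro w hw
    have := h.1 (i :: w) (by simp; omega)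
    rw [GW_cons, List.length_cons] at this
    convert this using 3; ring
  · intro w hw
    have := h.2 (i :: w) (by simp; omega)
    rw [GW_cons, List.length_cons] at this
    convert this using 3; ring

/-- Leibniz rule for a product of three factors. Since `N ≤ 2K + 1`, at most one factor carries more
than `K` fields; that factor is bounded by `Y` and the two others by `m`. -/
lemma trilinear {K N : ℕ} (hKN : N ≤ 2 * K + 1) {m Y θ t x y : ℝ} (hm : 0 ≤ m) (hY : 0 ≤ Y)
    (hθ : 0 ≤ θ) (w : List (Fin 7)) : ∀ (α β γ : ℕ) (f g h : SF),
    Fac K N m Y θ t x y α f → Fac K N m Y θ t x y β g → Fac K N m Y θ t x y γ h →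
    w.length + α + β + γ ≤ N →
    |(GW w (f * g * h)).1 t x y| ≤ 3 ^ w.length * (m ^ 2 * Y * θ ^ (w.length + α + β + γ)) := by
  induction w with
  | nil =>
    intro α β γ f g h hf hg hh hN
    simp only [List.length_nil, zero_add] at hN ⊢
    rw [GW_nil, mul_app, mul_app, abs_mul, abs_mul, pow_zero, one_mul, pow_add, pow_add]
    have key : ∀ (f : SF) (α : ℕ), Fac K N m Y θ t x y α f →
        (α ≤ K → |f.1 t x y| ≤ m * θ ^ α) ∧ (α ≤ N → |f.1 t x y| ≤ Y * θ ^ α) := fun f α hf =>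
      ⟨fun h => by simpa using hf.1 [] (by simpa using h),
       fun h => by simpa using hf.2 [] (by simpa using h)⟩
    obtain ⟨f1, f2⟩ := key f α hf
    obtain ⟨g1, g2⟩ := key g β hg
    obtain ⟨h1, h2⟩ := key h γ hh
    have c : (α ≤ K ∧ β ≤ K) ∨ (α ≤ K ∧ γ ≤ K) ∨ (β ≤ K ∧ γ ≤ K) := by omega
    rcases c with ⟨ha, hb⟩ | ⟨ha, hb⟩ | ⟨ha, hb⟩
    · have := mul_le_mul (mul_le_mul (f1 ha) (g1 hb) (abs_nonneg _) (by positivity))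
        (h2 (by omega)) (abs_nonneg _) (by positivity)
      linarith
    · have := mul_le_mul (mul_le_mul (f1 ha) (g2 (by omega)) (abs_nonneg _) (by positivity))
        (h1 hb) (abs_nonneg _) (by positivity)
      linarith
    · have := mul_le_mul (mul_le_mul (f2 (by omega)) (g1 ha) (abs_nonneg _) (by positivity))
        (h1 hb) (abs_nonneg _) (by positivity)
      linarith
  | cons i w ih =>
    intro α β γ f g h hf hg hh hN
    rw [List.length_cons] at hN
    have e : G i (f * g * h) = G i f * g * h + f * G i g * h + f * g * G i h := by
      simp only [Derivation.leibniz, smul_eq_mul]; ring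
    have h1 := ih (α + 1) β γ _ g h (hf.G i) hg hh (by omega)
    have h2 := ih α (β + 1) γ f _ h hf (hg.G i) hh (by omega)
    have h3 := ih α β (γ + 1) f g _ hf hg (hh.G i) (by omega)
    rw [show w.length + (α + 1) + β + γ = w.length + 1 + α + β + γ by ring] at h1
    rw [show w.length + α + (β + 1) + γ = w.length + 1 + α + β + γ by ring] at h2
    rw [show w.length + α + β + (γ + 1) = w.length + 1 + α + β + γ by ring] at h3
    rw [GW_cons, e, GW_add, GW_add, add_app, add_app, List.length_cons, pow_succ]
    have := abs_add_three ((GW w (G i f * g * h)).1 t x y) ((GW w (f * G i g * h)).1 t x y)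
      ((GW w (f * g * G i h)).1 t x y)
    linarith

/-- The nonlinearity of the `j`-th equation. -/
def Non (u : Fin 2 → SF) (j : Fin 2) : SF := -(Dd 0 (u (j + 1)) * Dd 0 (u (j + 1)) * Dd 0 (u j))

lemma Solves.eqPos {u : Fin 2 → SF} (hu : Solves u) (j : Fin 2) : EqPos (Box (u j)) (Non u j) := by
  intro t x y ht
  rw [hu j t x y ht]; simp only [Non, neg_app, mul_app]; ring

lemma GW_neg (w : List (Fin 7)) (f : SF) : GW w (-f) = -GW w f := by
  rw [← neg_one_smul ℝ f, GW_smul, neg_one_smul]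

/-- Pointwise bound of the commuted wave operator of a solution by the trilinear structure. -/
lemma Solves.box_le {u : Fin 2 → SF} (hu : Solves u) {K N : ℕ} (hKN : N ≤ 2 * K + 1)
    {m Y θ t x y : ℝ} (ht : 0 ≤ t) (hm : 0 ≤ m) (hY : 0 ≤ Y) (hθ : 1 ≤ θ)
    (h1 : ∀ j (w : List (Fin 7)), w.length ≤ K → ∀ a,
      |(Dd a (GW w (u j))).1 t x y| ≤ m * θ ^ w.length)
    (h2 : ∀ j (w : List (Fin 7)), w.length ≤ N → ∀ a,
      |(Dd a (GW w (u j))).1 t x y| ≤ Y * θ ^ w.length)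
    (j : Fin 2) (w : List (Fin 7)) (hw : w.length ≤ N) :
    |(Box (GW w (u j))).1 t x y| ≤
      3 ^ N * (3 ^ N * ((2 ^ N * m) ^ 2 * (2 ^ N * Y) * θ ^ w.length)) := by
  have mono : ∀ c : ℝ, 0 ≤ c → Monotone fun n : ℕ => c * θ ^ n := fun c hc k l hkl =>
    mul_le_mul_of_nonneg_left (pow_le_pow_right₀ hθ hkl) hc
  have hθ0 : 0 ≤ θ := by linarith
  have fac : ∀ j, Fac (min K N) N (2 ^ N * m) (2 ^ N * Y) θ t x y 0 (Dd 0 (u j)) := by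
    intro j
    constructor
    · intro w hw
      rw [add_zero] at hw ⊢
      have := GW_Dd_le w (u j) 0 t x y _ (mono m hm) (fun w' hw' b => h1 j w' (by omega) b)
      refine this.trans ?_
      rw [mul_assoc]
      gcongr
      · norm_num
      · omega
    · intro w hw
      rw [add_zero] at hw ⊢
      have := GW_Dd_le w (u j) 0 t x y _ (mono Y hY) (fun w' hw' b => h2 j w' (by omega) b)
      refine this.trans ?_
      rw [mul_assoc]
      gcongr
      norm_num
  have hb : ∀ w' : List (Fin 7), w'.length ≤ w.length → |(GW w' (Box (u j))).1 t x y| ≤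
      3 ^ N * ((2 ^ N * m) ^ 2 * (2 ^ N * Y)) * θ ^ w'.length := by
    intro w' hw'
    rw [((hu.eqPos j).GW w').eq ht, Non, GW_neg, neg_app, abs_neg]
    have := trilinear (K := min K N) (N := N) (by omega) (by positivity) (by positivity) hθ0 w' 0 0 0 _ _ _
      (fac (j + 1)) (fac (j + 1)) (fac j) (by omega)
    simp only [add_zero] at this
    refine this.trans ?_
    rw [mul_assoc (3 ^ N)]
    gcongr
    · norm_num
    · omega
  refine (Box_GW_le w (u j) t x y _ (mono _ (by positivity)) hb).trans ?_
  rw [mul_assoc (3 ^ N)]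
  gcongr
  norm_num

end SF

/-! ### Polar coordinates, angular and radial Sobolev inequalities -/

namespace SF

lemma exists_polar (x y : ℝ) : ∃ θ ∈ Set.Icc (-π) π, x = radius x y * cos θ ∧
    y = radius x y * sin θ := by
  have h : ‖(⟨x, y⟩ : ℂ)‖ = radius x y := Complex.norm_eq_sqrt_sq_add_sq _
  refine ⟨Complex.arg ⟨x, y⟩, Set.Ioc_subset_Icc_self (Complex.arg_mem_Ioc _), ?_, ?_⟩
  · rw [← h, Complex.norm_mul_cos_arg]
  · rw [← h, Complex.norm_mul_sin_arg]

lemma radius_polar {r : ℝ} (hr : 0 ≤ r) {a b : ℝ} (h : a ^ 2 + b ^ 2 = 1) :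
    radius (r * a) (r * b) = r := by
  rw [radius_smul _ _ _ hr, radius, h, Real.sqrt_one, mul_one]

lemma radius_cs {r : ℝ} (hr : 0 ≤ r) (θ : ℝ) : radius (r * cos θ) (r * sin θ) = r :=
  radius_polar hr (by rw [add_comm]; exact sin_sq_add_cos_sq θ)

/-- Sobolev inequality on the circle. -/
lemma angular_sobolev {g g' : ℝ → ℝ} (h : ∀ θ, HasDerivAt g (g' θ) θ) (hg' : Continuous g')
    {θ₀ : ℝ} (hθ : θ₀ ∈ Set.Icc (-π) π) :
    g θ₀ ^ 2 ≤ 2 * ∫ θ in (-π)..π, (g θ ^ 2 + g' θ ^ 2) := by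
  have hg : Continuous g := continuous_iff_continuousAt.2 fun θ => (h θ).continuousAt
  have hc : Continuous (fun θ => g θ ^ 2 + g' θ ^ 2) := by fun_prop
  have hpi := Real.pi_gt_three
  set J := ∫ θ in (-π)..π, (g θ ^ 2 + g' θ ^ 2) with hJ
  have hJ0 : ∀ a b, a ≤ b → -π ≤ a → b ≤ π → ∫ θ in a..b, (g θ ^ 2 + g' θ ^ 2) ≤ J := by
    intro a b hab ha hb
    exact intervalIntegral.integral_mono_interval ha hab hb
      (Eventually.of_forall fun θ => by positivity) (hc.intervalIntegrable _ _)
  have hsub : ∀ a b, ∫ θ in a..b, 2 * g θ * g' θ = g b ^ 2 - g a ^ 2 := by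
    intro a b
    refine intervalIntegral.integral_eq_sub_of_hasDerivAt (f := fun θ => g θ ^ 2) (fun θ _ => ?_)
      (Continuous.intervalIntegrable (by fun_prop) _ _)
    exact ((h θ).pow 2).congr_deriv (by ring)
  -- `g²` varies by at most `∫ 2|g g'| ≤ J` over the circle; averaging over `θ` gives the claim.
  have key : ∀ θ ∈ Set.Icc (-π) π, g θ₀ ^ 2 ≤ g θ ^ 2 + J := by
    intro θ hθ1
    rcases le_total θ θ₀ with hl | hl
    · have h1 : ∫ s in θ..θ₀, 2 * g s * g' s ≤ ∫ s in θ..θ₀, (g s ^ 2 + g' s ^ 2) :=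
        intervalIntegral.integral_mono_on hl (Continuous.intervalIntegrable (by fun_prop) _ _)
          (hc.intervalIntegrable _ _) fun s _ => by nlinarith [sq_nonneg (g s - g' s)]
      have := hJ0 _ _ hl hθ1.1 hθ.2
      rw [hsub] at h1; linarith
    · have h1 : ∫ s in θ₀..θ, -(2 * g s * g' s) ≤ ∫ s in θ₀..θ, (g s ^ 2 + g' s ^ 2) :=
        intervalIntegral.integral_mono_on hl (Continuous.intervalIntegrable (by fun_prop) _ _)
          (hc.intervalIntegrable _ _) fun s _ => by nlinarith [sq_nonneg (g s + g' s)]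
      have := hJ0 _ _ hl hθ.1 hθ1.2
      rw [intervalIntegral.integral_neg, hsub] at h1; linarith
  have hle : ∫ θ in (-π)..π, g θ₀ ^ 2 ≤ ∫ θ in (-π)..π, (g θ ^ 2 + J) :=
    intervalIntegral.integral_mono_on (by linarith) (by simp)
      (Continuous.intervalIntegrable (by fun_prop) _ _) key
  have hle2 : ∫ θ in (-π)..π, g θ ^ 2 ≤ J :=
    intervalIntegral.integral_mono_on (by linarith)
      (Continuous.intervalIntegrable (by fun_prop) _ _)
      (hc.intervalIntegrable _ _) fun s _ => by nlinarith [sq_nonneg (g' s)]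
  have hJn : 0 ≤ J := intervalIntegral.integral_nonneg (by linarith) fun s _ => by positivity
  rw [intervalIntegral.integral_add (Continuous.intervalIntegrable (by fun_prop) _ _) (by simp),
    intervalIntegral.integral_const, intervalIntegral.integral_const] at hle
  simp only [smul_eq_mul] at hle
  nlinarith

/-- Integration in polar coordinates of a continuous function supported in `|x| < M`. -/
lemma polar_integral {k : ℝ × ℝ → ℝ} (hk : Continuous k) {M : ℝ} (hM : 0 ≤ M)
    (h0 : ∀ z : ℝ × ℝ, M ≤ radius z.1 z.2 → k z = 0) :
    ∫ z, k z = ∫ θ in (-π)..π, ∫ r in (0 : ℝ)..M, r * k (r * cos θ, r * sin θ) := by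
  have hpi := Real.pi_pos
  rw [← integral_comp_polarCoord_symm, polarCoord_target]
  have hc : Continuous (fun p : ℝ × ℝ => p.1 • k (polarCoord.symm p)) :=
    continuous_fst.smul (hk.comp continuous_polarCoord_symm)
  rw [setIntegral_eq_of_subset_of_forall_sdiff_eq_zero
    (s := Set.Ioc 0 M ×ˢ Set.Ioo (-π) π) (measurableSet_Ioi.prod measurableSet_Ioo)
    (Set.prod_mono Set.Ioc_subset_Ioi_self subset_rfl)]
  · rw [Measure.volume_eq_prod, ← setIntegral_prod_swap, setIntegral_prod, ← integral_Ioc_eq_integral_Ioo,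
      intervalIntegral.integral_of_le (by linarith)]
    · refine setIntegral_congr_fun measurableSet_Ioc fun θ _ => ?_
      rw [intervalIntegral.integral_of_le hM]
      rfl
    · exact ((hc.comp continuous_swap).continuousOn.integrableOn_compact
        (isCompact_Icc.prod isCompact_Icc)).mono_set
        (Set.prod_mono Set.Ioo_subset_Icc_self Set.Ioc_subset_Icc_self)
  · rintro ⟨r, θ⟩ ⟨⟨h1, h2⟩, h3⟩
    have h1 : 0 < r := h1
    have hr : M ≤ r := by
      by_contra hh
      exact h3 ⟨⟨h1, (not_le.1 hh).le⟩, h2⟩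
    simp only [polarCoord_symm_apply, smul_eq_mul]
    rw [h0 _ (by rw [radius_cs h1.le]; exact hr), mul_zero]

/-- `f²` plus the sum of the squares of all commuting fields applied to `f`. -/
def S1 (f : SF) : SF := f ^ 2 + ∑ i, (G i f) ^ 2

lemma S1_app (f : SF) (t x y : ℝ) :
    (S1 f).1 t x y = (f.1 t x y) ^ 2 + ∑ i, ((G i f).1 t x y) ^ 2 := by simp [S1]

/-- The radial derivative. -/
def fr (f : SF) (t x y a b : ℝ) : ℝ := a * (Dd 1 f).1 t x y + b * (Dd 2 f).1 t x y

/-- `p ∂_r` is a combination of the commuting fields with coefficients bounded in terms of `R`, because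
`(t - r) ∂_r` is, up to bounded factors, a combination of `S` and the Lorentz boosts. -/
lemma fr_bound {R : ℝ} (hR : 1 ≤ R) (f : SF) {t r a b : ℝ} (ht : 0 ≤ t) (hr : 0 < r)
    (hab : a ^ 2 + b ^ 2 = 1) (hp : r ≤ t + R + 1) :
    ((t + R + 1 - r) * fr f t (r * a) (r * b) a b) ^ 2 ≤
      5 * (R + 1) ^ 2 * ∑ i, ((G i f).1 t (r * a) (r * b)) ^ 2 := by
  simp only [Fin.sum_univ_seven, G0, G1, G2, G3, G4, G5, G6, add_app, mul_app, sub_app, cT_app,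
    cX_app, cY_app, fr]
  set d0 := (Dd 0 f).1 t (r * a) (r * b)
  set d1 := (Dd 1 f).1 t (r * a) (r * b)
  set d2 := (Dd 2 f).1 t (r * a) (r * b)
  have ha : |a| ≤ 1 := abs_le.2 ⟨by nlinarith, by nlinarith⟩
  have hb : |b| ≤ 1 := abs_le.2 ⟨by nlinarith, by nlinarith⟩
  set S := t * d0 + r * a * d1 + r * b * d2
  set L1 := t * d1 + r * a * d0
  set L2 := t * d2 + r * b * d0
  have hmul : ∀ c v : ℝ, |c| ≤ 1 → |c * v| ≤ |v| := fun c v hc => by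
    rw [abs_mul]; exact mul_le_of_le_one_left (abs_nonneg _) hc
  have e1 : (t + r) * ((t - r) * (a * d1 + b * d2)) = t * (a * L1 + b * L2) - r * S := by
    simp only [S, L1, L2]; linear_combination (- r * t * d0 : ℝ) * hab
  have e2 : |(t - r) * (a * d1 + b * d2)| ≤ |L1| + |L2| + |S| := by
    have : (t + r) * |(t - r) * (a * d1 + b * d2)| ≤ (t + r) * (|L1| + |L2| + |S|) := by
      rw [← abs_of_pos (show 0 < t + r by linarith), ← abs_mul, abs_of_pos (show 0 < t + r by linarith),
        e1]
      calc |t * (a * L1 + b * L2) - r * S| ≤ |t * (a * L1 + b * L2)| + |r * S| := abs_sub _ _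
        _ = t * |a * L1 + b * L2| + r * |S| := by
            rw [abs_mul, abs_mul, abs_of_nonneg ht, abs_of_pos hr]
        _ ≤ t * (|L1| + |L2|) + r * |S| := by
            gcongr
            exact (abs_add_le _ _).trans (add_le_add (hmul _ _ ha) (hmul _ _ hb))
        _ ≤ (t + r) * (|L1| + |L2| + |S|) := by
            nlinarith [abs_nonneg L1, abs_nonneg L2, abs_nonneg S]
    exact le_of_mul_le_mul_left this (by linarith)
  have e3 : |(t + R + 1 - r) * (a * d1 + b * d2)| ≤
      (R + 1) * (|L1| + |L2| + |S| + |d1| + |d2|) := by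
    calc |(t + R + 1 - r) * (a * d1 + b * d2)|
        = |(t - r) * (a * d1 + b * d2) + (R + 1) * (a * d1 + b * d2)| := by ring_nf
      _ ≤ |(t - r) * (a * d1 + b * d2)| + (R + 1) * |a * d1 + b * d2| := by
          refine (abs_add_le _ _).trans ?_
          rw [abs_mul (R + 1), abs_of_pos (show 0 < R + 1 by linarith)]
      _ ≤ (|L1| + |L2| + |S|) + (R + 1) * (|d1| + |d2|) := by
          gcongr
          exact (abs_add_le _ _).trans (add_le_add (hmul _ _ ha) (hmul _ _ hb))
      _ ≤ _ := by nlinarith [abs_nonneg L1, abs_nonneg L2, abs_nonneg S]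
  rw [← sq_abs]
  calc _ ≤ ((R + 1) * (|L1| + |L2| + |S| + |d1| + |d2|)) ^ 2 := by gcongr
    _ ≤ (R + 1) ^ 2 * (5 * (|L1| ^ 2 + |L2| ^ 2 + |S| ^ 2 + |d1| ^ 2 + |d2| ^ 2)) := by
      rw [mul_pow]
      gcongr
      nlinarith [sq_nonneg (|L1| - |L2|), sq_nonneg (|L1| - |S|), sq_nonneg (|L1| - |d1|),
        sq_nonneg (|L1| - |d2|), sq_nonneg (|L2| - |S|), sq_nonneg (|L2| - |d1|),
        sq_nonneg (|L2| - |d2|), sq_nonneg (|S| - |d1|), sq_nonneg (|S| - |d2|),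
        sq_nonneg (|d1| - |d2|)]
    _ ≤ _ := by
      simp only [sq_abs]
      have : 0 ≤ (R + 1) ^ 2 * ((r * a * d2 - r * b * d1) ^ 2 + d0 ^ 2) := by positivity
      nlinarith

lemma hasDerivAt_radial (f : SF) (t r a b : ℝ) :
    HasDerivAt (fun r => f.1 t (r * a) (r * b)) (fr f t (r * a) (r * b) a b) r :=
  (hasDerivAt_curve f (hasDerivAt_const r t) ((hasDerivAt_id r).mul_const a)
    ((hasDerivAt_id r).mul_const b)).congr_deriv (by simp [fr])

lemma cont_radial (f : SF) (t a b : ℝ) : Continuous (fun r => f.1 t (r * a) (r * b)) :=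
  f.cont.comp (f := fun r : ℝ => (t, r * a, r * b)) (by fun_prop)

/-- One-dimensional Sobolev inequality in `r`: the `r`-derivative of `p^{s+1} f²` is integrated from
`r₀` to the boundary of the cone, where `f` vanishes, and `fr_bound` absorbs the weight. -/
lemma radial_sobolev {R : ℝ} (hR : 1 ≤ R) {f : SF} (hf : Supp R f) {t r₀ a b : ℝ} (ht : 0 ≤ t)
    (h0 : 0 ≤ r₀) (h1 : r₀ ≤ t + R) (hab : a ^ 2 + b ^ 2 = 1) (s : ℕ) (hs : s ≤ 1) :
    r₀ * ((t + R + 1 - r₀) ^ (s + 1) * (f.1 t (r₀ * a) (r₀ * b)) ^ 2) ≤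
      ∫ r in (0 : ℝ)..(t + R), r * ((t + R + 1 - r) ^ s *
        (7 * (R + 1) ^ 2 * (S1 f).1 t (r * a) (r * b))) := by
  have hfr : Continuous (fun r => fr f t (r * a) (r * b) a b) := by
    unfold fr
    have := cont_radial (Dd 1 f) t a b
    have := cont_radial (Dd 2 f) t a b
    fun_prop
  have hfc := cont_radial f t a b
  have hSc := cont_radial (S1 f) t a b
  set φ : ℝ → ℝ := fun r => (t + R + 1 - r) ^ (s + 1) * (f.1 t (r * a) (r * b)) ^ 2
  set φ' : ℝ → ℝ := fun r => -((s + 1) * (t + R + 1 - r) ^ s * (f.1 t (r * a) (r * b)) ^ 2) +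
    (t + R + 1 - r) ^ (s + 1) * (2 * f.1 t (r * a) (r * b) * fr f t (r * a) (r * b) a b)
  have hd : ∀ r, HasDerivAt φ (φ' r) r := by
    intro r
    have h2 := (((hasDerivAt_id r).const_sub (t + R + 1)).pow (s + 1)).mul
      ((hasDerivAt_radial f t r a b).pow 2)
    refine h2.congr_deriv ?_
    simp only [φ', id, Nat.add_sub_cancel, Pi.pow_apply]
    push_cast
    ring
  have hφ'c : Continuous φ' := by simp only [φ']; fun_prop
  have hend : φ (t + R) = 0 := by
    have : f.1 t ((t + R) * a) ((t + R) * b) = 0 :=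
      hf _ _ _ ht (by rw [radius_polar (by linarith) hab])
    simp [φ, this]
  have hftc : ∫ r in r₀..(t + R), -φ' r = φ r₀ := by
    rw [intervalIntegral.integral_neg, intervalIntegral.integral_eq_sub_of_hasDerivAt
      (fun r _ => hd r) (hφ'c.intervalIntegrable _ _), hend]; ring
  set k : ℝ → ℝ := fun r => r * ((t + R + 1 - r) ^ s *
        (7 * (R + 1) ^ 2 * (S1 f).1 t (r * a) (r * b)))
  have hk : Continuous k := by simp only [k]; fun_prop
  have hS0 : ∀ r, 0 ≤ (S1 f).1 t (r * a) (r * b) := fun r => by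
    rw [S1_app]; positivity
  have hk0 : ∀ r ∈ Set.Ioc 0 (t + R), 0 ≤ k r := fun r hr => by
    have : 0 ≤ t + R + 1 - r := by linarith [hr.2]
    have := hS0 r
    have := hr.1
    simp only [k]; positivity
  have hpt : ∀ r ∈ Set.Icc r₀ (t + R), r₀ * -φ' r ≤ k r := by
    intro r hr
    rcases h0.eq_or_lt with h0' | h0'
    · rw [← h0', zero_mul]
      rcases (h0.trans hr.1).eq_or_lt with h | h
      · simp [k, ← h]
      · exact hk0 r ⟨h, hr.2⟩
    have hr0 : 0 < r := h0'.trans_le hr.1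
    have hp : 0 ≤ t + R + 1 - r := by linarith [hr.2]
    have hb := fr_bound hR f ht hr0 hab (by linarith [hr.2])
    have hle : -φ' r ≤ (t + R + 1 - r) ^ s * (7 * (R + 1) ^ 2 * (S1 f).1 t (r * a) (r * b)) := by
      have hs1 : (s : ℝ) ≤ 1 := by exact_mod_cast hs
      rw [S1_app]
      set F := f.1 t (r * a) (r * b)
      set Fr := fr f t (r * a) (r * b) a b
      set p := t + R + 1 - r
      set Q := ∑ i, ((G i f).1 t (r * a) (r * b)) ^ 2
      have : -φ' r = p ^ s * ((s + 1) * F ^ 2 - 2 * F * (p * Fr)) := by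
        simp only [φ', F, Fr, p]; ring
      rw [this]
      apply mul_le_mul_of_nonneg_left _ (by positivity)
      have h3 : 4 ≤ (R + 1) ^ 2 := by nlinarith
      have h4 : 0 ≤ Q := by positivity
      nlinarith [sq_nonneg (F + p * Fr), sq_nonneg F, mul_nonneg (sq_nonneg F) (sub_nonneg.2 h3),
        mul_nonneg h4 (sub_nonneg.2 h3), mul_nonneg (sq_nonneg F) (sub_nonneg.2 hs1)]
    have hnn : 0 ≤ (t + R + 1 - r) ^ s * (7 * (R + 1) ^ 2 * (S1 f).1 t (r * a) (r * b)) := by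
      have := hS0 r; positivity
    calc r₀ * -φ' r ≤ r₀ * ((t + R + 1 - r) ^ s * (7 * (R + 1) ^ 2 * (S1 f).1 t (r * a) (r * b))) := by
          gcongr
      _ ≤ k r := by simp only [k]; gcongr; exact hr.1
  calc r₀ * φ r₀ = ∫ r in r₀..(t + R), r₀ * -φ' r := by
        rw [intervalIntegral.integral_const_mul, hftc]
    _ ≤ ∫ r in r₀..(t + R), k r := intervalIntegral.integral_mono_on h1
        (Continuous.intervalIntegrable (by fun_prop) _ _) (hk.intervalIntegrable _ _) hpt
    _ ≤ ∫ r in (0:ℝ)..(t + R), k r := by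
        refine intervalIntegral.integral_mono_interval h0 h1 le_rfl ?_ (hk.intervalIntegrable _ _)
        exact (ae_restrict_iff' measurableSet_Ioc).2 (Eventually.of_forall fun r hr => hk0 r hr)

end SF

/-! ### Weighted Klainerman–Sobolev inequality -/

namespace SF

/-- The weighted integral `∫ p^s f²`, with `p = t + R + 1 - |x|`. -/
def wint (R : ℝ) (s : ℕ) (f : SF) (t : ℝ) : ℝ :=
  ∫ z : ℝ × ℝ, (t + R + 1 - radius z.1 z.2) ^ s * (f.1 t z.1 z.2) ^ 2

section
variable {R : ℝ} {f : SF} {t : ℝ}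

lemma pw_cont (R t : ℝ) (s : ℕ) :
    Continuous (fun z : ℝ × ℝ => (t + R + 1 - radius z.1 z.2) ^ s) :=
  (continuous_const.sub radius_cont).pow s

lemma w_integrable (hf : Supp R f) (ht : 0 ≤ t) (s : ℕ) :
    Integrable (fun z : ℝ × ℝ => (t + R + 1 - radius z.1 z.2) ^ s * f.1 t z.1 z.2) :=
  ((pw_cont R t s).mul (cont_slice f t)).integrable_of_hasCompactSupport
    ((hf.compact ht).mul_left)

lemma S1_supp (hR : 0 < R) (hf : Supp R f) : Supp R (S1 f) :=
  (hf.pow two_ne_zero).add (Supp.sum _ fun i _ => (hf.G hR i).pow two_ne_zero)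

/-- The weighted integral of `S1 f` is controlled by those of the `Γ^w f`, `|w| ≤ 1`. -/
lemma wS1_le (hR : 0 < R) (hf : Supp R f) (ht : 0 ≤ t) (s : ℕ) {B : ℝ}
    (h0 : wint R s f t ≤ B) (h1 : ∀ i, wint R s (G i f) t ≤ B) :
    ∫ z : ℝ × ℝ, (t + R + 1 - radius z.1 z.2) ^ s * (S1 f).1 t z.1 z.2 ≤ 8 * B := by
  have e : ∀ z : ℝ × ℝ, (t + R + 1 - radius z.1 z.2) ^ s * (S1 f).1 t z.1 z.2 =
      (t + R + 1 - radius z.1 z.2) ^ s * (f ^ 2).1 t z.1 z.2 +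
      ∑ i, (t + R + 1 - radius z.1 z.2) ^ s * ((G i f) ^ 2).1 t z.1 z.2 := fun z => by
    rw [S1_app, mul_add, Finset.mul_sum]; rfl
  simp_rw [e]
  rw [integral_add (w_integrable (hf.pow two_ne_zero) ht s)
    (integrable_finsetSum _ fun i _ => w_integrable ((hf.G hR i).pow two_ne_zero) ht s),
    integral_finsetSum _ fun i _ => w_integrable ((hf.G hR i).pow two_ne_zero) ht s]
  have h2 : ∑ i : Fin 7, ∫ z : ℝ × ℝ, (t + R + 1 - radius z.1 z.2) ^ s *
      ((G i f) ^ 2).1 t z.1 z.2 ≤ ∑ i : Fin 7, B := Finset.sum_le_sum fun i _ => h1 i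
  have h0' : ∫ z : ℝ × ℝ, (t + R + 1 - radius z.1 z.2) ^ s * (f ^ 2).1 t z.1 z.2 ≤ B := h0
  simp only [Finset.sum_const, Finset.card_univ, Fintype.card_fin, nsmul_eq_mul] at h2
  push_cast at h2
  linarith

/-- Combination of the angular and radial Sobolev inequalities. It carries the factor `r` in place of
`1 + t`, hence is only optimal away from the axis. -/
lemma ks_a (hR : 1 ≤ R) (hf : Supp R f) (ht : 0 ≤ t) (s : ℕ) (hs : s ≤ 1) {B : ℝ}
    (hB : ∀ w : List (Fin 7), w.length ≤ 2 → wint R s (GW w f) t ≤ B) {x y : ℝ}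
    (hx : radius x y ≤ t + R) :
    radius x y * ((t + R + 1 - radius x y) ^ (s + 1) * (f.1 t x y) ^ 2) ≤
      224 * (R + 1) ^ 2 * B := by
  obtain ⟨θ₀, hθ, hx', hy'⟩ := exists_polar x y
  have h0 := radius_nonneg x y
  have hR0 : 0 < R := by linarith
  generalize radius x y = r₀ at *
  subst hx' hy'
  have hpi := Real.pi_pos
  have hcs : ∀ θ, cos θ ^ 2 + sin θ ^ 2 = 1 := fun θ => by rw [add_comm]; exact sin_sq_add_cos_sq θ
  have hA := angular_sobolev (g := fun θ => f.1 t (r₀ * cos θ) (r₀ * sin θ))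
    (g' := fun θ => (G 3 f).1 t (r₀ * cos θ) (r₀ * sin θ)) (fun θ =>
      (hasDerivAt_curve f (hasDerivAt_const θ t) ((hasDerivAt_cos θ).const_mul r₀)
        ((hasDerivAt_sin θ).const_mul r₀)).congr_deriv (by simp [G3]; ring))
    ((G 3 f).cont.comp (f := fun θ : ℝ => (t, r₀ * cos θ, r₀ * sin θ)) (by fun_prop)) hθ
  set K := 7 * (R + 1) ^ 2 with hK
  set H : SF := S1 f + S1 (G 3 f) with hH
  have hHs : Supp R H := (S1_supp hR0 hf).add (S1_supp hR0 (hf.G hR0 3))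
  set k : ℝ × ℝ → ℝ := fun z => (t + R + 1 - radius z.1 z.2) ^ s * (K * H.1 t z.1 z.2) with hk
  have hkc : Continuous k := (pw_cont R t s).mul (continuous_const.mul (cont_slice H t))
  have hkI := polar_integral hkc (M := t + R) (by linarith) (fun z hz => by
    simp only [hk]; rw [hHs t z.1 z.2 ht hz]; ring)
  have hP0 : 0 ≤ t + R + 1 - r₀ := by linarith
  have hpt : ∀ θ ∈ Set.Icc (-π) π, r₀ * ((t + R + 1 - r₀) ^ (s + 1) *
      ((f.1 t (r₀ * cos θ) (r₀ * sin θ)) ^ 2 + ((G 3 f).1 t (r₀ * cos θ) (r₀ * sin θ)) ^ 2)) ≤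
      ∫ r in (0 : ℝ)..(t + R), r * k (r * cos θ, r * sin θ) := by
    intro θ _
    have a1 := radial_sobolev hR hf ht h0 hx (hcs θ) s hs
    have a2 := radial_sobolev hR (hf.G hR0 3) ht h0 hx (hcs θ) s hs
    have e : ∫ r in (0 : ℝ)..(t + R), r * k (r * cos θ, r * sin θ) =
        (∫ r in (0 : ℝ)..(t + R), r * ((t + R + 1 - r) ^ s *
          (K * (S1 f).1 t (r * cos θ) (r * sin θ)))) +
        (∫ r in (0 : ℝ)..(t + R), r * ((t + R + 1 - r) ^ s *
          (K * (S1 (G 3 f)).1 t (r * cos θ) (r * sin θ)))) := by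
      have c1 := cont_radial (S1 f) t (cos θ) (sin θ)
      have c2 := cont_radial (S1 (G 3 f)) t (cos θ) (sin θ)
      rw [← intervalIntegral.integral_add (Continuous.intervalIntegrable (by fun_prop) _ _)
        (Continuous.intervalIntegrable (by fun_prop) _ _)]
      refine intervalIntegral.integral_congr fun r hr => ?_
      rw [Set.uIcc_of_le (by linarith)] at hr
      simp only [hk, hH, add_app]
      rw [radius_cs hr.1]; ring
    rw [e]; linarith
  have hint : ∫ θ in (-π)..π, r₀ * ((t + R + 1 - r₀) ^ (s + 1) *
      ((f.1 t (r₀ * cos θ) (r₀ * sin θ)) ^ 2 + ((G 3 f).1 t (r₀ * cos θ) (r₀ * sin θ)) ^ 2)) ≤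
      ∫ z, k z := by
    rw [hkI]
    have c1 : Continuous (fun θ => f.1 t (r₀ * cos θ) (r₀ * sin θ)) :=
      f.cont.comp (f := fun θ : ℝ => (t, r₀ * cos θ, r₀ * sin θ)) (by fun_prop)
    have c2 : Continuous (fun θ => (G 3 f).1 t (r₀ * cos θ) (r₀ * sin θ)) :=
      (G 3 f).cont.comp (f := fun θ : ℝ => (t, r₀ * cos θ, r₀ * sin θ)) (by fun_prop)
    refine intervalIntegral.integral_mono_on (by linarith)
      (Continuous.intervalIntegrable (by fun_prop) _ _)
      (Continuous.intervalIntegrable ?_ _ _) hpt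
    apply intervalIntegral.continuous_parametric_intervalIntegral_of_continuous'
    exact Continuous.mul (by fun_prop) (hkc.comp (f := fun p : ℝ × ℝ => (p.2 * cos p.1, p.2 * sin p.1)) (by fun_prop))
  have hkle : ∫ z, k z ≤ K * (16 * B) := by
    have e : ∀ z, k z = K * ((t + R + 1 - radius z.1 z.2) ^ s * (S1 f).1 t z.1 z.2 +
        (t + R + 1 - radius z.1 z.2) ^ s * (S1 (G 3 f)).1 t z.1 z.2) := fun z => by
      simp only [hk, hH, add_app]; ring
    simp_rw [e]
    rw [integral_const_mul, integral_add (w_integrable (S1_supp hR0 hf) ht s)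
      (w_integrable (S1_supp hR0 (hf.G hR0 3)) ht s)]
    have b1 := wS1_le hR0 hf ht s (hB [] (by simp)) (fun i => hB [i] (by simp))
    have b2 := wS1_le hR0 (hf.G hR0 3) ht s (hB [3] (by simp)) (fun i => hB [3, i] (by simp))
    gcongr
    linarith
  rw [intervalIntegral.integral_const_mul, intervalIntegral.integral_const_mul] at hint
  have hpp : 0 ≤ r₀ * (t + R + 1 - r₀) ^ (s + 1) := by positivity
  have := mul_le_mul_of_nonneg_left hA hpp
  have hK' : K * (16 * B) = 112 * (R + 1) ^ 2 * B := by rw [hK]; ring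
  linarith

set_option maxHeartbeats 1000000 in
/-- Klainerman–Sobolev inequality for functions supported in `|x| ≤ t + R`, with weight. -/
lemma klainerman_sobolev (hR : 1 ≤ R) : ∃ C : ℝ, 0 < C ∧ ∀ (f : SF) (_ : Supp R f) (t : ℝ)
    (_ : 0 ≤ t) (s : ℕ) (_ : s ≤ 1) (B : ℝ) (_ : 0 ≤ B)
    (_ : ∀ w : List (Fin 7), w.length ≤ 3 → wint R s (GW w f) t ≤ B) (x y : ℝ)
    (_ : radius x y ≤ t + R),
    (1 + t) * ((t + R + 1 - radius x y) ^ (s + 1) * (f.1 t x y) ^ 2) ≤ C * B := by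
  set A := 224 * (R + 1) ^ 2 with hA
  have hApos : 0 < A := by positivity
  refine ⟨4 * A + (R + 1) ^ 2 * (8 * A * 8 + 64 * (35 * (R + 1) ^ 2 * A)), by positivity, ?_⟩
  intro f hf t ht s hs B hB0 hB x y hx
  have hR0 : 0 < R := by linarith
  have ha := fun (x y : ℝ) (hx : radius x y ≤ t + R) =>
    ks_a hR hf ht s hs (fun w hw => hB w (by omega)) hx
  have hp0 : 0 ≤ t + R + 1 - radius x y := by linarith
  have hC0 : 0 ≤ (R + 1) ^ 2 * (8 * A * 8 + 64 * (35 * (R + 1) ^ 2 * A)) * B := by positivity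
  rcases le_total ((1 + t) / 4) (radius x y) with hr | hr
  · have := ha x y hx
    have h2 : 0 ≤ (t + R + 1 - radius x y) ^ (s + 1) * (f.1 t x y) ^ 2 := by positivity
    nlinarith
  -- Near the axis `ks_a` degenerates. In the variable `ρ = √r`, the bound of `ks_a` for `r |∂_r f|²`
  -- becomes a Lipschitz bound, by which `f` is compared with its value at `r = τ/4`.
  · set τ := 1 + t with hτ
    have hτ1 : 1 ≤ τ := by linarith
    obtain ⟨θ, -, hx', hy'⟩ := exists_polar x y
    have hr0 := radius_nonneg x y
    generalize radius x y = r₀ at *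
    have hcs : cos θ ^ 2 + sin θ ^ 2 = 1 := by rw [add_comm]; exact sin_sq_add_cos_sq θ
    set ρ₁ := √(τ / 4)
    have hρ1 : ρ₁ ^ 2 = τ / 4 := Real.sq_sqrt (by positivity)
    have hρ1n : 0 ≤ ρ₁ := Real.sqrt_nonneg _
    set g : ℝ → ℝ := fun ρ => f.1 t (ρ ^ 2 * cos θ) (ρ ^ 2 * sin θ)
    have hg : ∀ ρ, HasDerivAt g (2 * ρ * fr f t (ρ ^ 2 * cos θ) (ρ ^ 2 * sin θ) (cos θ) (sin θ)) ρ := by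
      intro ρ
      have := (hasDerivAt_radial f t (ρ ^ 2) (cos θ) (sin θ)).comp ρ (hasDerivAt_pow 2 ρ)
      refine this.congr_deriv ?_
      push_cast; ring
    have hfrb : ∀ r, 0 ≤ r → r ≤ τ / 4 →
        4 * r * (fr f t (r * cos θ) (r * sin θ) (cos θ) (sin θ)) ^ 2 ≤
          4 * (35 * (R + 1) ^ 2 * A * B) * (2 / τ) ^ (s + 3) := by
      intro r h0 h1
      rcases h0.eq_or_lt with h | h
      · rw [← h]; simp; positivity
      have hp : τ / 2 ≤ t + R + 1 - r := by linarith
      have b1 := fr_bound hR f ht h hcs (by linarith)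
      have b2 : ∀ i, r * ((t + R + 1 - r) ^ (s + 1) *
          ((G i f).1 t (r * cos θ) (r * sin θ)) ^ 2) ≤ A * B := by
        intro i
        have := ks_a (x := r * cos θ) (y := r * sin θ) hR (hf.G hR0 i) ht s hs
          (fun w hw => hB (i :: w) (by simp; omega))
        rw [radius_cs h0] at this
        exact this (by linarith)
      have b3 := Finset.sum_le_sum fun i (_ : i ∈ Finset.univ) => b2 i
      rw [← Finset.mul_sum, ← Finset.mul_sum] at b3
      simp only [Finset.sum_const, Finset.card_univ, Fintype.card_fin, nsmul_eq_mul] at b3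
      push_cast at b3
      set p := t + R + 1 - r
      set F := fr f t (r * cos θ) (r * sin θ) (cos θ) (sin θ)
      have hpp : 0 < p := by linarith
      have b4 : r * F ^ 2 * p ^ (s + 3) ≤ 35 * (R + 1) ^ 2 * A * B := by
        calc r * F ^ 2 * p ^ (s + 3) = r * (p ^ (s + 1) * (p * F) ^ 2) := by ring
          _ ≤ r * (p ^ (s + 1) * (5 * (R + 1) ^ 2 * ∑ i, ((G i f).1 t (r * cos θ) (r * sin θ)) ^ 2)) := by
              gcongr
          _ = 5 * (R + 1) ^ 2 * (r * (p ^ (s + 1) * ∑ i, ((G i f).1 t (r * cos θ) (r * sin θ)) ^ 2)) := by ring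
          _ ≤ 5 * (R + 1) ^ 2 * (7 * (A * B)) := by gcongr
          _ = _ := by ring
      have b5 : r * F ^ 2 * (τ / 2) ^ (s + 3) ≤ 35 * (R + 1) ^ 2 * A * B :=
        le_trans (by gcongr) b4
      have e : (2 / τ) ^ (s + 3) = ((τ / 2) ^ (s + 3))⁻¹ := by rw [← inv_pow]; congr 1; field_simp
      rw [e, mul_assoc 4 r, mul_assoc 4]
      refine mul_le_mul_of_nonneg_left ?_ (by norm_num)
      rw [← div_eq_mul_inv, le_div_iff₀ (by positivity)]
      exact b5
    set D := 4 * (35 * (R + 1) ^ 2 * A * B) * (2 / τ) ^ (s + 3) with hD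
    have hD0 : 0 ≤ D := by positivity
    have hlip := Convex.norm_image_sub_le_of_norm_hasDerivWithin_le (f := g) (s := Set.Icc 0 ρ₁)
      (C := √D) (x := ρ₁) (y := √r₀) (fun ρ _ => (hg ρ).hasDerivWithinAt) (by
        intro ρ hρ
        rw [Real.norm_eq_abs]
        apply Real.abs_le_sqrt
        have := hfrb (ρ ^ 2) (sq_nonneg _) (by rw [← hρ1]; exact pow_le_pow_left₀ hρ.1 hρ.2 2)
        refine le_trans (le_of_eq ?_) this
        ring) (convex_Icc _ _) ⟨hρ1n, le_rfl⟩
      ⟨Real.sqrt_nonneg _, Real.sqrt_le_sqrt hr⟩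
    have hgx : g √r₀ = f.1 t x y := by simp only [g]; rw [Real.sq_sqrt hr0, hx', hy']
    rw [hgx, Real.norm_eq_abs, Real.norm_eq_abs] at hlip
    have h1 : |√r₀ - ρ₁| ≤ ρ₁ := by
      rw [abs_le]; constructor
      · linarith [Real.sqrt_nonneg r₀]
      · linarith [Real.sqrt_le_sqrt hr]
    have h2 : (f.1 t x y - g ρ₁) ^ 2 ≤ D * (τ / 4) := by
      rw [← sq_abs, ← hρ1, ← Real.sq_sqrt hD0, ← mul_pow]
      gcongr
      exact hlip.trans (by gcongr)
    have h3 : τ / 4 * ((τ / 2) ^ (s + 1) * (g ρ₁) ^ 2) ≤ A * B := by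
      have := ha (τ / 4 * cos θ) (τ / 4 * sin θ)
      rw [radius_cs (by positivity)] at this
      have := this (by linarith)
      simp only [g, hρ1]
      refine le_trans ?_ this
      have : τ / 2 ≤ t + R + 1 - τ / 4 := by linarith
      gcongr
    have h4 : (f.1 t x y) ^ 2 ≤ 2 * (g ρ₁) ^ 2 + 2 * (D * (τ / 4)) := by
      nlinarith [sq_nonneg (f.1 t x y - g ρ₁ - g ρ₁)]
    have hD' : τ ^ (s + 2) * (D * (τ / 4)) = 2 ^ (s + 3) * (35 * (R + 1) ^ 2 * A * B) := by
      rw [hD, div_pow]; field_simp; ring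
    have h3' : τ ^ (s + 2) * (g ρ₁) ^ 2 = 4 * 2 ^ (s + 1) * (τ / 4 * ((τ / 2) ^ (s + 1) * (g ρ₁) ^ 2)) := by
      rw [div_pow]; field_simp; ring
    have h5 : τ ^ (s + 2) * (f.1 t x y) ^ 2 ≤ (8 * A * 8 + 64 * (35 * (R + 1) ^ 2 * A)) * B := by
      have hs4 : (2:ℝ) ^ s ≤ 2 ^ 1 := pow_le_pow_right₀ (by norm_num) hs
      calc τ ^ (s + 2) * (f.1 t x y) ^ 2 ≤ τ ^ (s + 2) * (2 * (g ρ₁) ^ 2 + 2 * (D * (τ / 4))) := by gcongr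
        _ = 2 * (τ ^ (s + 2) * (g ρ₁) ^ 2) + 2 * (τ ^ (s + 2) * (D * (τ / 4))) := by ring
        _ = 8 * 2 ^ s * 2 * (τ / 4 * ((τ / 2) ^ (s + 1) * (g ρ₁) ^ 2)) + 16 * 2 ^ s * (35 * (R + 1) ^ 2 * A * B) := by
            rw [h3', hD']; ring
        _ ≤ 8 * 2 ^ 1 * 2 * (A * B) + 16 * 2 ^ 1 * (35 * (R + 1) ^ 2 * A * B) := by gcongr
        _ ≤ _ := by
          have : 0 ≤ A * B := by positivity
          have : 0 ≤ 35 * (R + 1) ^ 2 * A * B := by positivity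
          nlinarith
    have hpR : t + R + 1 - r₀ ≤ (R + 1) * τ := by nlinarith
    calc τ * ((t + R + 1 - r₀) ^ (s + 1) * (f.1 t x y) ^ 2)
        ≤ τ * (((R + 1) * τ) ^ (s + 1) * (f.1 t x y) ^ 2) := by gcongr
      _ = (R + 1) ^ (s + 1) * (τ ^ (s + 2) * (f.1 t x y) ^ 2) := by rw [mul_pow]; ring
      _ ≤ (R + 1) ^ 2 * ((8 * A * 8 + 64 * (35 * (R + 1) ^ 2 * A)) * B) := by
          gcongr
          · linarith
          · omega
      _ ≤ 4 * A * B + (R + 1) ^ 2 * ((8 * A * 8 + 64 * (35 * (R + 1) ^ 2 * A)) * B) :=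
          le_add_of_nonneg_left (by positivity)
      _ = _ := by ring
end

end SF

/-! ### The profile along outgoing rays and a damped scalar equation -/

namespace SF

/-- Radial integration from the boundary of the light cone. -/
lemma radial_int {R m t a b : ℝ} {f : SF} (hf : Supp R f) (ht : 0 ≤ t) (hR : 0 < R) (hm : 0 ≤ m)
    (hab : a ^ 2 + b ^ 2 = 1)
    (h : ∀ r, 0 ≤ r → r ≤ t + R → |fr f t (r * a) (r * b) a b| ≤ m / √(t + R + 1 - r))
    {r : ℝ} (h0 : 0 ≤ r) (h1 : r ≤ t + R) :
    |f.1 t (r * a) (r * b)| ≤ 2 * m * √(t + R + 1 - r) := by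
  have hend : f.1 t ((t + R) * a) ((t + R) * b) = 0 :=
    hf _ _ _ ht (by rw [radius_polar (by linarith) hab])
  have hfc := cont_radial f t a b
  have main : ∀ c : ℝ, |c| = 1 → c * f.1 t (r * a) (r * b) ≤ 2 * m * √(t + R + 1 - r) := by
    intro c hc
    set φ : ℝ → ℝ := fun r => 2 * m * √(t + R + 1 - r) - c * f.1 t (r * a) (r * b) with hφ
    have hd : ∀ s ∈ Set.Ioo r (t + R), HasDerivAt φ
        (-(m / √(t + R + 1 - s)) - c * fr f t (s * a) (s * b) a b) s := by
      intro s hs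
      have hp : 0 < t + R + 1 - s := by linarith [hs.2]
      have h2 := ((((hasDerivAt_id s).const_sub (t + R + 1)).sqrt hp.ne').const_mul (2 * m)).sub
        ((hasDerivAt_radial f t s a b).const_mul c)
      refine h2.congr_deriv ?_
      simp only [id]
      have : √(t + R + 1 - s) ≠ 0 := (Real.sqrt_pos.2 hp).ne'
      field_simp
    have hanti : AntitoneOn φ (Set.Icc r (t + R)) := by
      refine antitoneOn_of_deriv_nonpos (convex_Icc _ _) ?_ ?_ ?_
      · simp only [hφ]; fun_prop
      · rw [interior_Icc]; exact fun s hs => (hd s hs).differentiableAt.differentiableWithinAt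
      · rw [interior_Icc]; intro s hs
        rw [(hd s hs).deriv]
        have h3 := h s (by linarith [hs.1]) hs.2.le
        have h4 : |c * fr f t (s * a) (s * b) a b| ≤ m / √(t + R + 1 - s) := by
          rw [abs_mul, hc, one_mul]; exact h3
        linarith [neg_abs_le (c * fr f t (s * a) (s * b) a b)]
    have h5 := hanti ⟨le_rfl, h1⟩ ⟨h1, le_rfl⟩ h1
    simp only [hφ] at h5
    rw [hend] at h5
    have : 0 ≤ 2 * m * √(t + R + 1 - (t + R)) := by positivity
    linarith
  rw [abs_le]
  have h1 := main 1 (by simp)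
  have h2 := main (-1) (by simp)
  constructor <;> linarith

/-- The radiation profile of `f` along the outgoing ray `r = t + σ` in direction `(a, b)`. -/
def prof (f : SF) (σ a b t : ℝ) : ℝ :=
  √(t + σ) / 2 * (fr f t ((t + σ) * a) ((t + σ) * b) a b - (Dd 0 f).1 t ((t + σ) * a) ((t + σ) * b))
    + f.1 t ((t + σ) * a) ((t + σ) * b) / (4 * √(t + σ))

lemma GG3 (f : SF) : G 3 (G 3 f) = cX ^ 2 * Dd 2 (Dd 2 f) - cX * cY * Dd 1 (Dd 2 f) -
    cX * cY * Dd 1 (Dd 2 f) + cY ^ 2 * Dd 1 (Dd 1 f) - cX * Dd 1 f - cY * Dd 2 f := by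
  simp only [G3, map_sub, Derivation.leibniz, smul_eq_mul, D1X, D1Y, D2X, D2Y, D21]
  ring

/-- Along an outgoing ray the derivative is `∂ₜ + ∂_r`. -/
lemma hasDerivAt_ray (f : SF) (t σ a b : ℝ) :
    HasDerivAt (fun t => f.1 t ((t + σ) * a) ((t + σ) * b))
      ((Dd 0 f).1 t ((t + σ) * a) ((t + σ) * b) + fr f t ((t + σ) * a) ((t + σ) * b) a b) t :=
  (hasDerivAt_curve f (hasDerivAt_id t) (((hasDerivAt_id t).add_const σ).mul_const a)
    (((hasDerivAt_id t).add_const σ).mul_const b)).congr_deriv (by simp [fr]; ring)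

/-- The equation along rays. In polar coordinates
`r^{1/2} □f = (∂ₜ + ∂_r)(∂ₜ - ∂_r)(r^{1/2} f) - r^{-3/2} (Ω² + 1/4) f`, and `V = -½ (∂ₜ - ∂_r)(r^{1/2} f)`. -/
lemma prof_deriv (f : SF) {t σ a b : ℝ} (hab : a ^ 2 + b ^ 2 = 1) (hr : 0 < t + σ) :
    HasDerivAt (prof f σ a b)
      (-(√(t + σ) / 2 * (Box f).1 t ((t + σ) * a) ((t + σ) * b)) -
        ((G 3 (G 3 f)).1 t ((t + σ) * a) ((t + σ) * b) / 2 +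
          f.1 t ((t + σ) * a) ((t + σ) * b) / 8) / ((t + σ) * √(t + σ))) t := by
  have hs : 0 < √(t + σ) := Real.sqrt_pos.2 hr
  have hsq : √(t + σ) ^ 2 = t + σ := Real.sq_sqrt hr.le
  have h1 : HasDerivAt (fun t : ℝ => √(t + σ)) (1 / (2 * √(t + σ))) t :=
    ((hasDerivAt_id t).add_const σ).sqrt hr.ne'
  have d0 := hasDerivAt_ray (Dd 0 f) t σ a b
  have d1 := hasDerivAt_ray (Dd 1 f) t σ a b
  have d2 := hasDerivAt_ray (Dd 2 f) t σ a b
  have d := hasDerivAt_ray f t σ a b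
  have h2 := ((h1.div_const 2).mul (((d1.const_mul a).add (d2.const_mul b)).sub d0)).add
    (d.div (h1.const_mul 4) (by positivity))
  refine h2.congr_deriv ?_
  simp only [GG3, Box, sub_app, add_app, mul_app, pow_app, ofNat_app, cX_app, cY_app, fr, D10, D20,
    D21, Pi.add_apply, Pi.sub_apply]
  set s := √(t + σ)
  rw [← hsq]
  generalize (Dd 0 f).1 t _ _ = f0
  generalize (Dd 1 f).1 t _ _ = f1
  generalize (Dd 2 f).1 t _ _ = f2
  generalize (Dd 0 (Dd 0 f)).1 t _ _ = f00
  generalize (Dd 0 (Dd 1 f)).1 t _ _ = f01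
  generalize (Dd 0 (Dd 2 f)).1 t _ _ = f02
  generalize (Dd 1 (Dd 1 f)).1 t _ _ = f11
  generalize (Dd 1 (Dd 2 f)).1 t _ _ = f12
  generalize (Dd 2 (Dd 2 f)).1 t _ _ = f22
  generalize f.1 t _ _ = F
  field_simp
  have hb : b ^ 2 = 1 - a ^ 2 := by linarith
  ring_nf
  simp only [hb, show b ^ 3 = b * (1 - a ^ 2) by rw [← hb]; ring]
  ring

/-- The null covector `(-1, ω)`. -/
def hat (a b : ℝ) : Fin 3 → ℝ := ![-1, a, b]

/-- The derivatives tangential to the cone are combinations of commuting fields divided by `r`, so that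
the gradient is the null covector times `r^{-1/2} V` up to `O(1/r)`. -/
lemma grad_profile (f : SF) {t σ a b : ℝ} (hab : a ^ 2 + b ^ 2 = 1) (ht : 0 ≤ t) (hr : 0 < t + σ)
    (i : Fin 3) :
    |(Dd i f).1 t ((t + σ) * a) ((t + σ) * b) - hat a b i * (prof f σ a b t / √(t + σ))| ≤
      (|f.1 t ((t + σ) * a) ((t + σ) * b)| + |(G 0 f).1 t ((t + σ) * a) ((t + σ) * b)| +
        |(G 1 f).1 t ((t + σ) * a) ((t + σ) * b)| + |(G 2 f).1 t ((t + σ) * a) ((t + σ) * b)| +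
        |(G 3 f).1 t ((t + σ) * a) ((t + σ) * b)|) / (t + σ) := by
  have hs : 0 < √(t + σ) := Real.sqrt_pos.2 hr
  have hsq : √(t + σ) * √(t + σ) = t + σ := Real.mul_self_sqrt hr.le
  have e : prof f σ a b t / √(t + σ) =
      (fr f t ((t + σ) * a) ((t + σ) * b) a b - (Dd 0 f).1 t ((t + σ) * a) ((t + σ) * b)) / 2 +
      f.1 t ((t + σ) * a) ((t + σ) * b) / (4 * (t + σ)) := by
    rw [prof, add_div, div_div, mul_assoc 4, hsq]
    congr 1
    field_simp
  have hDi : (Dd i f).1 t ((t + σ) * a) ((t + σ) * b) =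
      ![(Dd 0 f).1 t ((t + σ) * a) ((t + σ) * b), (Dd 1 f).1 t ((t + σ) * a) ((t + σ) * b),
        (Dd 2 f).1 t ((t + σ) * a) ((t + σ) * b)] i := by fin_cases i <;> rfl
  rw [e, hDi]
  clear hDi e
  have ha : |a| ≤ 1 := abs_le.2 ⟨by nlinarith, by nlinarith⟩
  have hb : |b| ≤ 1 := abs_le.2 ⟨by nlinarith, by nlinarith⟩
  simp only [G0, G1, G2, G3, add_app, mul_app, sub_app, cT_app, cX_app, cY_app, fr]
  generalize (Dd 0 f).1 t _ _ = f0
  generalize (Dd 1 f).1 t _ _ = f1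
  generalize (Dd 2 f).1 t _ _ = f2
  generalize f.1 t _ _ = F
  generalize t + σ = r at *
  set S := t * f0 + r * a * f1 + r * b * f2
  set L1 := t * f1 + r * a * f0
  set L2 := t * f2 + r * b * f0
  set W := r * a * f2 - r * b * f1
  have hmul : ∀ c v : ℝ, |c| ≤ 1 → |c * v| ≤ |v| := fun c v hc => by
    rw [abs_mul]; exact mul_le_of_le_one_left (abs_nonneg _) hc
  have hT : r * |f0 + (a * f1 + b * f2)| ≤ |S| + |L1| + |L2| := by
    have e1 : (t + r) * (f0 + (a * f1 + b * f2)) = S + (a * L1 + b * L2) := by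
      simp only [S, L1, L2]; linear_combination (- r * f0) * hab
    calc r * |f0 + (a * f1 + b * f2)| ≤ (t + r) * |f0 + (a * f1 + b * f2)| := by gcongr; linarith
      _ = |S + (a * L1 + b * L2)| := by
        rw [← e1, abs_mul, abs_of_pos (show 0 < t + r by linarith)]
      _ ≤ |S| + (|a * L1| + |b * L2|) :=
        (abs_add_le _ _).trans (add_le_add le_rfl (abs_add_le _ _))
      _ ≤ _ := by linarith [hmul a L1 ha, hmul b L2 hb]
  rw [le_div_iff₀ hr, ← abs_of_pos hr, ← abs_mul, abs_of_pos hr]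
  set T := f0 + (a * f1 + b * f2)
  have hT' : |r * T| ≤ |S| + |L1| + |L2| := by rw [abs_mul, abs_of_pos hr]; exact hT
  have hS := abs_nonneg S
  have hL1 := abs_nonneg L1
  have hL2 := abs_nonneg L2
  have hF := abs_nonneg F
  have hW := abs_nonneg W
  rw [abs_le] at hT'
  have gen : ∀ c q d : ℝ, |c| ≤ 1 → |q| ≤ 1 → |d| ≤ 1 →
      |c * (r * T / 2) + q * (F / 4) + d * W| ≤ |F| + |S| + |L1| + |L2| + |W| := by
    intro c q d hc hq hd
    have h1 := hmul c (r * T / 2) hc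
    have h2 := hmul d W hd
    have h4 := hmul q (F / 4) hq
    have h3 : |r * T / 2| ≤ |S| + |L1| + |L2| := by
      rw [abs_le]
      constructor <;> linarith
    have h5 : |F / 4| ≤ |F| := by
      rw [abs_le]
      constructor <;> linarith [le_abs_self F, neg_abs_le F]
    linarith [abs_add_three (c * (r * T / 2)) (q * (F / 4)) (d * W)]
  fin_cases i <;> simp only [hat, Fin.zero_eta, Fin.mk_one, Fin.reduceFinMk, Matrix.cons_val]
  · refine le_trans (le_of_eq ?_) (gen (1 : ℝ) 1 0 (by simp) (by simp) (by simp))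
    congr 1
    simp only [T]
    field_simp
    ring
  · refine le_trans (le_of_eq ?_) (gen a (-a) (-b) ha (by rwa [abs_neg]) (by rwa [abs_neg]))
    congr 1
    simp only [T, W]
    field_simp
    linear_combination (-8 * r * f1) * hab
  · refine le_trans (le_of_eq ?_) (gen b (-b) a hb (by rwa [abs_neg]) ha)
    congr 1
    simp only [T, W]
    field_simp
    linear_combination (-8 * r * f2) * hab

/-- A damped scalar equation `V' = -αV + e`, `α ≥ 0`, `|e| ≤ g'`: the growth of `|V|` is controlled
by that of `g`. -/
lemma damped {V α e g g' : ℝ → ℝ} {t₀ t₁ : ℝ} (h01 : t₀ ≤ t₁)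
    (hVc : ContinuousOn V (Set.Icc t₀ t₁)) (hgc : ContinuousOn g (Set.Icc t₀ t₁))
    (hV : ∀ t ∈ Set.Ioo t₀ t₁, HasDerivAt V (-(α t * V t) + e t) t)
    (hα : ∀ t ∈ Set.Ioo t₀ t₁, 0 ≤ α t)
    (hg : ∀ t ∈ Set.Ioo t₀ t₁, HasDerivAt g (g' t) t)
    (he : ∀ t ∈ Set.Ioo t₀ t₁, |e t| ≤ g' t) :
    |V t₁| ≤ |V t₀| + (g t₁ - g t₀) := by
  -- `|V|` is regularised to `√(V² + κ²)`, for which the damping still has the right sign.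
  refine le_of_forall_pos_le_add fun κ hκ => ?_
  have hpos : ∀ t, 0 < V t ^ 2 + κ ^ 2 := fun t => by positivity
  have hd : ∀ t ∈ Set.Ioo t₀ t₁, HasDerivAt (fun t => √(V t ^ 2 + κ ^ 2) - g t)
      (V t * (-(α t * V t) + e t) / √(V t ^ 2 + κ ^ 2) - g' t) t := by
    intro t ht
    have := ((((hV t ht).pow 2).add_const (κ ^ 2)).sqrt (hpos t).ne').sub (hg t ht)
    refine this.congr_deriv ?_
    have : √(V t ^ 2 + κ ^ 2) ≠ 0 := (Real.sqrt_pos.2 (hpos t)).ne'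
    simp only [Pi.pow_apply]
    field_simp
    push_cast
    ring
  have hanti : AntitoneOn (fun t => √(V t ^ 2 + κ ^ 2) - g t) (Set.Icc t₀ t₁) := by
    refine antitoneOn_of_deriv_nonpos (convex_Icc _ _) (by fun_prop) ?_ ?_
    · rw [interior_Icc]; exact fun s hs => (hd s hs).differentiableAt.differentiableWithinAt
    · rw [interior_Icc]; intro s hs
      rw [(hd s hs).deriv]
      have hq := Real.sqrt_pos.2 (hpos s)
      have h1 : |V s| ≤ √(V s ^ 2 + κ ^ 2) := Real.abs_le_sqrt (by nlinarith)
      rw [sub_nonpos, div_le_iff₀ hq]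
      have h2 := he s hs
      have h3 := hα s hs
      calc V s * (-(α s * V s) + e s) = V s * e s - α s * (V s) ^ 2 := by ring
        _ ≤ V s * e s := by nlinarith [mul_nonneg h3 (sq_nonneg (V s))]
        _ ≤ |V s * e s| := le_abs_self _
        _ = |e s| * |V s| := by rw [abs_mul, mul_comm]
        _ ≤ g' s * √(V s ^ 2 + κ ^ 2) := by gcongr; exact (abs_nonneg _).trans h2
  have h5 := hanti ⟨le_rfl, h01⟩ ⟨h01, le_rfl⟩ h01
  simp only at h5
  have h6 : |V t₁| ≤ √(V t₁ ^ 2 + κ ^ 2) := Real.abs_le_sqrt (by nlinarith)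
  have h7 : √(V t₀ ^ 2 + κ ^ 2) ≤ |V t₀| + κ := by
    rw [Real.sqrt_le_left (by positivity)]
    nlinarith [sq_abs (V t₀), abs_nonneg (V t₀)]
  linarith

/-- If `|V|` grows at most like a convergent function then `V` converges. -/
lemma converges {V g : ℝ → ℝ} {t₀ l : ℝ} (hVc : ContinuousOn V (Set.Ici t₀))
    (h : ∀ s t, t₀ ≤ s → s ≤ t → |V t| - g t ≤ |V s| - g s) (hg : Tendsto g atTop (𝓝 l)) :
    ∃ L, Tendsto V atTop (𝓝 L) := by
  have habs : ∃ m, Tendsto (fun t => |V t|) atTop (𝓝 m) := by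
    have hbdd : ∃ m, Tendsto (fun t => |V (max t t₀)| - g (max t t₀)) atTop (𝓝 m) := by
      have hanti : Antitone (fun t => |V (max t t₀)| - g (max t t₀)) := fun s t hst =>
        h _ _ (le_max_right _ _) (max_le_max_right _ hst)
      rcases tendsto_of_antitone hanti with h1 | h1
      · exfalso
        have h2 := (hg.comp (tendsto_atTop_mono (fun t => le_max_left t t₀) tendsto_id))
        have h3 := h1.atBot_add h2
        have h4 := (h3.eventually (eventually_lt_atBot 0)).exists
        obtain ⟨t, ht⟩ := h4
        simp only [Function.comp_def, id] at ht
        linarith [abs_nonneg (V (max t t₀))]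
      · exact h1
    obtain ⟨m, hm⟩ := hbdd
    refine ⟨m + l, (hm.add hg).congr' ?_⟩
    filter_upwards [eventually_ge_atTop t₀] with t ht
    rw [max_eq_left ht]; ring
  obtain ⟨m, hm⟩ := habs
  have hm0 : 0 ≤ m := ge_of_tendsto' hm fun t => abs_nonneg _
  -- If the limit of `|V|` is not zero, then `V` is eventually of one sign by the intermediate value
  -- theorem.
  rcases hm0.eq_or_lt with h0 | h0
  · refine ⟨0, tendsto_zero_iff_abs_tendsto_zero _ |>.2 ?_⟩
    rw [h0]; exact hm
  · obtain ⟨T, hT⟩ := eventually_atTop.1 ((hm.eventually (lt_mem_nhds h0)).and (eventually_ge_atTop t₀))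
    have hne : ∀ t ∈ Set.Ici T, V t ≠ 0 := fun t ht => abs_pos.1 (hT t ht).1
    have hc : ContinuousOn V (Set.Ici T) := hVc.mono (Set.Ici_subset_Ici.2 (hT T le_rfl).2)
    by_cases hpos : ∃ s ∈ Set.Ici T, 0 < V s
    · refine ⟨m, hm.congr' ?_⟩
      filter_upwards [eventually_ge_atTop T] with t ht
      refine abs_of_nonneg ?_
      by_contra hneg
      push Not at hneg
      obtain ⟨s, hs, hs'⟩ := hpos
      obtain ⟨z, hz, hz'⟩ := (isPreconnected_Ici.image V hc).Icc_subset (Set.mem_image_of_mem V ht)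
        (Set.mem_image_of_mem V hs) (show (0 : ℝ) ∈ Set.Icc _ _ from ⟨hneg.le, hs'.le⟩)
      exact hne z hz hz'
    · push Not at hpos
      refine ⟨-m, hm.neg.congr' ?_⟩
      filter_upwards [eventually_ge_atTop T] with t ht
      rw [abs_of_nonpos (hpos t ht), neg_neg]

/-- Integrating `F' ≤ g'`. -/
lemma growth {F F' g g' : ℝ → ℝ} {T : ℝ} (hT : 0 ≤ T)
    (hF : ContinuousOn F (Set.Icc 0 T)) (hg : ContinuousOn g (Set.Icc 0 T))
    (hF' : ∀ t ∈ Set.Ioo 0 T, HasDerivAt F (F' t) t) (hg' : ∀ t ∈ Set.Ioo 0 T, HasDerivAt g (g' t) t)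
    (h : ∀ t ∈ Set.Ioo 0 T, F' t ≤ g' t) : F T ≤ F 0 + (g T - g 0) := by
  have hanti : AntitoneOn (fun t => F t - g t) (Set.Icc 0 T) := by
    refine antitoneOn_of_deriv_nonpos (convex_Icc _ _) (by fun_prop) ?_ ?_
    · rw [interior_Icc]
      exact fun s hs => ((hF' s hs).sub (hg' s hs)).differentiableAt.differentiableWithinAt
    · rw [interior_Icc]; intro s hs
      rw [show deriv (fun t => F t - g t) s = F' s - g' s from ((hF' s hs).sub (hg' s hs)).deriv]
      linarith [h s hs]
  have := hanti ⟨le_rfl, hT⟩ ⟨hT, le_rfl⟩ hT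
  simp only at this
  linarith

end SF

/-! ### Crude decay from the energy -/

namespace SF

/-- The finite set of words of length at most `n`. -/
def Wd (n : ℕ) : Finset (List (Fin 7)) := (List.finite_length_le (Fin 7) n).toFinset

lemma mem_Wd {n : ℕ} {w : List (Fin 7)} : w ∈ Wd n ↔ w.length ≤ n := by
  simp [Wd]

/-- Weighted integrals are monotone under pointwise domination by a finite sum of squares. -/
lemma wint_mono_sum {R : ℝ} (hR : 0 < R) {f : SF} {t : ℝ} (ht : 0 ≤ t) (s : ℕ) {B c : ℝ}
    (hc : 0 ≤ c) (hf : Supp R f) {ι : Type*} (S : Finset ι) (F : ι → SF) (hF : ∀ i ∈ S, Supp R (F i))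
    (hle : ∀ x y, radius x y ≤ t + R → f.1 t x y ^ 2 ≤ c * ∑ i ∈ S, (F i).1 t x y ^ 2)
    (hB : ∀ i ∈ S, wint R s (F i) t ≤ B) : wint R s f t ≤ c * (S.card * B) := by
  have h1 : wint R s f t ≤ ∫ z : ℝ × ℝ, c * ∑ i ∈ S,
      (t + R + 1 - radius z.1 z.2) ^ s * (F i ^ 2).1 t z.1 z.2 := by
    refine integral_mono (w_integrable (hf.pow two_ne_zero) ht s)
      ((integrable_finsetSum _ fun i hi =>
        w_integrable ((hF i hi).pow two_ne_zero) ht s).const_mul c) fun z => ?_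
    simp only [pow_app]
    rw [← Finset.mul_sum]
    rcases le_or_gt (radius z.1 z.2) (t + R) with h | h
    · have := mul_le_mul_of_nonneg_left (hle _ _ h)
        (pow_nonneg (by linarith : 0 ≤ t + R + 1 - radius z.1 z.2) s)
      linarith
    · simp only [hf t z.1 z.2 ht h.le]
      rw [Finset.sum_eq_zero fun i hi => by rw [hF i hi t z.1 z.2 ht h.le]; ring]
      simp
  refine h1.trans ?_
  rw [integral_const_mul]
  refine mul_le_mul_of_nonneg_left ?_ hc
  rw [integral_finsetSum _ fun i hi => w_integrable ((hF i hi).pow two_ne_zero) ht s]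
  refine (Finset.sum_le_sum fun i hi => hB i hi).trans ?_
  simp

/-- Square form of `GW_Dd_le`. -/
lemma GW_Dd_sq (w : List (Fin 7)) (f : SF) (a : Fin 3) (t x y : ℝ) :
    (GW w (Dd a f)).1 t x y ^ 2 ≤ 4 ^ w.length *
      ∑ q ∈ Wd w.length ×ˢ (Finset.univ : Finset (Fin 3)), (Dd q.2 (GW q.1 f)).1 t x y ^ 2 := by
  set S := ∑ q ∈ Wd w.length ×ˢ (Finset.univ : Finset (Fin 3)), (Dd q.2 (GW q.1 f)).1 t x y ^ 2
  have hS : 0 ≤ S := Finset.sum_nonneg fun _ _ => sq_nonneg _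
  have h := GW_Dd_le w f a t x y (fun _ => √S) monotone_const fun w' hw' b => by
    refine Real.abs_le_sqrt ?_
    exact Finset.single_le_sum (f := fun q : List (Fin 7) × Fin 3 =>
      (Dd q.2 (GW q.1 f)).1 t x y ^ 2) (fun _ _ => sq_nonneg _)
      (Finset.mem_product.2 ⟨mem_Wd.2 hw', Finset.mem_univ b⟩ : (w', b) ∈ _)
  calc (GW w (Dd a f)).1 t x y ^ 2 = |(GW w (Dd a f)).1 t x y| ^ 2 := (sq_abs _).symm
    _ ≤ (2 ^ w.length * √S) ^ 2 := by gcongr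
    _ = 4 ^ w.length * S := by
      rw [mul_pow, Real.sq_sqrt hS, ← pow_mul, mul_comm w.length 2, pow_mul]; norm_num

/-- Weighted Klainerman–Sobolev inequality for the gradient. -/
lemma grad_ks {R : ℝ} (hR : 1 ≤ R) : ∃ C : ℝ, 0 < C ∧ ∀ (F : SF) (_ : Supp R F) (t : ℝ)
    (_ : 0 ≤ t) (s : ℕ) (_ : s ≤ 1) (B : ℝ) (_ : 0 ≤ B)
    (_ : ∀ v : List (Fin 7), v.length ≤ 3 → ∀ a, wint R s (Dd a (GW v F)) t ≤ B)
    (a : Fin 3) (x y : ℝ) (_ : radius x y ≤ t + R),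
    (1 + t) * ((t + R + 1 - radius x y) ^ (s + 1) * ((Dd a F).1 t x y) ^ 2) ≤ C * B := by
  obtain ⟨C, hC, h⟩ := klainerman_sobolev hR
  have hR0 : 0 < R := by linarith
  set K : ℝ := ((Wd 3 ×ˢ (Finset.univ : Finset (Fin 3))).card : ℝ)
  refine ⟨C * (64 * K + 1), by positivity, ?_⟩
  intro F hF t ht s hs B hB0 hB a x y hx
  have key := h (Dd a F) (hF.Dd hR0 a) t ht s hs (64 * (K * B)) (by positivity) ?_ x y hx
  · refine key.trans ?_
    nlinarith [mul_nonneg hC.le hB0]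
  intro w hw
  refine wint_mono_sum hR0 ht s (by norm_num) ((hF.Dd hR0 a).GW hR0 w)
    (Wd 3 ×ˢ (Finset.univ : Finset (Fin 3))) (fun q => Dd q.2 (GW q.1 F))
    (fun q _ => (hF.GW hR0 q.1).Dd hR0 q.2) (fun x y _ => ?_) ?_
  · refine (GW_Dd_sq w F a t x y).trans ?_
    have h1 : (4 : ℝ) ^ w.length ≤ 64 := by
      calc (4 : ℝ) ^ w.length ≤ 4 ^ 3 := pow_le_pow_right₀ (by norm_num) hw
        _ = 64 := by norm_num
    have h2 : ∑ q ∈ Wd w.length ×ˢ (Finset.univ : Finset (Fin 3)), (Dd q.2 (GW q.1 F)).1 t x y ^ 2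
        ≤ ∑ q ∈ Wd 3 ×ˢ (Finset.univ : Finset (Fin 3)), (Dd q.2 (GW q.1 F)).1 t x y ^ 2 := by
      refine Finset.sum_le_sum_of_subset_of_nonneg ?_ fun _ _ _ => sq_nonneg _
      intro q hq
      rw [Finset.mem_product] at hq ⊢
      exact ⟨mem_Wd.2 ((mem_Wd.1 hq.1).trans hw), hq.2⟩
    exact mul_le_mul h1 h2 (Finset.sum_nonneg fun _ _ => sq_nonneg _) (by norm_num)
  · intro q hq
    exact hB q.1 (mem_Wd.1 (Finset.mem_product.1 hq).1) q.2

/-- The energy bound on `[0,T]`: `‖∂Γ^w u‖² ≤ A² (1+t)^{(|w|+1)/100}` for `|w| ≤ 10`. The squared norms may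
grow, with an exponent increasing with the number of fields. -/
def EB (u : Fin 2 → SF) (A T : ℝ) : Prop := ∀ t, 0 ≤ t → t ≤ T → ∀ j (w : List (Fin 7)),
  w.length ≤ 10 → ∀ a, I (Dd a (GW w (u j)) ^ 2) t ≤ A ^ 2 * (1 + t) ^ (((w.length : ℝ) + 1) / 100)

/-- Sharp decay on `[0,T]`: `|∂Γ^w u| ≤ m (1+t)^{|w|/200 - 1/2}` for `|w| ≤ 5`. There is no loss for `w = []`,
and the loss for each field is half of that of the squared energies in `EB`. -/
def MB (u : Fin 2 → SF) (m T : ℝ) : Prop := ∀ t, 0 ≤ t → t ≤ T → ∀ j (w : List (Fin 7)),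
  w.length ≤ 5 → ∀ a x y, |(Dd a (GW w (u j))).1 t x y| ≤
    m * (1 + t) ^ ((w.length : ℝ) / 200 - 1 / 2)

/-- Crude decay at time `t`, with `p = t + R + 1 - |x|`: `|Γ^w u| ≤ m √p` and `|∂Γ^w u| ≤ m / √p` for
`|w| ≤ 7`. The time decay is in `m`. -/
def CB (R : ℝ) (u : Fin 2 → SF) (m t : ℝ) : Prop := ∀ j (w : List (Fin 7)), w.length ≤ 7 →
  ∀ x y, radius x y ≤ t + R → |(GW w (u j)).1 t x y| ≤ m * √(t + R + 1 - radius x y) ∧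
    ∀ a, |(Dd a (GW w (u j))).1 t x y| ≤ m / √(t + R + 1 - radius x y)

/-- The energy bound implies crude decay: Klainerman–Sobolev applied to the gradient, then integration
in `r` from the boundary of the cone for the undifferentiated quantities. -/
lemma crude {R : ℝ} (hR : 1 ≤ R) : ∃ C : ℝ, 0 < C ∧ ∀ (u : Fin 2 → SF) (_ : ∀ j, Supp R (u j))
    (A T : ℝ) (_ : 0 ≤ A) (_ : EB u A T) (t : ℝ) (_ : 0 ≤ t) (_ : t ≤ T),
    CB R u (C * A * (1 + t) ^ (-(7 / 16) : ℝ)) t := by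
  obtain ⟨C, hC, h⟩ := grad_ks hR
  have hR0 : 0 < R := by linarith
  refine ⟨4 * √C, by positivity, ?_⟩
  intro u hu A T hA hE t ht htT
  have hτ : 0 < 1 + t := by linarith
  have hτ1 : 1 ≤ 1 + t := by linarith
  set m := √C * A * (1 + t) ^ (-(7 / 16) : ℝ) with hm
  have hm0 : 0 ≤ m := by positivity
  have hmm : 4 * √C * A * (1 + t) ^ (-(7 / 16) : ℝ) = 4 * m := by rw [hm]; ring
  rw [hmm]
  have grad : ∀ j (w : List (Fin 7)), w.length ≤ 7 → ∀ a x y, radius x y ≤ t + R →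
      |(Dd a (GW w (u j))).1 t x y| ≤ m / √(t + R + 1 - radius x y) := by
    intro j w hw a x y hx
    have hp : 1 ≤ t + R + 1 - radius x y := by linarith
    have hp0 : 0 < t + R + 1 - radius x y := by linarith
    -- With `|w| ≤ 7` at most `7 + 3 = 10` fields are used, and `(10 + 1) / 100 ≤ 1 / 8`.
    have k := h (GW w (u j)) ((hu j).GW hR0 w) t ht 0 (by norm_num)
      (A ^ 2 * (1 + t) ^ ((1 : ℝ) / 8)) (by positivity) (fun v hv b => ?_) a x y hx
    · rw [zero_add, pow_one] at k
      rw [le_div_iff₀ (Real.sqrt_pos.2 hp0)]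
      refine abs_le_of_sq_le_sq' ?_ hm0 |>.2
      rw [mul_pow, sq_abs, Real.sq_sqrt hp0.le]
      have e : (1 + t) * m ^ 2 = C * (A ^ 2 * (1 + t) ^ ((1 : ℝ) / 8)) := by
        rw [hm, mul_pow, mul_pow, Real.sq_sqrt hC.le, ← Real.rpow_mul_natCast hτ.le]
        have : (1 + t) ^ ((1 : ℝ) / 8) = (1 + t) * (1 + t) ^ (-(7 / 16) * ((2 : ℕ) : ℝ)) := by
          nth_rw 2 [← Real.rpow_one (1 + t)]
          rw [← Real.rpow_add hτ]; norm_num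
        rw [this]; ring
      rw [← e] at k
      have := le_of_mul_le_mul_left k hτ
      linarith
    · have e1 : wint R 0 (Dd b (GW v (GW w (u j)))) t = I (Dd b (GW (w ++ v) (u j)) ^ 2) t := by
        simp [wint, I, GW_append]
      rw [e1]
      refine (hE t ht htT j (w ++ v) (by simp; omega) b).trans ?_
      refine mul_le_mul_of_nonneg_left (Real.rpow_le_rpow_of_exponent_le hτ1 ?_) (sq_nonneg A)
      have : ((w ++ v).length : ℝ) ≤ 10 := by
        rw [List.length_append]; exact_mod_cast (by omega : w.length + v.length ≤ 10)
      linarith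
  intro j w hw x y hx
  have hp0 : 0 < t + R + 1 - radius x y := by linarith
  refine ⟨?_, fun a => (grad j w hw a x y hx).trans ?_⟩
  · obtain ⟨θ, _, ex, ey⟩ := exists_polar x y
    have hcs : cos θ ^ 2 + sin θ ^ 2 = 1 := by rw [add_comm]; exact sin_sq_add_cos_sq θ
    have := radial_int (m := 2 * m) (f := GW w (u j)) ((hu j).GW hR0 w) ht hR0 (by positivity) hcs
      (fun r h0 h1 => ?_) (radius_nonneg x y) hx
    · rw [← ex, ← ey] at this
      linarith
    · have hr : radius (r * cos θ) (r * sin θ) = r := radius_cs h0 θ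
      have g1 := grad j w hw 1 (r * cos θ) (r * sin θ) (by rw [hr]; exact h1)
      have g2 := grad j w hw 2 (r * cos θ) (r * sin θ) (by rw [hr]; exact h1)
      rw [hr] at g1 g2
      unfold fr
      refine (abs_add_le _ _).trans ?_
      rw [abs_mul, abs_mul]
      have c1 := Real.abs_cos_le_one θ
      have c2 := Real.abs_sin_le_one θ
      have := mul_le_mul c1 g1 (abs_nonneg _) zero_le_one
      have := mul_le_mul c2 g2 (abs_nonneg _) zero_le_one
      rw [mul_div_assoc]
      linarith
  · gcongr; linarith

end SF

/-! ### The transport equation along rays -/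

namespace SF

section ray
variable {R m c σ a b t : ℝ} {u : Fin 2 → SF}

lemma sqrt_quarter {r τ : ℝ} (hτ : 0 ≤ τ) (h : τ ≤ 4 * r) : √τ ≤ 2 * √r := by
  rw [show (2 : ℝ) = √4 by rw [show (4 : ℝ) = 2 ^ 2 by norm_num, Real.sqrt_sq (by norm_num)],
    ← Real.sqrt_mul (by norm_num)]
  exact Real.sqrt_le_sqrt h

lemma sqrt_le_R (hR : 1 ≤ R) (ht : 0 ≤ t) (hσ : σ ≤ R) : √(t + σ) ≤ R * √(1 + t) := by
  rw [show R * √(1 + t) = √(R ^ 2 * (1 + t)) by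
    rw [Real.sqrt_mul (sq_nonneg R), Real.sqrt_sq (by linarith)]]
  refine Real.sqrt_le_sqrt ?_
  have h1 : t + σ ≤ R * (1 + t) := by nlinarith
  have h2 : R * (1 + t) ≤ R * (R * (1 + t)) :=
    mul_le_mul_of_nonneg_left (by nlinarith) (by linarith)
  linarith

/-- Crude decay on the ray `r = t + σ`, where `p = R + 1 - σ`. -/
lemma CB.ray (hC : CB R u m t) (hab : a ^ 2 + b ^ 2 = 1) (hr : 0 ≤ t + σ) (hσ : σ ≤ R)
    (j : Fin 2) {w : List (Fin 7)} (hw : w.length ≤ 7) :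
    |(GW w (u j)).1 t ((t + σ) * a) ((t + σ) * b)| ≤ m * √(R + 1 - σ) ∧
    ∀ i, |(Dd i (GW w (u j))).1 t ((t + σ) * a) ((t + σ) * b)| ≤ m / √(R + 1 - σ) := by
  have h := hC j w hw ((t + σ) * a) ((t + σ) * b) (by rw [radius_polar hr hab]; linarith)
  rw [radius_polar hr hab, show t + R + 1 - (t + σ) = R + 1 - σ by ring] at h
  exact h

/-- The angular and zeroth-order error in the equation along rays is integrable in time. -/
lemma ang_err (hC : CB R u m t) (hm : 0 ≤ m) (hab : a ^ 2 + b ^ 2 = 1) (ht : 0 ≤ t)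
    (hr : 1 + t ≤ 4 * (t + σ)) (hσ : σ ≤ R) (j : Fin 2) {w : List (Fin 7)} (hw : w.length ≤ 5) :
    |((G 3 (G 3 (GW w (u j)))).1 t ((t + σ) * a) ((t + σ) * b) / 2 +
      (GW w (u j)).1 t ((t + σ) * a) ((t + σ) * b) / 8) / ((t + σ) * √(t + σ))| ≤
      5 * (m * √(R + 1 - σ)) / ((1 + t) * √(1 + t)) := by
  have hr0 : 0 < t + σ := by linarith
  have hs := sqrt_quarter (by linarith : 0 ≤ 1 + t) hr
  have hτs : 0 < √(1 + t) := Real.sqrt_pos.2 (by linarith)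
  have h1 := (hC.ray hab hr0.le hσ j (by omega : w.length ≤ 7)).1
  have h2 := (hC.ray hab hr0.le hσ j (w := w ++ [3, 3]) (by simp; omega)).1
  rw [GW_append] at h2
  simp only [GW_cons, GW_nil] at h2
  rw [abs_div, abs_of_pos (by positivity : 0 < (t + σ) * √(t + σ))]
  rw [div_le_div_iff₀ (by positivity) (by positivity)]
  have h3 : |(G 3 (G 3 (GW w (u j)))).1 t ((t + σ) * a) ((t + σ) * b) / 2 +
      (GW w (u j)).1 t ((t + σ) * a) ((t + σ) * b) / 8| ≤ 5 / 8 * (m * √(R + 1 - σ)) := by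
    rw [abs_le] at h1 h2 ⊢
    constructor <;> linarith
  have h4 : (1 + t) * √(1 + t) ≤ 8 * ((t + σ) * √(t + σ)) := by
    calc (1 + t) * √(1 + t) ≤ (4 * (t + σ)) * (2 * √(t + σ)) := by gcongr
      _ = _ := by ring
  have h5 := mul_le_mul h3 h4 (by positivity) (by positivity)
  linarith

/-- The difference between the gradient and the profile, under crude decay. -/
lemma grad_err (hC : CB R u m t) (hm : 0 ≤ m) (hab : a ^ 2 + b ^ 2 = 1) (ht : 0 ≤ t)
    (hr : 1 + t ≤ 4 * (t + σ)) (hσ : σ ≤ R) (j : Fin 2) {w : List (Fin 7)} (hw : w.length ≤ 5)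
    (i : Fin 3) :
    |(Dd i (GW w (u j))).1 t ((t + σ) * a) ((t + σ) * b) -
      hat a b i * (prof (GW w (u j)) σ a b t / √(t + σ))| ≤ 20 * (m * √(R + 1 - σ)) / (1 + t) := by
  have hr0 : 0 < t + σ := by linarith
  refine (grad_profile (GW w (u j)) hab ht hr0 i).trans ?_
  have h1 := (hC.ray hab hr0.le hσ j (by omega : w.length ≤ 7)).1
  have h2 : ∀ k, |(G k (GW w (u j))).1 t ((t + σ) * a) ((t + σ) * b)| ≤ m * √(R + 1 - σ) := by
    intro k
    have := (hC.ray hab hr0.le hσ j (w := w ++ [k]) (by simp; omega)).1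
    rw [GW_append] at this
    exact this
  rw [div_le_div_iff₀ hr0 (by linarith)]
  have h0 : 0 ≤ m * √(R + 1 - σ) := by positivity
  have := mul_le_mul (add_le_add (add_le_add (add_le_add (add_le_add h1 (h2 0)) (h2 1)) (h2 2))
    (h2 3)) hr (by linarith) (by positivity)
  linarith

/-- The equation along rays for the undifferentiated solution: damping plus an integrable error. -/
lemma ray_eq (hR : 1 ≤ R) (hu : Solves u) (hC : CB R u m t) (hm : 0 ≤ m) (hab : a ^ 2 + b ^ 2 = 1)
    (ht : 0 < t) (hr : 1 + t ≤ 4 * (t + σ)) (hσ : σ ≤ R) (j : Fin 2) :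
    ∃ e, HasDerivAt (prof (u j) σ a b)
      (-((1 / 2 * (Dd 0 (u (j + 1))).1 t ((t + σ) * a) ((t + σ) * b) ^ 2) * prof (u j) σ a b t) + e) t
      ∧ |e| ≤ 5 * (m * √(R + 1 - σ)) / ((1 + t) * √(1 + t)) +
        10 * R * m ^ 3 / (√(R + 1 - σ) * √(1 + t)) := by
  have hr0 : 0 < t + σ := by linarith
  have hp : 0 < R + 1 - σ := by linarith
  have hps : 0 < √(R + 1 - σ) := Real.sqrt_pos.2 hp
  have hpq : √(R + 1 - σ) ^ 2 = R + 1 - σ := Real.sq_sqrt hp.le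
  have hs := sqrt_quarter (by linarith : 0 ≤ 1 + t) hr
  have hτs : 0 < √(1 + t) := Real.sqrt_pos.2 (by linarith)
  have hτq : √(1 + t) * √(1 + t) = 1 + t := Real.mul_self_sqrt (by linarith)
  have hrs : 0 < √(t + σ) := Real.sqrt_pos.2 hr0
  have hd := prof_deriv (u j) hab hr0
  have hA := ang_err hC hm hab ht.le hr hσ j (w := []) (by simp)
  have hG := grad_err hC hm hab ht.le hr hσ j (w := []) (by simp) 0
  have hD := (hC.ray hab hr0.le hσ (j + 1) (w := []) (by simp)).2 0
  simp only [GW_nil] at hA hG hD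
  rw [hu j _ _ _ ht] at hd
  set P := prof (u j) σ a b t
  set v := (Dd 0 (u (j + 1))).1 t ((t + σ) * a) ((t + σ) * b)
  set z := (Dd 0 (u j)).1 t ((t + σ) * a) ((t + σ) * b)
  set N := ((G 3 (G 3 (u j))).1 t ((t + σ) * a) ((t + σ) * b) / 2 +
      (u j).1 t ((t + σ) * a) ((t + σ) * b) / 8) / ((t + σ) * √(t + σ))
  refine ⟨1 / 2 * v ^ 2 * (√(t + σ) * (z - hat a b 0 * (P / √(t + σ)))) - N, ?_, ?_⟩
  · refine hd.congr_deriv ?_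
    have : hat a b 0 = -1 := rfl
    rw [this]; field_simp; ring
  · refine (abs_sub _ _).trans ?_
    rw [add_comm]
    refine add_le_add hA ?_
    rw [abs_mul (1 / 2 * v ^ 2), abs_mul (√(t + σ)), abs_of_pos hrs,
      abs_of_nonneg (by positivity : 0 ≤ 1 / 2 * v ^ 2)]
    have h1 : v ^ 2 ≤ (m / √(R + 1 - σ)) ^ 2 := by
      rw [← sq_abs]; exact pow_le_pow_left₀ (abs_nonneg _) hD 2
    have h2 := sqrt_le_R hR ht.le hσ
    calc 1 / 2 * v ^ 2 * (√(t + σ) * |z - hat a b 0 * (P / √(t + σ))|)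
        ≤ 1 / 2 * (m / √(R + 1 - σ)) ^ 2 * ((R * √(1 + t)) * (20 * (m * √(R + 1 - σ)) / (1 + t))) := by
          gcongr
      _ = 10 * R * m ^ 3 / (√(R + 1 - σ) * √(1 + t)) := by
          generalize √(1 + t) = q at hτq hτs ⊢
          rw [← hτq]; field_simp; ring

/-- Integration along a ray. -/
lemma ray_bound {V α e : ℝ → ℝ} {t₀ t₁ K₁ K₂ κ : ℝ} (h0 : 0 ≤ t₀) (h01 : t₀ ≤ t₁) (hK₁ : 0 ≤ K₁)
    (hK₂ : 0 ≤ K₂) (hκ : 0 < κ) (hVc : ContinuousOn V (Set.Icc t₀ t₁))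
    (hV : ∀ t ∈ Set.Ioo t₀ t₁, HasDerivAt V (-(α t * V t) + e t) t)
    (hα : ∀ t ∈ Set.Ioo t₀ t₁, 0 ≤ α t)
    (he : ∀ t ∈ Set.Ioo t₀ t₁, |e t| ≤ K₁ * (1 + t) ^ (-(23 / 16) : ℝ) + K₂ * (1 + t) ^ (κ - 1)) :
    |V t₁| ≤ |V t₀| + 3 * K₁ + K₂ * (1 + t₁) ^ κ / κ := by
  set g : ℝ → ℝ := fun t => -(16 / 7 * K₁ * (1 + t) ^ (-(7 / 16) : ℝ)) + K₂ * (1 + t) ^ κ / κ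
  have hd : ∀ t, 0 ≤ t → HasDerivAt g (K₁ * (1 + t) ^ (-(23 / 16) : ℝ) + K₂ * (1 + t) ^ (κ - 1)) t := by
    intro t ht
    have h1 : HasDerivAt (fun t : ℝ => 1 + t) 1 t := (hasDerivAt_id t).const_add 1
    have h2 := (h1.rpow_const (p := (-(7 / 16) : ℝ)) (Or.inl (by linarith))).const_mul (16 / 7 * K₁)
    have h3 := ((h1.rpow_const (p := κ) (Or.inl (by linarith))).const_mul K₂).div_const κ
    refine (h2.neg.add h3).congr_deriv ?_
    rw [show (-(7 / 16) - 1 : ℝ) = -(23 / 16) by norm_num]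
    field_simp
  have := damped (g := g) h01 hVc (fun t ht => (hd t (h0.trans ht.1)).continuousAt.continuousWithinAt)
    hV hα (fun t ht => hd t (h0.trans ht.1.le)) he
  refine this.trans ?_
  have h1 : (1 + t₀) ^ (-(7 / 16) : ℝ) ≤ 1 :=
    Real.rpow_le_one_of_one_le_of_nonpos (by linarith) (by norm_num)
  have h2 : 0 ≤ (1 + t₁) ^ (-(7 / 16) : ℝ) := Real.rpow_nonneg (by linarith) _
  have h3 : 0 ≤ K₂ * (1 + t₀) ^ κ / κ := by
    have := Real.rpow_nonneg (by linarith : 0 ≤ 1 + t₀) κ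
    positivity
  simp only [g]
  nlinarith [mul_le_mul_of_nonneg_left h1 hK₁, mul_nonneg hK₁ h2]

end ray

end SF

/-! ### Bounds for the undifferentiated profile -/

namespace SF

section mclose
variable {R m c M σ a b t T : ℝ} {u : Fin 2 → SF}

/-- The profile in terms of crude decay; useful where `r` and `p` are comparable. -/
lemma prof_le (hC : CB R u m t) (hm : 0 ≤ m) (hab : a ^ 2 + b ^ 2 = 1)
    (hr : 0 < t + σ) (hσ : σ ≤ R) (j : Fin 2) {w : List (Fin 7)} (hw : w.length ≤ 7) :
    |prof (GW w (u j)) σ a b t| ≤ 3 / 2 * (m * (√(t + σ) / √(R + 1 - σ))) +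
      m * (√(R + 1 - σ) / √(t + σ)) := by
  have hrs : 0 < √(t + σ) := Real.sqrt_pos.2 hr
  obtain ⟨h1, h2⟩ := hC.ray hab hr.le hσ j hw
  have d0 := h2 0
  have d1 := h2 1
  have d2 := h2 2
  have ha : |a| ≤ 1 := abs_le_one_iff_mul_self_le_one.2 (by nlinarith [sq_nonneg b])
  have hb : |b| ≤ 1 := abs_le_one_iff_mul_self_le_one.2 (by nlinarith [sq_nonneg a])
  unfold prof fr
  set D0 := (Dd 0 (GW w (u j))).1 t ((t + σ) * a) ((t + σ) * b)
  set D1 := (Dd 1 (GW w (u j))).1 t ((t + σ) * a) ((t + σ) * b)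
  set D2 := (Dd 2 (GW w (u j))).1 t ((t + σ) * a) ((t + σ) * b)
  set F := (GW w (u j)).1 t ((t + σ) * a) ((t + σ) * b)
  have e1 : |a * D1 + b * D2 - D0| ≤ 3 * (m / √(R + 1 - σ)) := by
    refine (abs_sub _ _).trans ?_
    have := abs_add_le (a * D1) (b * D2)
    rw [abs_mul, abs_mul] at this
    have := mul_le_mul ha d1 (abs_nonneg _) zero_le_one
    have := mul_le_mul hb d2 (abs_nonneg _) zero_le_one
    linarith
  refine (abs_add_le _ _).trans (add_le_add ?_ ?_)
  · rw [abs_mul, abs_of_pos (by positivity : 0 < √(t + σ) / 2)]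
    refine (mul_le_mul_of_nonneg_left e1 (by positivity)).trans (le_of_eq (by ring))
  · rw [abs_div, abs_of_pos (by positivity : 0 < 4 * √(t + σ)), ← mul_div_assoc]
    refine div_le_div₀ (by positivity) h1 hrs (by linarith)

lemma sqrt_le_mul {x y k : ℝ} (hk : 0 ≤ k) (h : x ≤ k ^ 2 * y) : √x ≤ k * √y := by
  rw [show k * √y = √(k ^ 2 * y) by rw [Real.sqrt_mul (sq_nonneg k), Real.sqrt_sq hk]]
  exact Real.sqrt_le_sqrt h

lemma sqrt_p_le (hR : 1 ≤ R) (ht : 0 ≤ t) (hr : 0 ≤ t + σ) : √(R + 1 - σ) ≤ 2 * R * √(1 + t) := by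
  refine sqrt_le_mul (by linarith) ?_
  have h1 : R + 1 - σ ≤ 2 * R * (1 + t) := by nlinarith
  have h2 : 2 * R * (1 + t) ≤ 2 * R * (2 * R * (1 + t)) :=
    mul_le_mul_of_nonneg_left (by nlinarith) (by linarith)
  linarith

/-- The time at which the ray `r = t + σ` enters the region `1 + t ≤ 4 r`. -/
def tin (σ : ℝ) : ℝ := max 0 ((1 - 4 * σ) / 3)

lemma tin_nonneg (σ : ℝ) : 0 ≤ tin σ := le_max_left _ _
lemma tin_le (ht : 0 ≤ t) (h : 1 + t ≤ 4 * (t + σ)) : tin σ ≤ t := max_le ht (by linarith)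
lemma tin_reg (h : tin σ ≤ t) : 1 + t ≤ 4 * (t + σ) := by
  have := (le_max_right _ _).trans h; linarith

/-- The value of the profile where the ray enters the region `1 + t ≤ 4r`. There either `t = 0`
or `p` is comparable to `1 + t`, so that crude decay is enough. -/
lemma prof_tin (hR : 1 ≤ R) (hC : CB R u m (tin σ)) (hm : 0 ≤ m) (hab : a ^ 2 + b ^ 2 = 1)
    (hσ : σ ≤ R) (j : Fin 2) {w : List (Fin 7)} (hw : w.length ≤ 7) :
    |prof (GW w (u j)) σ a b (tin σ)| ≤ 6 * R * m := by
  have hreg := tin_reg (le_refl (tin σ))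
  have h0 := tin_nonneg σ
  have hr : 0 < tin σ + σ := by linarith
  have hp : 0 < R + 1 - σ := by linarith
  refine (prof_le hC hm hab hr hσ j hw).trans ?_
  have hR2 : R ≤ R ^ 2 := by nlinarith
  have h1 : √(tin σ + σ) ≤ R * √(R + 1 - σ) := by
    refine sqrt_le_mul (by linarith) ?_
    rcases max_choice 0 ((1 - 4 * σ) / 3) with h | h <;> unfold tin <;> rw [h]
    · nlinarith
    · nlinarith
  have h2 : √(R + 1 - σ) ≤ (4 * R) * √(tin σ + σ) := by
    refine sqrt_le_mul (by linarith) ?_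
    have hk : -σ ≤ 3 * (tin σ + σ) - 1 := by linarith [tin_reg (le_refl (tin σ))]
    have hk4 : 1 ≤ 4 * (tin σ + σ) := by linarith
    nlinarith [mul_le_mul_of_nonneg_left hk4 (by positivity : 0 ≤ R ^ 2)]
  have e1 : √(tin σ + σ) / √(R + 1 - σ) ≤ R := (div_le_iff₀ (Real.sqrt_pos.2 hp)).2 h1
  have e2 : √(R + 1 - σ) / √(tin σ + σ) ≤ 4 * R := (div_le_iff₀ (Real.sqrt_pos.2 hr)).2 h2
  have := mul_le_mul_of_nonneg_left e1 hm
  have := mul_le_mul_of_nonneg_left e2 hm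
  nlinarith [mul_nonneg hm (by linarith : 0 ≤ R)]

lemma prof_cont (f : SF) (hab : a ^ 2 + b ^ 2 = 1) {t : ℝ} (hr : 0 < t + σ) :
    ContinuousAt (prof f σ a b) t := (prof_deriv f hab hr).continuousAt

/-- Crude decay on `[0,T]`, with the rate `(1+t)^{-7/16}` obtained in `crude`. -/
def CT (R : ℝ) (u : Fin 2 → SF) (c T : ℝ) : Prop :=
  ∀ t, 0 ≤ t → t ≤ T → CB R u (c * (1 + t) ^ (-(7 / 16) : ℝ)) t

/-- Time decay of the angular error when the crude constant decays like `t^{-7/16}`. -/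
lemma ang_time (hR : 1 ≤ R) (hc : 0 ≤ c) (ht : 0 ≤ t) (hr : 0 ≤ t + σ) :
    5 * ((c * (1 + t) ^ (-(7 / 16) : ℝ)) * √(R + 1 - σ)) / ((1 + t) * √(1 + t)) ≤
      10 * R * c * (1 + t) ^ (-(23 / 16) : ℝ) := by
  have hτ : 0 < 1 + t := by linarith
  have hτs : 0 < √(1 + t) := Real.sqrt_pos.2 hτ
  have e : (1 + t) ^ (-(23 / 16) : ℝ) = (1 + t) ^ (-(7 / 16) : ℝ) / (1 + t) := by
    rw [← Real.rpow_sub_one hτ.ne']; norm_num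
  rw [e, div_le_iff₀ (by positivity)]
  have h1 := sqrt_p_le hR ht hr
  have h2 : 0 ≤ c * (1 + t) ^ (-(7 / 16) : ℝ) := by positivity
  have h3 := mul_le_mul_of_nonneg_left h1 h2
  calc 5 * ((c * (1 + t) ^ (-(7 / 16) : ℝ)) * √(R + 1 - σ))
      ≤ 5 * ((c * (1 + t) ^ (-(7 / 16) : ℝ)) * (2 * R * √(1 + t))) := by linarith
    _ = _ := by field_simp; ring

/-- Time decay of the cubic error when the crude constant decays like `t^{-7/16}`. -/
lemma cub_time (hR : 1 ≤ R) (hc : 0 ≤ c) (hc1 : c ≤ 1) (ht : 0 ≤ t) (hσ : σ ≤ R) :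
    10 * R * (c * (1 + t) ^ (-(7 / 16) : ℝ)) ^ 3 / (√(R + 1 - σ) * √(1 + t)) ≤
      10 * R * c * (1 + t) ^ (-(29 / 16) : ℝ) := by
  have hτ : 0 < 1 + t := by linarith
  have hτs : 0 < √(1 + t) := Real.sqrt_pos.2 hτ
  have e : (1 + t) ^ (-(29 / 16) : ℝ) * √(1 + t) = ((1 + t) ^ (-(7 / 16) : ℝ)) ^ 3 := by
    rw [Real.sqrt_eq_rpow, ← Real.rpow_mul_natCast hτ.le, ← Real.rpow_add hτ]; norm_num
  have hp : 1 ≤ √(R + 1 - σ) := Real.one_le_sqrt.2 (by linarith)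
  rw [div_le_iff₀ (by positivity), mul_pow, ← e]
  have hc3 : c ^ 3 ≤ c := by nlinarith [mul_nonneg hc hc, pow_nonneg hc 3]
  have hX : 0 ≤ (1 + t) ^ (-(29 / 16) : ℝ) * √(1 + t) := by positivity
  set X := (1 + t) ^ (-(29 / 16) : ℝ) * √(1 + t)
  calc 10 * R * (c ^ 3 * X) ≤ 10 * R * (c * X) := by gcongr
    _ ≤ 10 * R * (c * X) * √(R + 1 - σ) := le_mul_of_one_le_right (by positivity) hp
    _ = _ := by simp only [X]; ring

/-- The undifferentiated profile does not grow. The nonlinearity acts as a damping whose size plays no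
role, so the bound is linear in `c`. -/
lemma ray_V0 (hR : 1 ≤ R) (hu : Solves u) (hc : 0 ≤ c) (hc1 : c ≤ 1) (hC : CT R u c T)
    (hab : a ^ 2 + b ^ 2 = 1) (ht : 0 ≤ t) (htT : t ≤ T) (hr : 1 + t ≤ 4 * (t + σ)) (hσ : σ ≤ R)
    (j : Fin 2) : |prof (u j) σ a b t| ≤ 66 * R * c := by
  have h0 := tin_nonneg σ
  have h1 := tin_le ht hr
  have hreg : ∀ s, tin σ ≤ s → 0 < s + σ := fun s hs => by have := tin_reg hs; linarith
  have hm : ∀ s : ℝ, 0 ≤ s → 0 ≤ c * (1 + s) ^ (-(7 / 16) : ℝ) := fun s hs => by positivity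
  have H : ∀ s ∈ Set.Ioo (tin σ) t, ∃ e, HasDerivAt (prof (u j) σ a b)
      (-((1 / 2 * (Dd 0 (u (j + 1))).1 s ((s + σ) * a) ((s + σ) * b) ^ 2) * prof (u j) σ a b s) + e) s
      ∧ |e| ≤ 20 * R * c * (1 + s) ^ (-(23 / 16) : ℝ) + 0 * (1 + s) ^ ((1 : ℝ) - 1) := by
    intro s hs
    have hs0 : 0 < s := h0.trans_lt hs.1
    obtain ⟨e, he1, he2⟩ := ray_eq hR hu (hC s hs0.le (hs.2.le.trans htT)) (hm s hs0.le) hab hs0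
      (tin_reg hs.1.le) hσ j
    refine ⟨e, he1, he2.trans ?_⟩
    have a1 := ang_time hR hc hs0.le (hreg s hs.1.le).le
    have a2 := cub_time hR hc hc1 hs0.le hσ
    have a3 : (1 + s) ^ (-(29 / 16) : ℝ) ≤ (1 + s) ^ (-(23 / 16) : ℝ) :=
      Real.rpow_le_rpow_of_exponent_le (by linarith) (by norm_num)
    have a4 := mul_le_mul_of_nonneg_left a3 (by positivity : 0 ≤ 10 * R * c)
    linarith
  choose! e he1 he2 using H
  have := ray_bound h0 h1 (by positivity : 0 ≤ 20 * R * c) le_rfl one_pos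
    (fun s hs => (prof_cont (u j) hab (hreg s hs.1)).continuousWithinAt) he1
    (fun s hs => by positivity) he2
  have h2 := prof_tin (w := []) hR (hC _ h0 (h1.trans htT)) (hm _ h0) hab hσ j (by simp)
  simp only [GW_nil] at h2
  have h3 : c * (1 + tin σ) ^ (-(7 / 16) : ℝ) ≤ c := mul_le_of_le_one_right hc
    (Real.rpow_le_one_of_one_le_of_nonpos (by linarith) (by norm_num))
  have h4 := mul_le_mul_of_nonneg_left h3 (by linarith : 0 ≤ 6 * R)
  simp only [zero_mul, zero_div, add_zero] at this
  linarith

/-- The commuted nonlinearity is cubic in `M (1+t)^{-1/2}`. -/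
lemma MB.box (hu : Solves u) (hM : 0 ≤ M) (hB : MB u M T) (ht : 0 ≤ t) (htT : t ≤ T) (x y : ℝ)
    (j : Fin 2) {w : List (Fin 7)} (hw : w.length ≤ 5) :
    |(Box (GW w (u j))).1 t x y| ≤
      3 ^ 5 * 3 ^ 5 * 2 ^ 15 * M ^ 3 * (1 + t) ^ ((w.length : ℝ) / 200 - 3 / 2) := by
  have hτ : 0 < 1 + t := by linarith
  have hB' : ∀ j (w : List (Fin 7)), w.length ≤ 5 → ∀ a, |(Dd a (GW w (u j))).1 t x y| ≤
      (M * (1 + t) ^ (-(1 / 2) : ℝ)) * ((1 + t) ^ ((1 : ℝ) / 200)) ^ w.length := by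
    intro j w hw a
    refine (hB t ht htT j w hw a x y).trans (le_of_eq ?_)
    rw [← Real.rpow_mul_natCast hτ.le, mul_assoc, ← Real.rpow_add hτ]
    congr 2; ring
  have := hu.box_le (K := 5) (N := 5) (by norm_num) ht (by positivity) (by positivity)
    (Real.one_le_rpow (by linarith) (by norm_num)) hB' hB' j w hw
  refine this.trans (le_of_eq ?_)
  have e : (1 + t) ^ ((w.length : ℝ) / 200 - 3 / 2) =
      ((1 + t) ^ (-(1 / 2) : ℝ)) ^ 3 * ((1 + t) ^ ((1 : ℝ) / 200)) ^ w.length := by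
    rw [← Real.rpow_mul_natCast hτ.le, ← Real.rpow_mul_natCast hτ.le, ← Real.rpow_add hτ]
    congr 1; push_cast; ring
  rw [e]; ring

end mclose

end SF

/-! ### Sharp pointwise decay -/

namespace SF

section mclose
variable {R m c M σ a b t T : ℝ} {u : Fin 2 → SF}

/-- A constant for the commuted nonlinearity. -/
def Cb : ℝ := 3 ^ 5 * 3 ^ 5 * 2 ^ 15
lemma Cb_pos : 0 < Cb := by unfold Cb; positivity

/-- The profile of a commuted solution. The commuted nonlinearity has no sign and is integrated as a
source; after multiplication by `r^{1/2}` it is of size `t^{|w|/200 - 1}`, whence the growth. -/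
lemma ray_V1 (hR : 1 ≤ R) (hu : Solves u) (hc : 0 ≤ c) (hC : CT R u c T)
    (hM : 0 ≤ M) (hB : MB u M T)
    (hab : a ^ 2 + b ^ 2 = 1) (ht : 0 ≤ t) (htT : t ≤ T) (hr : 1 + t ≤ 4 * (t + σ)) (hσ : σ ≤ R)
    (j : Fin 2) {w : List (Fin 7)} (hw : w.length ≤ 5) (hw1 : 1 ≤ w.length) :
    |prof (GW w (u j)) σ a b t| ≤ 66 * R * c +
      200 * R * Cb * M ^ 3 * (1 + t) ^ ((w.length : ℝ) / 200) := by
  have h0 := tin_nonneg σ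
  have h1 := tin_le ht hr
  have hreg : ∀ s, tin σ ≤ s → 0 < s + σ := fun s hs => by have := tin_reg hs; linarith
  have hm : ∀ s : ℝ, 0 ≤ s → 0 ≤ c * (1 + s) ^ (-(7 / 16) : ℝ) := fun s hs => by positivity
  have hw1' : (1 : ℝ) ≤ w.length := by exact_mod_cast hw1
  have H : ∀ s ∈ Set.Ioo (tin σ) t, ∃ e, HasDerivAt (prof (GW w (u j)) σ a b)
      (-(0 * prof (GW w (u j)) σ a b s) + e) s
      ∧ |e| ≤ 10 * R * c * (1 + s) ^ (-(23 / 16) : ℝ) +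
        R * Cb * M ^ 3 * (1 + s) ^ ((w.length : ℝ) / 200 - 1) := by
    intro s hs
    have hs0 : 0 < s := h0.trans_lt hs.1
    have hτ : 0 < 1 + s := by linarith
    have hr0 := hreg s hs.1.le
    refine ⟨_, (prof_deriv (GW w (u j)) hab hr0).congr_deriv (by rw [zero_mul, neg_zero, zero_add]), ?_⟩
    refine (abs_sub _ _).trans ?_
    rw [add_comm]
    refine add_le_add ((ang_err (hC s hs0.le (hs.2.le.trans htT)) (hm s hs0.le) hab hs0.le
      (tin_reg hs.1.le) hσ j hw).trans (ang_time hR hc hs0.le hr0.le)) ?_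
    rw [abs_neg, abs_mul, abs_of_nonneg (by positivity : 0 ≤ √(s + σ) / 2)]
    have b1 := MB.box hu hM hB hs0.le (hs.2.le.trans htT) ((s + σ) * a) ((s + σ) * b) j hw
    have b2 := sqrt_le_R hR hs0.le hσ
    have e : (1 + s) ^ ((w.length : ℝ) / 200 - 1) =
        √(1 + s) * (1 + s) ^ ((w.length : ℝ) / 200 - 3 / 2) := by
      rw [Real.sqrt_eq_rpow, ← Real.rpow_add hτ]; congr 1; ring
    calc √(s + σ) / 2 * |(Box (GW w (u j))).1 s ((s + σ) * a) ((s + σ) * b)|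
        ≤ (R * √(1 + s)) * (Cb * M ^ 3 * (1 + s) ^ ((w.length : ℝ) / 200 - 3 / 2)) := by
          refine mul_le_mul ?_ b1 (abs_nonneg _) (by positivity)
          have : 0 ≤ √(s + σ) := Real.sqrt_nonneg _
          linarith
      _ = _ := by rw [e]; ring
  choose! e he1 he2 using H
  have := ray_bound h0 h1 (by positivity : 0 ≤ 10 * R * c)
    (by have := Cb_pos; positivity : 0 ≤ R * Cb * M ^ 3)
    (by positivity : 0 < (w.length : ℝ) / 200)
    (fun s hs => (prof_cont (GW w (u j)) hab (hreg s hs.1)).continuousWithinAt) he1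
    (fun s hs => le_rfl) he2
  have h2 := prof_tin (w := w) hR (hC _ h0 (h1.trans htT)) (hm _ h0) hab hσ j (by omega)
  have h3 : c * (1 + tin σ) ^ (-(7 / 16) : ℝ) ≤ c := mul_le_of_le_one_right hc
    (Real.rpow_le_one_of_one_le_of_nonpos (by linarith) (by norm_num))
  have h4 := mul_le_mul_of_nonneg_left h3 (by linarith : 0 ≤ 6 * R)
  have h5 : R * Cb * M ^ 3 * (1 + t) ^ ((w.length : ℝ) / 200) / ((w.length : ℝ) / 200) ≤
      200 * R * Cb * M ^ 3 * (1 + t) ^ ((w.length : ℝ) / 200) := by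
    rw [div_le_iff₀ (by positivity)]
    have : 0 ≤ R * Cb * M ^ 3 * (1 + t) ^ ((w.length : ℝ) / 200) := by
      have := Cb_pos
      have := Real.rpow_nonneg (by linarith : 0 ≤ 1 + t) ((w.length : ℝ) / 200)
      positivity
    nlinarith
  nlinarith [mul_nonneg (by linarith : 0 ≤ R) hc]

/-- `ray_V0` and `ray_V1` together. -/
lemma ray_V (hR : 1 ≤ R) (hu : Solves u) (hc : 0 ≤ c) (hc1 : c ≤ 1) (hC : CT R u c T)
    (hM : 0 ≤ M) (hB : MB u M T)
    (hab : a ^ 2 + b ^ 2 = 1) (ht : 0 ≤ t) (htT : t ≤ T) (hr : 1 + t ≤ 4 * (t + σ)) (hσ : σ ≤ R)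
    (j : Fin 2) {w : List (Fin 7)} (hw : w.length ≤ 5) :
    |prof (GW w (u j)) σ a b t| ≤ 66 * R * c +
      200 * R * Cb * M ^ 3 * (1 + t) ^ ((w.length : ℝ) / 200) := by
  rcases Nat.eq_zero_or_pos w.length with h | h
  · rw [List.length_eq_zero_iff] at h
    subst h
    refine (ray_V0 hR hu hc hc1 hC hab ht htT hr hσ j).trans ?_
    have := Cb_pos
    have := Real.rpow_nonneg (by linarith : 0 ≤ 1 + t) ((([] : List (Fin 7)).length : ℝ) / 200)
    have : 0 ≤ 200 * R * Cb * M ^ 3 * (1 + t) ^ ((([] : List (Fin 7)).length : ℝ) / 200) := by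
      positivity
    linarith
  · exact ray_V1 hR hu hc hC hM hB hab ht htT hr hσ j hw h

lemma hat_le (hab : a ^ 2 + b ^ 2 = 1) (i : Fin 3) : |hat a b i| ≤ 1 := by
  have ha : |a| ≤ 1 := abs_le_one_iff_mul_self_le_one.2 (by nlinarith [sq_nonneg b])
  have hb : |b| ≤ 1 := abs_le_one_iff_mul_self_le_one.2 (by nlinarith [sq_nonneg a])
  fin_cases i
  · simp [hat]
  · simpa [hat] using ha
  · simpa [hat] using hb

/-- Sharp decay of the gradient in the region `1 + t ≤ 4r`. -/
lemma M_outer (hR : 1 ≤ R) (hu : Solves u) (hc : 0 ≤ c) (hc1 : c ≤ 1) (hC : CT R u c T)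
    (hM : 0 ≤ M) (hB : MB u M T)
    (hab : a ^ 2 + b ^ 2 = 1) (ht : 0 ≤ t) (htT : t ≤ T) (hr : 1 + t ≤ 4 * (t + σ)) (hσ : σ ≤ R)
    (j : Fin 2) {w : List (Fin 7)} (hw : w.length ≤ 5) (i : Fin 3) :
    |(Dd i (GW w (u j))).1 t ((t + σ) * a) ((t + σ) * b)| ≤
      (172 * R * c + 400 * R * Cb * M ^ 3) * (1 + t) ^ ((w.length : ℝ) / 200 - 1 / 2) := by
  have hτ : 0 < 1 + t := by linarith
  have hr0 : 0 < t + σ := by linarith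
  have hrs : 0 < √(t + σ) := Real.sqrt_pos.2 hr0
  have hτs : 0 < √(1 + t) := Real.sqrt_pos.2 hτ
  have hτq : √(1 + t) * √(1 + t) = 1 + t := Real.mul_self_sqrt hτ.le
  have hs := sqrt_quarter hτ.le hr
  set X := (1 + t) ^ ((w.length : ℝ) / 200) with hX
  have hX1 : 1 ≤ X := Real.one_le_rpow (by linarith) (by positivity)
  have e : (1 + t) ^ ((w.length : ℝ) / 200 - 1 / 2) = X / √(1 + t) := by
    rw [Real.rpow_sub hτ, Real.sqrt_eq_rpow]
  rw [e]
  have hV := ray_V hR hu hc hc1 hC hM hB hab ht htT hr hσ j hw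
  rw [← hX] at hV
  have hCt := hC t ht htT
  have hm0 : 0 ≤ c * (1 + t) ^ (-(7 / 16) : ℝ) := by positivity
  have hG := grad_err hCt hm0 hab ht hr hσ j hw i
  have hm1 : c * (1 + t) ^ (-(7 / 16) : ℝ) ≤ c := mul_le_of_le_one_right hc
    (Real.rpow_le_one_of_one_le_of_nonpos (by linarith) (by norm_num))
  have hP := sqrt_p_le hR ht hr0.le
  have h1 : 20 * (c * (1 + t) ^ (-(7 / 16) : ℝ) * √(R + 1 - σ)) / (1 + t) ≤ 40 * R * c / √(1 + t) := by
    rw [div_le_div_iff₀ hτ hτs]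
    have := mul_le_mul hm1 hP (Real.sqrt_nonneg _) hc
    calc 20 * (c * (1 + t) ^ (-(7 / 16) : ℝ) * √(R + 1 - σ)) * √(1 + t)
        ≤ 20 * (c * (2 * R * √(1 + t))) * √(1 + t) := by gcongr
      _ = 40 * R * c * (√(1 + t) * √(1 + t)) := by ring
      _ = _ := by rw [hτq]
  have h2 : |hat a b i * (prof (GW w (u j)) σ a b t / √(t + σ))| ≤
      2 * (66 * R * c + 200 * R * Cb * M ^ 3 * X) / √(1 + t) := by
    rw [abs_mul, abs_div, abs_of_pos hrs]
    refine (mul_le_of_le_one_left (by positivity) (hat_le hab i)).trans ?_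
    rw [div_le_div_iff₀ hrs hτs]
    have := mul_le_mul hV hs hτs.le ((abs_nonneg _).trans hV)
    linarith
  have h3 : |(Dd i (GW w (u j))).1 t ((t + σ) * a) ((t + σ) * b)| ≤
      40 * R * c / √(1 + t) + 2 * (66 * R * c + 200 * R * Cb * M ^ 3 * X) / √(1 + t) := by
    have := abs_sub_abs_le_abs_sub ((Dd i (GW w (u j))).1 t ((t + σ) * a) ((t + σ) * b))
      (hat a b i * (prof (GW w (u j)) σ a b t / √(t + σ)))
    linarith
  refine h3.trans ?_
  rw [← add_div, ← mul_div_assoc]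
  gcongr
  have : 0 ≤ 172 * R * c := by positivity
  nlinarith

/-- Closing the pointwise part of the bootstrap. -/
lemma M_close (hR : 1 ≤ R) (hu : Solves u) (hS : ∀ j, Supp R (u j)) (hc : 0 ≤ c) (hc1 : c ≤ 1)
    (hC : CT R u c T) (hM : 0 ≤ M) (hB : MB u M T) :
    MB u (172 * R * c + 400 * R * Cb * M ^ 3) T := by
  intro t ht htT j w hw i x y
  have hCb := Cb_pos
  have hR0 : 0 < R := by linarith
  have hτ : 0 < 1 + t := by linarith
  rcases le_or_gt (radius x y) (t + R) with hx | hx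
  swap
  · rw [(((hS j).GW hR0 w).Dd hR0 i) t x y ht hx.le, abs_zero]; positivity
  rcases le_or_gt (1 + t) (4 * radius x y) with h4 | h4
  · obtain ⟨θ, _, ex, ey⟩ := exists_polar x y
    have hcs : cos θ ^ 2 + sin θ ^ 2 = 1 := by rw [add_comm]; exact sin_sq_add_cos_sq θ
    have e : radius x y = t + (radius x y - t) := by ring
    have := M_outer (σ := radius x y - t) hR hu hc hc1 hC hM hB hcs ht htT (by linarith)
      (by linarith) j hw i
    rwa [← e, ← ex, ← ey] at this
  -- For `4r < 1 + t` the weight `p` is at least `(1 + t)/4`, and crude decay is enough.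
  · have h1 := (hC t ht htT j w (by omega) x y hx).2 i
    refine h1.trans ?_
    have hp : (1 + t) * (1 / 4) ≤ t + R + 1 - radius x y := by linarith
    have hps : √(1 + t) / 2 ≤ √(t + R + 1 - radius x y) := by
      rw [show √(1 + t) / 2 = √((1 + t) * (1 / 4)) by
        rw [Real.sqrt_mul hτ.le, show (1 / 4 : ℝ) = (1 / 2) ^ 2 by norm_num,
          Real.sqrt_sq (by norm_num)]; ring]
      exact Real.sqrt_le_sqrt hp
    have hτs : 0 < √(1 + t) := Real.sqrt_pos.2 hτ
    have hm1 : c * (1 + t) ^ (-(7 / 16) : ℝ) ≤ c := mul_le_of_le_one_right hc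
      (Real.rpow_le_one_of_one_le_of_nonpos (by linarith) (by norm_num))
    have hX1 : 1 ≤ (1 + t) ^ ((w.length : ℝ) / 200) := Real.one_le_rpow (by linarith) (by positivity)
    have e : (1 + t) ^ ((w.length : ℝ) / 200 - 1 / 2) =
        (1 + t) ^ ((w.length : ℝ) / 200) / √(1 + t) := by
      rw [Real.rpow_sub hτ, Real.sqrt_eq_rpow]
    have h3 : 0 ≤ 400 * R * Cb * M ^ 3 := by positivity
    rw [e, ← mul_div_assoc, div_le_div_iff₀ (by linarith) hτs]
    calc c * (1 + t) ^ (-(7 / 16) : ℝ) * √(1 + t) ≤ c * √(1 + t) := by gcongr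
      _ = 2 * c * 1 * (√(1 + t) / 2) := by ring
      _ ≤ (172 * R * c + 400 * R * Cb * M ^ 3) * (1 + t) ^ ((w.length : ℝ) / 200) *
          √(t + R + 1 - radius x y) := by
        have : 2 * c ≤ 172 * R * c + 400 * R * Cb * M ^ 3 := by nlinarith
        gcongr

end mclose

end SF

/-! ### Energy estimates -/

namespace SF

section eclose
variable {R A M E t T : ℝ} {u : Fin 2 → SF}

lemma Supp.en (hR : 0 < R) {f : SF} (hf : Supp R f) : Supp R (en f) :=
  ((((hf.Dd hR 0).pow two_ne_zero).add ((hf.Dd hR 1).pow two_ne_zero)).add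
    ((hf.Dd hR 2).pow two_ne_zero)).smul _

lemma I_sum {ι : Type*} (S : Finset ι) {F : ι → SF} (h : ∀ i ∈ S, Supp R (F i)) (ht : 0 ≤ t) :
    I (∑ i ∈ S, F i) t = ∑ i ∈ S, I (F i) t := by
  unfold I
  simp only [sum_app]
  exact integral_finsetSum _ fun i hi => (h i hi).integrable ht

/-- Energy identity: the time derivative of the energy is `∫ ∂ₜf □f`. -/
lemma en_hasDerivAt (hR : 0 < R) {f : SF} (hf : Supp R f) (ht : 0 < t) :
    HasDerivAt (I (en f)) (I (Dd 0 f * Box f) t) t := by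
  refine (I_hasDerivAt hR (hf.en hR) ht).congr_deriv ?_
  have h := energy_identity 1 f
  simp only [one_mul, Derivation.map_one_eq_zero, zero_mul, mul_zero, add_zero, zero_add,
    sub_zero] at h
  rw [h]
  have s1 : Supp R (Dd 0 f * Dd 1 f) := (hf.Dd hR 1).mul_left _
  have s2 : Supp R (Dd 0 f * Dd 2 f) := (hf.Dd hR 2).mul_left _
  have s3 : Supp R (Dd 0 f * Box f) := (hf.box hR).mul_left _
  rw [I_add ((s1.Dd hR 1).add (s2.Dd hR 2)) s3 ht.le, I_add (s1.Dd hR 1) (s2.Dd hR 2) ht.le,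
    I_D1 hR s1 ht.le, I_D2 hR s2 ht.le]
  ring

/-- The index set of all commuted gradient components. -/
def Ix : Finset (Fin 2 × List (Fin 7) × Fin 3) :=
  Finset.univ ×ˢ (Wd 10 ×ˢ Finset.univ)

lemma mem_Ix {q : Fin 2 × List (Fin 7) × Fin 3} : q ∈ Ix ↔ q.2.1.length ≤ 10 := by
  simp [Ix, mem_Wd]

/-- The weighted sum of squares of the commuted gradient. -/
def Zf (u : Fin 2 → SF) (τ : ℝ) : SF :=
  ∑ q ∈ Ix, (τ ^ (-((q.2.1.length : ℝ) / 100))) • (Dd q.2.2 (GW q.2.1 (u q.1))) ^ 2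

/-- A constant for the energy estimate. -/
def Ce : ℝ := 3 ^ 10 * (3 ^ 10 * (2 ^ 10) ^ 2 * 2 ^ 10)
lemma Ce_pos : 0 < Ce := by unfold Ce; positivity

lemma Zf_app (τ x y : ℝ) : (Zf u τ).1 t x y = ∑ q ∈ Ix, τ ^ (-((q.2.1.length : ℝ) / 100)) *
      (Dd q.2.2 (GW q.2.1 (u q.1))).1 t x y ^ 2 := by
  rw [Zf, sum_app]; rfl

lemma Zf_nonneg {τ : ℝ} (hτ : 0 < τ) (x y : ℝ) : 0 ≤ (Zf u τ).1 t x y := by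
  rw [Zf_app]; exact Finset.sum_nonneg fun q _ => by positivity

lemma le_Zf {τ : ℝ} (hτ : 0 < τ) (x y : ℝ) {q : Fin 2 × List (Fin 7) × Fin 3} (hq : q ∈ Ix) :
    τ ^ (-((q.2.1.length : ℝ) / 100)) * (Dd q.2.2 (GW q.2.1 (u q.1))).1 t x y ^ 2 ≤
      (Zf u τ).1 t x y := by
  rw [Zf_app]
  exact Finset.single_le_sum (f := fun q : Fin 2 × List (Fin 7) × Fin 3 =>
        τ ^ (-((q.2.1.length : ℝ) / 100)) * (Dd q.2.2 (GW q.2.1 (u q.1))).1 t x y ^ 2)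
        (fun q _ => by positivity) hq

/-- The source of the energy identity. Sharp decay bounds two factors by `M² (1+t)^{-1}`; the losses
`t^{1/200}` per field match the weights of `Zf`. -/
lemma en_source (hu : Solves u) (ht : 0 ≤ t) (htT : t ≤ T) (hM : 0 ≤ M) (hB : MB u M T)
    (j : Fin 2) {w : List (Fin 7)} (hw : w.length ≤ 10) (x y : ℝ) :
    (Dd 0 (GW w (u j)) * Box (GW w (u j))).1 t x y ≤
      ((Ce * M ^ 2 * (1 + t)⁻¹) • (Dd 0 (GW w (u j)) ^ 2 +
        ((1 + t) ^ ((w.length : ℝ) / 100)) • Zf u (1 + t))).1 t x y := by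
  have hτ : 0 < 1 + t := by linarith
  set θ := (1 + t) ^ ((1 : ℝ) / 200) with hθ
  have hθ1 : 1 ≤ θ := Real.one_le_rpow (by linarith) (by norm_num)
  have hθ0 : 0 < θ := by linarith
  have hpow : ∀ n : ℕ, θ ^ n = (1 + t) ^ ((n : ℝ) / 200) := fun n => by
    rw [hθ, ← Real.rpow_mul_natCast hτ.le]; congr 1; ring
  have hpow2 : ∀ n : ℕ, (θ ^ n) ^ 2 = (1 + t) ^ ((n : ℝ) / 100) := fun n => by
    rw [hpow, ← Real.rpow_mul_natCast hτ.le]; congr 1; push_cast; ring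
  obtain ⟨Y2, hY2⟩ : ∃ Y2, (Zf u (1 + t)).1 t x y = Y2 := ⟨_, rfl⟩
  have hY0 : 0 ≤ Y2 := hY2 ▸ Zf_nonneg hτ x y
  have h2 : ∀ j (w : List (Fin 7)), w.length ≤ 10 → ∀ a,
      |(Dd a (GW w (u j))).1 t x y| ≤ √Y2 * θ ^ w.length := by
    intro j w hw a
    have h3 : (1 + t) ^ (-((w.length : ℝ) / 100)) * (Dd a (GW w (u j))).1 t x y ^ 2 ≤ Y2 := by
      have hq : ((j, w, a) : Fin 2 × List (Fin 7) × Fin 3) ∈ Ix := mem_Ix.2 hw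
      rw [← hY2]
      exact le_Zf (q := (j, w, a)) hτ x y hq
    refine abs_le_of_sq_le_sq' ?_ (by positivity) |>.2
    rw [sq_abs, mul_pow, Real.sq_sqrt hY0, hpow2]
    rw [Real.rpow_neg hτ.le, inv_mul_le_iff₀ (by positivity)] at h3
    linarith
  have h1 : ∀ j (w : List (Fin 7)), w.length ≤ 5 → ∀ a, |(Dd a (GW w (u j))).1 t x y| ≤
      (M * (1 + t) ^ (-(1 / 2) : ℝ)) * θ ^ w.length := by
    intro j w hw a
    refine (hB t ht htT j w hw a x y).trans (le_of_eq ?_)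
    rw [hpow, mul_assoc, ← Real.rpow_add hτ]
    congr 2; ring
  have hbox := hu.box_le (K := 5) (N := 10) (by norm_num) ht (by positivity) (Real.sqrt_nonneg Y2)
    hθ1 h1 h2 j w hw
  have hmm : ((1 + t) ^ (-(1 / 2) : ℝ)) ^ 2 = (1 + t)⁻¹ := by
    rw [← Real.rpow_mul_natCast hτ.le, ← Real.rpow_neg_one]; norm_num
  have hbox' : |(Box (GW w (u j))).1 t x y| ≤ Ce * M ^ 2 * (1 + t)⁻¹ * (√Y2 * θ ^ w.length) := by
    refine hbox.trans (le_of_eq ?_)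
    rw [← hmm, Ce]; ring
  simp only [smul_app, add_app, mul_app, pow_app, hY2]
  rw [← hpow2]
  set X := (Dd 0 (GW w (u j))).1 t x y
  have hK : 0 ≤ Ce * M ^ 2 * (1 + t)⁻¹ := by have := Ce_pos; positivity
  calc X * (Box (GW w (u j))).1 t x y ≤ |X| * |(Box (GW w (u j))).1 t x y| := by
        rw [← abs_mul]; exact le_abs_self _
    _ ≤ |X| * (Ce * M ^ 2 * (1 + t)⁻¹ * (√Y2 * θ ^ w.length)) := by gcongr
    _ = Ce * M ^ 2 * (1 + t)⁻¹ * (|X| * (√Y2 * θ ^ w.length)) := by ring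
    _ ≤ Ce * M ^ 2 * (1 + t)⁻¹ * (X ^ 2 + (θ ^ w.length) ^ 2 * Y2) := by
        refine mul_le_mul_of_nonneg_left ?_ hK
        have e : (θ ^ w.length) ^ 2 * Y2 = (√Y2 * θ ^ w.length) ^ 2 := by
          rw [mul_pow, Real.sq_sqrt hY0]; ring
        rw [e, ← sq_abs X]
        nlinarith [sq_nonneg (|X| - √Y2 * θ ^ w.length), sq_nonneg |X|,
          sq_nonneg (√Y2 * θ ^ w.length)]

/-- The energy of order `|w|` grows at most at the rate of its bootstrap bound. -/
lemma en_deriv_le (hR : 0 < R) (hu : Solves u) (hS : ∀ j, Supp R (u j)) (ht : 0 < t) (htT : t ≤ T)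
    (hE : EB u A T) (hM : 0 ≤ M) (hB : MB u M T)
    (j : Fin 2) {w : List (Fin 7)} (hw : w.length ≤ 10) :
    I (Dd 0 (GW w (u j)) * Box (GW w (u j))) t ≤
      (Ce * (1 + Ix.card) * M ^ 2 * A ^ 2) * (1 + t) ^ (((w.length : ℝ) + 1) / 100 - 1) := by
  have hτ : 0 < 1 + t := by linarith
  have sD : ∀ q : Fin 2 × List (Fin 7) × Fin 3, Supp R (Dd q.2.2 (GW q.2.1 (u q.1)) ^ 2) := fun q =>
    (((hS q.1).GW hR q.2.1).Dd hR q.2.2).pow two_ne_zero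
  have sZ : Supp R (Zf u (1 + t)) := Supp.sum _ fun q _ => (sD q).smul _
  have s0 : Supp R (Dd 0 (GW w (u j)) ^ 2) := sD (j, w, 0)
  have sL : Supp R (Dd 0 (GW w (u j)) * Box (GW w (u j))) := (((hS j).GW hR w).box hR).mul_left _
  refine (I_mono sL ((s0.add (sZ.smul _)).smul _) ht.le
    (fun x y => en_source hu ht.le htT hM hB j hw x y)).trans ?_
  rw [I_smul, I_add s0 (sZ.smul _) ht.le, I_smul]
  have hZ : I (Zf u (1 + t)) t ≤ Ix.card * (A ^ 2 * (1 + t) ^ ((1 : ℝ) / 100)) := by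
    unfold Zf
    rw [I_sum _ (fun q _ => (sD q).smul _) ht.le]
    refine (Finset.sum_le_card_nsmul _ _ _ fun q hq => ?_).trans (le_of_eq (nsmul_eq_mul _ _))
    rw [I_smul]
    have := hE t ht.le htT q.1 q.2.1 (mem_Ix.1 hq) q.2.2
    refine (mul_le_mul_of_nonneg_left this (by positivity)).trans (le_of_eq ?_)
    rw [mul_left_comm, ← Real.rpow_add hτ]
    congr 2; ring
  have h0 := hE t ht.le htT j w hw 0
  have e : (1 + t) ^ (((w.length : ℝ) + 1) / 100 - 1) =
      (1 + t)⁻¹ * (1 + t) ^ (((w.length : ℝ) + 1) / 100) := by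
    rw [Real.rpow_sub_one hτ.ne']; ring
  have e2 : (1 + t) ^ ((w.length : ℝ) / 100) * (1 + t) ^ ((1 : ℝ) / 100) =
      (1 + t) ^ (((w.length : ℝ) + 1) / 100) := by
    rw [← Real.rpow_add hτ]; congr 1; ring
  have hX : 0 ≤ (1 + t) ^ ((w.length : ℝ) / 100) := by positivity
  have h3 := mul_le_mul_of_nonneg_left hZ hX
  have hK : 0 ≤ Ce * M ^ 2 * (1 + t)⁻¹ := by have := Ce_pos; positivity
  calc _ ≤ Ce * M ^ 2 * (1 + t)⁻¹ * (A ^ 2 * (1 + t) ^ (((w.length : ℝ) + 1) / 100) +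
        (1 + t) ^ ((w.length : ℝ) / 100) * (Ix.card * (A ^ 2 * (1 + t) ^ ((1 : ℝ) / 100)))) :=
        mul_le_mul_of_nonneg_left (add_le_add h0 h3) hK
    _ = _ := by rw [e, ← e2]; ring

/-- Closing the energy part of the bootstrap. -/
lemma E_close (hR : 0 < R) (hu : Solves u) (hS : ∀ j, Supp R (u j))
    (hE : EB u A T) (hM : 0 ≤ M) (hB : MB u M T)
    (h0 : ∀ j (w : List (Fin 7)), w.length ≤ 10 → I (en (GW w (u j))) 0 ≤ E)
    (hE0 : 0 ≤ E) (ht : 0 ≤ t) (htT : t ≤ T)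
    (j : Fin 2) {w : List (Fin 7)} (hw : w.length ≤ 10) (a : Fin 3) :
    I (Dd a (GW w (u j)) ^ 2) t ≤ (2 * E + 200 * (Ce * (1 + Ix.card)) * M ^ 2 * A ^ 2) *
      (1 + t) ^ (((w.length : ℝ) + 1) / 100) := by
  set κ : ℝ := ((w.length : ℝ) + 1) / 100 with hκ
  set K : ℝ := Ce * (1 + Ix.card) * M ^ 2 * A ^ 2 with hK
  have hK0 : 0 ≤ K := by have := Ce_pos; positivity
  have hκ0 : 1 / 100 ≤ κ := by
    rw [hκ]; have : (0 : ℝ) ≤ w.length := by positivity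
    linarith
  have hκp : 0 < κ := by linarith
  have sf := (hS j).GW hR w
  have hg : ∀ s, 0 ≤ s → HasDerivAt (fun s : ℝ => K * (1 + s) ^ κ / κ) (K * (1 + s) ^ (κ - 1)) s := by
    intro s hs
    have h1 : HasDerivAt (fun t : ℝ => 1 + t) 1 s := (hasDerivAt_id s).const_add 1
    refine (((h1.rpow_const (p := κ) (Or.inl (by linarith))).const_mul K).div_const κ).congr_deriv ?_
    field_simp
  have key := growth ht (I_continuousOn (sf.en hR) t)
    (fun s hs => (hg s hs.1).continuousAt.continuousWithinAt)
    (fun s hs => en_hasDerivAt hR sf hs.1) (fun s hs => hg s hs.1.le)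
    (fun s hs => en_deriv_le hR hu hS hs.1 (hs.2.le.trans htT) hE hM hB j hw)
  have hX1 : 1 ≤ (1 + t) ^ κ := Real.one_le_rpow (by linarith) hκp.le
  have h1 : I (en (GW w (u j))) t ≤ E + 100 * K * (1 + t) ^ κ := by
    have := h0 j w hw
    have h2 : 0 ≤ K * (1 + 0) ^ κ / κ := by positivity
    have h3 : K * (1 + t) ^ κ / κ ≤ 100 * K * (1 + t) ^ κ := by
      rw [div_le_iff₀ hκp]
      have : 0 ≤ K * (1 + t) ^ κ := by positivity
      nlinarith
    linarith
  have h2 : I (Dd a (GW w (u j)) ^ 2) t ≤ I ((2 : ℝ) • en (GW w (u j))) t :=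
    I_mono ((sf.Dd hR a).pow two_ne_zero) ((sf.en hR).smul _) ht (fun x y => sq_le_en _ _ _ _ _)
  rw [I_smul] at h2
  calc _ ≤ 2 * (E + 100 * K * (1 + t) ^ κ) := by linarith
    _ ≤ (2 * E + 200 * K) * (1 + t) ^ κ := by nlinarith
    _ = _ := by rw [hK]; ring

end eclose

end SF

/-! ### The bootstrap -/

namespace SF

section boot
variable {R A M E t T : ℝ} {u : Fin 2 → SF}

/-- Continuous induction on `[0, ∞)`. -/
lemma cont_ind (P P' : ℝ → Prop) (h0 : P 0) (hcl : ∀ t, 0 < t → (∀ s ∈ Set.Ico 0 t, P s) → P t)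
    (himp : ∀ t, 0 ≤ t → (∀ s ∈ Set.Icc 0 t, P s) → P' t)
    (hop : ∀ t, 0 ≤ t → P' t → ∀ᶠ s in 𝓝[>] t, P s) : ∀ t, 0 ≤ t → P t := by
  by_contra hcon
  push Not at hcon
  obtain ⟨t1, ht1, hP1⟩ := hcon
  let B : Set ℝ := {t | 0 ≤ t ∧ ¬ P t}
  have hne : B.Nonempty := ⟨t1, ht1, hP1⟩
  have hbd : BddBelow B := ⟨0, fun t ht => ht.1⟩
  set b := sInf B with hb
  have hb0 : 0 ≤ b := le_csInf hne fun t ht => ht.1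
  have hlt : ∀ s ∈ Set.Ico 0 b, P s := by
    intro s hs
    by_contra h
    exact absurd (csInf_le hbd (show s ∈ B from ⟨hs.1, h⟩)) (not_le.2 hs.2)
  have hPb : P b := by
    rcases hb0.eq_or_lt with h | h
    · rw [← h]; exact h0
    · exact hcl b h hlt
  have hle : ∀ s ∈ Set.Icc 0 b, P s := by
    intro s hs
    rcases hs.2.eq_or_lt with h | h
    · rw [h]; exact hPb
    · exact hlt s ⟨hs.1, h⟩
  obtain ⟨c, hc, hcP⟩ := mem_nhdsGT_iff_exists_Ioo_subset.1 (hop b hb0 (himp b hb0 hle))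
  obtain ⟨t2, ht2, ht2c⟩ := exists_lt_of_csInf_lt hne (show sInf B < c from hc)
  refine ht2.2 ?_
  rcases lt_or_ge b t2 with h | h
  · exact hcP ⟨h, ht2c⟩
  · exact hle t2 ⟨ht2.1, h⟩

/-- The energy bound at a single time, with squared constant `K`. -/
def Ept (u : Fin 2 → SF) (K t : ℝ) : Prop :=
  ∀ j (w : List (Fin 7)), w.length ≤ 10 → ∀ a,
    I (Dd a (GW w (u j)) ^ 2) t ≤ K * (1 + t) ^ (((w.length : ℝ) + 1) / 100)

/-- The pointwise bound at a single time. -/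
def Mpt (u : Fin 2 → SF) (m t : ℝ) : Prop :=
  ∀ j (w : List (Fin 7)), w.length ≤ 5 → ∀ a x y,
    |(Dd a (GW w (u j))).1 t x y| ≤ m * (1 + t) ^ ((w.length : ℝ) / 200 - 1 / 2)

lemma rp_cont {k : ℝ} (K : ℝ) : ContinuousOn (fun t : ℝ => K * (1 + t) ^ k) (Set.Ici 0) :=
  ContinuousOn.mul continuousOn_const <| ContinuousOn.rpow_const (by fun_prop)
    fun t (ht : 0 ≤ t) => Or.inl (by linarith)

lemma le_closed {F G : ℝ → ℝ} (ht : 0 < t) (hF : ContinuousOn F (Set.Icc 0 t))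
    (hG : ContinuousOn G (Set.Icc 0 t)) (h : ∀ s ∈ Set.Ico 0 t, F s ≤ G s) : F t ≤ G t := by
  have hc : t ∈ closure (Set.Ico 0 t) := by
    rw [closure_Ico ht.ne]; exact ⟨ht.le, le_rfl⟩
  exact ContinuousWithinAt.closure_le hc ((hF t ⟨ht.le, le_rfl⟩).mono Set.Ico_subset_Icc_self)
    ((hG t ⟨ht.le, le_rfl⟩).mono Set.Ico_subset_Icc_self) h

lemma Ept_closed (hR : 0 < R) (hS : ∀ j, Supp R (u j)) {K : ℝ} (ht : 0 < t)
    (h : ∀ s ∈ Set.Ico 0 t, Ept u K s) : Ept u K t := by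
  intro j w hw a
  refine le_closed ht (I_continuousOn ((((hS j).GW hR w).Dd hR a).pow two_ne_zero) t)
    ((rp_cont K).mono Set.Icc_subset_Ici_self) fun s hs => h s hs j w hw a

lemma Mpt_closed {m : ℝ} (ht : 0 < t)
    (h : ∀ s ∈ Set.Ico 0 t, Mpt u m s) : Mpt u m t := by
  intro j w hw a x y
  have hc : Continuous fun s => (Dd a (GW w (u j))).1 s x y :=
    (Dd a (GW w (u j))).cont.comp (f := fun s : ℝ => (s, x, y)) (by fun_prop)
  exact le_closed ht hc.abs.continuousOn ((rp_cont m).mono Set.Icc_subset_Ici_self)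
    fun s hs => h s hs j w hw a x y

/-- A strict energy bound persists for a short time, by continuity. -/
lemma Ept_open (hR : 0 < R) (hS : ∀ j, Supp R (u j)) {K K' : ℝ} (hK : K' < K) (ht : 0 ≤ t)
    (h : Ept u K' t) : ∀ᶠ s in 𝓝[>] t, Ept u K s := by
  have h1 : ∀ᶠ s in 𝓝[>] t, ∀ q ∈ Ix,
      I (Dd q.2.2 (GW q.2.1 (u q.1)) ^ 2) s ≤ K * (1 + s) ^ (((q.2.1.length : ℝ) + 1) / 100) := by
    rw [Filter.eventually_all_finset]
    rintro ⟨j, w, a⟩ hq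
    have hτ : 0 < 1 + t := by linarith
    have hlt : I (Dd a (GW w (u j)) ^ 2) t < K * (1 + t) ^ (((w.length : ℝ) + 1) / 100) :=
      (h j w (mem_Ix.1 hq) a).trans_lt (by gcongr)
    have hm : t ∈ Set.Icc 0 (t + 1) := ⟨ht, by linarith⟩
    have c1 := I_continuousOn ((((hS j).GW hR w).Dd hR a).pow two_ne_zero) (t + 1) t hm
    have c2 := ((rp_cont (k := ((w.length : ℝ) + 1) / 100) K).mono
      (Set.Icc_subset_Ici_self : Set.Icc 0 (t + 1) ⊆ Set.Ici 0)) t hm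
    have c3 := (c1.eventually_lt c2 hlt)
    have hle : 𝓝[>] t ≤ 𝓝[Set.Icc 0 (t + 1)] t := by
      refine nhdsWithin_le_of_mem ?_
      refine mem_of_superset (Ioo_mem_nhdsGT (show t < t + 1 by linarith)) ?_
      intro s hs; exact ⟨ht.trans hs.1.le, hs.2.le⟩
    filter_upwards [hle c3] with s hs using hs.le
  filter_upwards [h1] with s hs j w hw a
  exact hs (j, w, a) (mem_Ix.2 hw)

/-- A strict pointwise bound persists for a short time, as the supports stay in a compact set. -/
lemma Mpt_open (hR : 0 < R) (hS : ∀ j, Supp R (u j)) {m m' : ℝ} (hm0 : 0 ≤ m) (hm : m' < m)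
    (ht : 0 ≤ t) (h : Mpt u m' t) : ∀ᶠ s in 𝓝[>] t, Mpt u m s := by
  have hτ : 0 < 1 + t := by linarith
  have h1 : ∀ᶠ s in 𝓝 t, ∀ q ∈ (Finset.univ ×ˢ (Wd 5 ×ˢ Finset.univ) :
      Finset (Fin 2 × List (Fin 7) × Fin 3)), ∀ z ∈ sq (t + 1 + R),
      |(Dd q.2.2 (GW q.2.1 (u q.1))).1 s z.1 z.2| < m * (1 + s) ^ ((q.2.1.length : ℝ) / 200 - 1 / 2)
      := by
    rw [Filter.eventually_all_finset]
    rintro ⟨j, w, a⟩ hq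
    have hw : w.length ≤ 5 := by simpa [mem_Wd] using hq
    refine (sq_compact _).eventually_forall_of_forall_eventually fun z hz => ?_
    have hlt : |(Dd a (GW w (u j))).1 t z.1 z.2| < m * (1 + t) ^ ((w.length : ℝ) / 200 - 1 / 2) :=
      (h j w hw a _ _).trans_lt (by gcongr)
    have c1 : ContinuousAt (fun p : ℝ × ℝ × ℝ => |(Dd a (GW w (u j))).1 p.1 p.2.1 p.2.2|) (t, z) :=
      ((Dd a (GW w (u j))).cont.comp (f := fun p : ℝ × ℝ × ℝ => (p.1, p.2.1, p.2.2))
        (by fun_prop)).abs.continuousAt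
    have c2 : ContinuousAt (fun p : ℝ × ℝ × ℝ => m * (1 + p.1) ^ ((w.length : ℝ) / 200 - 1 / 2))
        (t, z) :=
      continuousAt_const.mul (ContinuousAt.rpow_const (by fun_prop) (Or.inl hτ.ne'))
    exact c1.eventually_lt c2 hlt
  filter_upwards [nhdsWithin_le_nhds h1, Ioo_mem_nhdsGT (show t < t + 1 by linarith)]
    with s hs hst j w hw a x y
  have hs0 : 0 < s := ht.trans_lt hst.1
  have hτs : 0 < 1 + s := by linarith
  by_cases hz : ((x, y) : ℝ × ℝ) ∈ sq (t + 1 + R)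
  · exact (hs (j, w, a) (by simpa [mem_Wd] using hw) _ hz).le
  · have := notMem_sq hz
    rw [(((hS j).GW hR w).Dd hR a) s x y hs0.le (by simp only at this; linarith [hst.2])]
    simp only [abs_zero]; positivity

/-- At the initial time the pointwise bound follows from crude decay, as `p ≥ 1` on the support. -/
lemma Mpt_zero (hR : 1 ≤ R) (hS : ∀ j, Supp R (u j)) {m : ℝ} (hm : 0 ≤ m) (h : CB R u m 0) :
    Mpt u m 0 := by
  intro j w hw a x y
  simp only [add_zero, Real.one_rpow, mul_one]
  rcases le_total (radius x y) R with hr | hr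
  · refine ((h j w (by omega) x y (by linarith)).2 a).trans ?_
    refine div_le_self hm ?_
    rw [Real.one_le_sqrt]; linarith
  · rw [(((hS j).GW (by linarith) w).Dd (by linarith) a) 0 x y le_rfl (by linarith), abs_zero]
    exact hm

/-- Global a priori bounds for small energy. -/
theorem bootstrap (hR : 1 ≤ R) : ∃ e0 > 0, ∀ e, 0 < e → e ≤ e0 → ∀ u : Fin 2 → SF, Solves u →
    (∀ j, Supp R (u j)) →
    (∀ j (w : List (Fin 7)), w.length ≤ 10 → I (en (GW w (u j))) 0 ≤ e ^ 2) →
    ∃ A M c, 0 ≤ A ∧ 0 ≤ M ∧ 0 ≤ c ∧ c ≤ 1 ∧ ∀ T, EB u A T ∧ MB u M T ∧ CT R u c T := by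
  obtain ⟨C1, hC1, hcr⟩ := crude hR
  have hR0 : 0 < R := by linarith
  have hCe := Ce_pos
  have hCb := Cb_pos
  -- The constants are `A = 3e`, `c = 3 C₁ e` and `M = 344 R c`, so that the linear term `172 R c` in
  -- `M_close` is `M / 2`. As soon as `Q M² < 1/2`, both bounds improve strictly.
  set Q := 400 * R * Cb + 200 * (Ce * (1 + Ix.card)) with hQ
  have hQ0 : 0 ≤ 200 * (Ce * (1 + (Ix.card : ℝ))) := by positivity
  have hQ1 : 0 ≤ 400 * R * Cb := by positivity
  set k := 1032 * R * C1 with hk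
  have hk0 : 0 < k := by positivity
  have hden : 0 < 3 * C1 + k * (2 * Q + 2) := by
    have : 0 ≤ k * (2 * Q + 2) := mul_nonneg hk0.le (by linarith)
    linarith
  refine ⟨1 / (3 * C1 + k * (2 * Q + 2)), by positivity, ?_⟩
  intro e he hee u hu hS hI
  rw [le_div_iff₀ hden] at hee
  have hke : 0 ≤ e * (k * (2 * Q + 2)) := mul_nonneg he.le (mul_nonneg hk0.le (by linarith))
  have hc1 : C1 * (3 * e) ≤ 1 := by nlinarith
  have hc0 : 0 ≤ C1 * (3 * e) := by positivity
  set c := C1 * (3 * e) with hc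
  set M := k * e with hM
  have hM0 : 0 < M := by positivity
  have hMc : M = 344 * R * c := by rw [hM, hk, hc]; ring
  have hMQ : M * (2 * Q + 2) ≤ 1 := by
    have : 0 < e * (3 * C1) := by positivity
    have e1 : M * (2 * Q + 2) = e * (k * (2 * Q + 2)) := by rw [hM]; ring
    linarith
  have hM1 : M ≤ 1 := by nlinarith
  have hQM : Q * M ^ 2 < 1 / 2 := by
    have h1 : Q * M ^ 2 ≤ Q * M := by
      refine mul_le_mul_of_nonneg_left ?_ (by linarith)
      nlinarith
    linarith
  have hQM1 : 200 * (Ce * (1 + (Ix.card : ℝ))) * M ^ 2 < 1 / 2 := by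
    have : 0 ≤ 400 * R * Cb * M ^ 2 := by positivity
    have e1 : Q * M ^ 2 = 400 * R * Cb * M ^ 2 + 200 * (Ce * (1 + (Ix.card : ℝ))) * M ^ 2 := by
      rw [hQ]; ring
    linarith
  have hQM2 : 400 * R * Cb * M ^ 2 < 1 / 2 := by
    have : 0 ≤ 200 * (Ce * (1 + (Ix.card : ℝ))) * M ^ 2 := by positivity
    have e1 : Q * M ^ 2 = 400 * R * Cb * M ^ 2 + 200 * (Ce * (1 + (Ix.card : ℝ))) * M ^ 2 := by
      rw [hQ]; ring
    linarith
  have hm : 172 * R * c + 400 * R * Cb * M ^ 3 < M := by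
    have e1 : 172 * R * c = M / 2 := by rw [hMc]; ring
    have e2 : 400 * R * Cb * M ^ 3 = (400 * R * Cb * M ^ 2) * M := by ring
    rw [e1, e2]
    nlinarith
  have hK : 2 * e ^ 2 + 200 * (Ce * (1 + (Ix.card : ℝ))) * M ^ 2 * (3 * e) ^ 2 < (3 * e) ^ 2 := by
    have : 0 < e ^ 2 := by positivity
    nlinarith
  have hA0 : 0 ≤ 3 * e := by positivity
  have hCT : ∀ T, EB u (3 * e) T → CT R u c T := fun T hE t ht htT =>
    hcr u hS (3 * e) T hA0 hE t ht htT
  have hE0 : Ept u ((3 * e) ^ 2) 0 := by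
    intro j w hw a
    have sf := (hS j).GW hR0 w
    have h2 : I (Dd a (GW w (u j)) ^ 2) 0 ≤ I ((2 : ℝ) • en (GW w (u j))) 0 :=
      I_mono ((sf.Dd hR0 a).pow two_ne_zero) ((sf.en hR0).smul _) le_rfl
        (fun x y => sq_le_en _ _ _ _ _)
    rw [I_smul] at h2
    have := hI j w hw
    simp only [add_zero, Real.one_rpow, mul_one]
    nlinarith [sq_nonneg e]
  have main : ∀ t, 0 ≤ t → Ept u ((3 * e) ^ 2) t ∧ Mpt u M t := by
    refine cont_ind (fun t => Ept u ((3 * e) ^ 2) t ∧ Mpt u M t)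
      (fun t => Ept u (2 * e ^ 2 + 200 * (Ce * (1 + (Ix.card : ℝ))) * M ^ 2 * (3 * e) ^ 2) t ∧
        Mpt u (172 * R * c + 400 * R * Cb * M ^ 3) t) ?_ ?_ ?_ ?_
    · refine ⟨hE0, ?_⟩
      have hEB0 : EB u (3 * e) 0 := by
        intro t ht ht0
        obtain rfl : t = 0 := le_antisymm ht0 ht
        exact hE0
      have := hCT 0 hEB0 0 le_rfl le_rfl
      simp only [add_zero, Real.one_rpow, mul_one] at this
      have h2 := Mpt_zero hR hS hc0 this
      intro j w hw a x y
      refine (h2 j w hw a x y).trans ?_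
      simp only [add_zero, Real.one_rpow, mul_one]
      rw [hMc]; nlinarith
    · intro t ht h
      exact ⟨Ept_closed hR0 hS ht fun s hs => (h s hs).1, Mpt_closed ht fun s hs => (h s hs).2⟩
    · intro t ht h
      have hE : EB u (3 * e) t := fun s hs hst => (h s ⟨hs, hst⟩).1
      have hB : MB u M t := fun s hs hst => (h s ⟨hs, hst⟩).2
      refine ⟨fun j w hw a => ?_, ?_⟩
      · exact E_close hR0 hu hS hE hM0.le hB hI (by positivity) ht le_rfl j hw a
      · exact M_close hR hu hS hc0 hc1 (hCT t hE) hM0.le hB t ht le_rfl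
    · intro t ht h
      filter_upwards [Ept_open hR0 hS hK ht h.1, Mpt_open hR0 hS hM0.le hm ht h.2] with s h1 h2
      exact ⟨h1, h2⟩
  refine ⟨3 * e, M, c, hA0, hM0.le, hc0, hc1, fun T => ?_⟩
  have hE : EB u (3 * e) T := fun s hs hst => (main s hs).1
  exact ⟨hE, fun s hs hst => (main s hs).2, hCT T hE⟩

end boot

end SF

/-! ### Energies at the initial time -/

namespace SF

section initial

/-- Iterated coordinate derivatives along a word; the head is applied first. -/
def DW : List (Fin 3) → SF → SF
  | [], f => f
  | a :: d, f => DW d (Dd a f)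

@[simp] lemma DW_nil (f : SF) : DW [] f = f := rfl
@[simp] lemma DW_cons (a : Fin 3) (d : List (Fin 3)) (f : SF) : DW (a :: d) f = DW d (Dd a f) := rfl

lemma DW_add (d : List (Fin 3)) (f g : SF) : DW d (f + g) = DW d f + DW d g := by
  induction d generalizing f g with
  | nil => rfl
  | cons a d ih => simp [ih]

lemma DW_smul (d : List (Fin 3)) (c : ℝ) (f : SF) : DW d (c • f) = c • DW d f := by
  induction d generalizing f with
  | nil => rfl
  | cons a d ih => simp [ih]

lemma DW_perm {d d' : List (Fin 3)} (h : d.Perm d') : ∀ f, DW d f = DW d' f := by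
  induction h with
  | nil => intro f; rfl
  | cons a _ ih => intro f; exact ih _
  | swap a b d => intro f; simp only [DW_cons]; rw [Dd_comm]
  | trans _ _ ih1 ih2 => intro f; rw [ih1, ih2]

lemma EqPos.DW (d : List (Fin 3)) : ∀ {f g : SF}, EqPos f g → EqPos (DW d f) (DW d g) := by
  induction d with
  | nil => intro f g h; exact h
  | cons a d ih => intro f g h; exact ih (h.Dd a)

/-- Spatial derivatives at the initial time only depend on the initial value. -/
lemma DW_initial (d : List (Fin 3)) : ∀ {f g : SF}, (0 : Fin 3) ∉ d →
    (∀ x y, f.1 0 x y = g.1 0 x y) → ∀ x y, (DW d f).1 0 x y = (DW d g).1 0 x y := by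
  induction d with
  | nil => intro f g _ h; exact h
  | cons a d ih =>
    intro f g ha h
    simp only [List.mem_cons, not_or] at ha
    refine ih ha.2 fun x y => ?_
    obtain rfl | rfl : a = 1 ∨ a = 2 := by
      have := ha.1; fin_cases a <;> simp_all
    · refine Dd_unique1 _ _ _ _ ?_
      simp only [h]; exact hasDerivAt_x g 0 x y
    · refine Dd_unique2 _ _ _ _ ?_
      simp only [h]; exact hasDerivAt_y g 0 x y

variable {ι : Type} {R : ℝ}

/-- A family of smooth functions whose derivatives with at most `m` time derivatives are
uniformly bounded on `{t = 0, |x| ≤ R}`. -/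
def Bd (R : ℝ) (m : ℕ) (F : ι → SF) : Prop :=
  ∀ d : List (Fin 3), d.count 0 ≤ m → ∃ C, ∀ i x y, radius x y ≤ R → |(DW d (F i)).1 0 x y| ≤ C

lemma Bd.mono {m n : ℕ} (h : n ≤ m) {F : ι → SF} (hF : Bd R m F) : Bd R n F :=
  fun d hd => hF d (hd.trans h)

lemma Bd.Dd {m n : ℕ} {F : ι → SF} (hF : Bd R m F) (a : Fin 3) (h : n + [a].count 0 ≤ m) :
    Bd R n (fun i => Dd a (F i)) := by
  intro d hd
  refine hF (a :: d) ?_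
  rw [show a :: d = [a] ++ d from rfl, List.count_append]; omega

lemma Bd.add {m : ℕ} {F H : ι → SF} (hF : Bd R m F) (hH : Bd R m H) :
    Bd R m (fun i => F i + H i) := by
  intro d hd
  obtain ⟨C, hC⟩ := hF d hd
  obtain ⟨C', hC'⟩ := hH d hd
  refine ⟨C + C', fun i x y hr => ?_⟩
  rw [DW_add, add_app]
  exact (abs_add_le _ _).trans (add_le_add (hC i x y hr) (hC' i x y hr))

lemma Bd.smul {m : ℕ} {F : ι → SF} (hF : Bd R m F) (c : ι → ℝ) (hc : ∀ i, |c i| ≤ 1) :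
    Bd R m (fun i => c i • F i) := by
  intro d hd
  obtain ⟨C, hC⟩ := hF d hd
  refine ⟨C, fun i x y hr => ?_⟩
  rw [DW_smul, smul_app, abs_mul]
  exact (mul_le_of_le_one_left (abs_nonneg _) (hc i)).trans (hC i x y hr)

/-- Leibniz rule for bounded families, by induction on the word. -/
lemma Bd.mul_aux (d : List (Fin 3)) : ∀ {m : ℕ} {F H : ι → SF}, Bd R m F → Bd R m H →
    d.count 0 ≤ m → ∃ C, ∀ i x y, radius x y ≤ R → |(DW d (F i * H i)).1 0 x y| ≤ C := by
  induction d with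
  | nil =>
    intro m F H hF hH _
    obtain ⟨C, hC⟩ := hF [] (by simp)
    obtain ⟨C', hC'⟩ := hH [] (by simp)
    refine ⟨|C| * |C'|, fun i x y hr => ?_⟩
    simp only [DW_nil, mul_app, abs_mul]
    exact mul_le_mul ((hC i x y hr).trans (le_abs_self _)) ((hC' i x y hr).trans (le_abs_self _))
      (abs_nonneg _) (abs_nonneg _)
  | cons a d ih =>
    intro m F H hF hH hd
    rw [show a :: d = [a] ++ d from rfl, List.count_append] at hd
    have hn : (m - [a].count 0) + [a].count 0 ≤ m := by omega
    have hn' : m - [a].count 0 ≤ m := by omega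
    have hd' : d.count 0 ≤ m - [a].count 0 := by omega
    obtain ⟨C, hC⟩ := ih (hF.mono hn') (hH.Dd a hn) hd'
    obtain ⟨C', hC'⟩ := ih (hH.mono hn') (hF.Dd a hn) hd'
    refine ⟨C + C', fun i x y hr => ?_⟩
    rw [DW_cons, Derivation.leibniz, DW_add, add_app]
    exact (abs_add_le _ _).trans (add_le_add (hC i x y hr) (hC' i x y hr))

lemma Bd.mul {m : ℕ} {F H : ι → SF} (hF : Bd R m F) (hH : Bd R m H) :
    Bd R m (fun i => F i * H i) := fun d hd => Bd.mul_aux d hF hH hd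

lemma Bd.const (m : ℕ) (f : SF) : Bd R m (fun _ : ι => f) := by
  intro d _
  obtain ⟨C, hC⟩ := (sq_compact R).exists_bound_of_continuousOn (cont_slice (DW d f) 0).continuousOn
  refine ⟨C, fun _ x y hr => hC (x, y) ?_⟩
  by_contra h
  have := notMem_sq h
  simp only at this; linarith

/-- All derivatives of a family are bounded at the initial time. -/
def BdA (R : ℝ) (F : ι → SF) : Prop := ∀ m, Bd R m F

lemma BdA.Dd {F : ι → SF} (h : BdA R F) (a : Fin 3) : BdA R (fun i => Dd a (F i)) :=
  fun m => (h (m + [a].count 0)).Dd a le_rfl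

lemma BdA.G {F : ι → SF} (h : BdA R F) (j : Fin 7) : BdA R (fun i => G j (F i)) := by
  have hT : BdA R (fun _ : ι => cT) := fun m => Bd.const m cT
  have hX : BdA R (fun _ : ι => cX) := fun m => Bd.const m cX
  have hY : BdA R (fun _ : ι => cY) := fun m => Bd.const m cY
  have hm : ∀ {F H : ι → SF}, BdA R F → BdA R H → BdA R fun i => F i * H i :=
    fun a b m => (a m).mul (b m)
  have ha : ∀ {F H : ι → SF}, BdA R F → BdA R H → BdA R fun i => F i + H i :=
    fun a b m => (a m).add (b m)
  fin_cases j <;>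
    simp only [Fin.mk_zero, Fin.zero_eta, Fin.mk_one, Fin.reduceFinMk, G0, G1, G2, G3, G4, G5, G6]
  · exact ha (ha (hm hT (h.Dd 0)) (hm hX (h.Dd 1))) (hm hY (h.Dd 2))
  · exact ha (hm hT (h.Dd 1)) (hm hX (h.Dd 0))
  · exact ha (hm hT (h.Dd 2)) (hm hY (h.Dd 0))
  · have e : (fun i => cX * SF.Dd 2 (F i) - cY * SF.Dd 1 (F i)) =
        fun i => cX * SF.Dd 2 (F i) + (-1 : ℝ) • (cY * SF.Dd 1 (F i)) := by
      funext i; rw [neg_one_smul, sub_eq_add_neg]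
    rw [e]
    exact ha (hm hX (h.Dd 2)) fun m => (hm hY (h.Dd 1) m).smul (fun _ => -1) (by simp)
  · exact h.Dd 0
  · exact h.Dd 1
  · exact h.Dd 2

lemma BdA.GW (w : List (Fin 7)) : ∀ {F : ι → SF}, BdA R F → BdA R (fun i => GW w (F i)) := by
  induction w with
  | nil => intro F h; exact h
  | cons a w ih => intro F h; exact ih (h.G a)

section fam
variable {u : ι → Fin 2 → SF} {ε : ι → ℝ} {f g : Fin 2 → SF}

/-- The equation solved for the second time derivative, for the rescaled solution. -/
lemma tt_eq {v : Fin 2 → SF} {e : ℝ} (he : e ≠ 0) (hv : Solves v) (j : Fin 2) :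
    EqPos (Dd 0 (Dd 0 (e⁻¹ • v j))) (Dd 1 (Dd 1 (e⁻¹ • v j)) + Dd 2 (Dd 2 (e⁻¹ • v j)) +
      (-e ^ 2) • (Dd 0 (e⁻¹ • v (j + 1)) * Dd 0 (e⁻¹ • v (j + 1)) * Dd 0 (e⁻¹ • v j))) := by
  intro t x y ht
  have h := hv j t x y ht
  simp only [Box, sub_app] at h
  simp only [Derivation.map_smul, smul_app, add_app, mul_app]
  have h' : (Dd 0 (Dd 0 (v j))).1 t x y = (Dd 1 (Dd 1 (v j))).1 t x y +
    (Dd 2 (Dd 2 (v j))).1 t x y - (Dd 0 (v (j + 1))).1 t x y ^ 2 * (Dd 0 (v j)).1 t x y := by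
    linarith
  rw [h']
  field_simp
  ring

/-- The rescaled solutions `ε⁻¹ u` have derivatives at the initial time bounded uniformly in `ε`. The
proof is by induction on the number of time derivatives: the equation trades two of them for spatial
derivatives and a nonlinearity with fewer time derivatives. -/
lemma BdA_fam (hε : ∀ i, 0 < ε i ∧ ε i ≤ 1) (hu : ∀ i, Solves (u i))
    (hf : ∀ i j x y, (u i j).1 0 x y = ε i * (f j).1 0 x y)
    (hg : ∀ i j x y, (Dd 0 (u i j)).1 0 x y = ε i * (g j).1 0 x y) (j : Fin 2) :
    BdA R (fun i => (ε i)⁻¹ • u i j) := by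
  suffices h : ∀ m, ∀ j, Bd R m (fun i => (ε i)⁻¹ • u i j) from fun m => h m j
  -- words with at most one time derivative only see the Cauchy data
  have base : ∀ j, Bd R 1 (fun i => (ε i)⁻¹ • u i j) := by
    intro j d hd
    have hf' : ∀ i x y, ((ε i)⁻¹ • u i j).1 0 x y = (f j).1 0 x y := by
      intro i x y
      rw [smul_app, hf, inv_mul_cancel_left₀ (hε i).1.ne']
    have hg' : ∀ i x y, (Dd 0 ((ε i)⁻¹ • u i j)).1 0 x y = (g j).1 0 x y := by
      intro i x y
      rw [Derivation.map_smul, smul_app, hg, inv_mul_cancel_left₀ (hε i).1.ne']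
    by_cases h0 : (0 : Fin 3) ∈ d
    · have hp := List.perm_cons_erase h0
      have h1 : (0 : Fin 3) ∉ d.erase 0 := by
        rw [← List.count_eq_zero, List.count_erase_self]; omega
      obtain ⟨C, hC⟩ := Bd.const (ι := ι) (R := R) ((d.erase 0).count 0) (g j) (d.erase 0) le_rfl
      refine ⟨C, fun i x y hr => ?_⟩
      rw [DW_perm hp, DW_cons, DW_initial _ h1 (hg' i)]
      exact hC i x y hr
    · obtain ⟨C, hC⟩ := Bd.const (ι := ι) (R := R) (d.count 0) (f j) d le_rfl
      refine ⟨C, fun i x y hr => ?_⟩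
      rw [DW_initial _ h0 (hf' i)]
      exact hC i x y hr
  have step : ∀ m, (∀ j, Bd R (m + 1) (fun i => (ε i)⁻¹ • u i j)) →
      ∀ j, Bd R (m + 2) (fun i => (ε i)⁻¹ • u i j) := by
    intro m hm j d hd
    rcases Nat.lt_or_ge (m + 1) (d.count 0) with hlt | hge
    swap
    · exact hm j d hge
    have h0 : (0 : Fin 3) ∈ d := List.count_pos_iff.1 (by omega)
    have c1 : (d.erase 0).count 0 = m + 1 := by rw [List.count_erase_self]; omega
    have h1 : (0 : Fin 3) ∈ d.erase 0 := List.count_pos_iff.1 (by omega)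
    have c2 : ((d.erase 0).erase 0).count 0 = m := by rw [List.count_erase_self]; omega
    have hp : d.Perm (0 :: 0 :: (d.erase 0).erase 0) :=
      (List.perm_cons_erase h0).trans ((List.perm_cons_erase h1).cons 0)
    set d' := (d.erase 0).erase 0
    have hD : ∀ a j, Bd R m (fun i => Dd a ((ε i)⁻¹ • u i j)) := fun a j =>
      (hm j).Dd a (by have : [a].count 0 ≤ 1 := List.count_le_length; omega)
    have hD2 : ∀ a, a ≠ 0 → Bd R m (fun i => Dd a (Dd a ((ε i)⁻¹ • u i j))) := fun a ha => by
      have hc : [a].count (0 : Fin 3) = 0 := by simp [List.count_eq_zero]; exact fun h => ha h.symm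
      exact Bd.Dd ((hm j).Dd (n := m) a (by omega)) a (by omega)
    obtain ⟨C, hC⟩ := (((hD2 1 (by decide)).add (hD2 2 (by decide))).add
      ((((hD 0 (j + 1)).mul (hD 0 (j + 1))).mul (hD 0 j)).smul (fun i => -(ε i) ^ 2) fun i => by
        rw [abs_neg, abs_of_nonneg (sq_nonneg _)]
        exact pow_le_one₀ (hε i).1.le (hε i).2)) d' c2.le
    refine ⟨C, fun i x y hr => ?_⟩
    rw [DW_perm hp, DW_cons, DW_cons, (((tt_eq (hε i).1.ne' (hu i) j).DW d').eq le_rfl x y)]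
    exact hC i x y hr
  have all : ∀ m, ∀ j, Bd R (m + 1) (fun i => (ε i)⁻¹ • u i j) := by
    intro m
    induction m with
    | zero => exact base
    | succ m ih => exact step m ih
  exact fun m j => (all m j).mono (Nat.le_succ m)

end fam

/-- The initial commuted energies of solutions with data of size `ε` are `O(ε²)`. -/
theorem init_energy (hR : 0 < R) (f g : Fin 2 → SF) : ∃ C0 : ℝ, 0 < C0 ∧ ∀ (ε : ℝ) (u : Fin 2 → SF),
    0 < ε → ε ≤ 1 → Solves u → (∀ j, Supp R (u j)) →
    (∀ j x y, (u j).1 0 x y = ε * (f j).1 0 x y) →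
    (∀ j x y, (Dd 0 (u j)).1 0 x y = ε * (g j).1 0 x y) →
    ∀ j (w : List (Fin 7)), w.length ≤ 10 → I (en (GW w (u j))) 0 ≤ (C0 * ε) ^ 2 := by
  let ι : Type := {q : ℝ × (Fin 2 → SF) // 0 < q.1 ∧ q.1 ≤ 1 ∧ Solves q.2 ∧
    (∀ j x y, (q.2 j).1 0 x y = q.1 * (f j).1 0 x y) ∧
    (∀ j x y, (Dd 0 (q.2 j)).1 0 x y = q.1 * (g j).1 0 x y)}
  have hA : ∀ j, BdA R (fun i : ι => (i.1.1)⁻¹ • i.1.2 j) := fun j =>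
    BdA_fam (fun i => ⟨i.2.1, i.2.2.1⟩) (fun i => i.2.2.2.1) (fun i => i.2.2.2.2.1)
      (fun i => i.2.2.2.2.2) j
  have h1 : ∀ q : Fin 2 × List (Fin 7) × Fin 3, ∃ C, ∀ (i : ι) x y, radius x y ≤ R →
      |(Dd q.2.2 (GW q.2.1 ((i.1.1)⁻¹ • i.1.2 q.1))).1 0 x y| ≤ C := fun q =>
    (((hA q.1).GW q.2.1).Dd q.2.2) 0 [] (by simp)
  choose C hC using h1
  set K := ∑ q ∈ Ix, C q ^ 2 with hK
  have hK0 : 0 ≤ K := Finset.sum_nonneg fun q _ => sq_nonneg _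
  set m := (volume (sq R)).toReal
  refine ⟨√(3 / 2 * K * m) + 1, by positivity, ?_⟩
  intro ε u hε hε1 hu hS hf hg j w hw
  have hD : ∀ a x y, radius x y ≤ R → (Dd a (GW w (u j))).1 0 x y ^ 2 ≤ ε ^ 2 * K := by
    intro a x y hr
    have := hC (j, w, a) ⟨(ε, u), hε, hε1, hu, hf, hg⟩ x y hr
    simp only [GW_smul, Derivation.map_smul, smul_app] at this
    have hq : ((j, w, a) : Fin 2 × List (Fin 7) × Fin 3) ∈ Ix := mem_Ix.2 hw
    have h2 : C (j, w, a) ^ 2 ≤ K := by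
      rw [hK]
      exact Finset.single_le_sum (f := fun q => C q ^ 2) (fun q _ => sq_nonneg _) hq
    have h3 := sq_le_sq' (by linarith [abs_nonneg (ε⁻¹ * (Dd a (GW w (u j))).1 0 x y)]) this
    rw [sq_abs, mul_pow, inv_pow, inv_mul_le_iff₀ (by positivity)] at h3
    exact h3.trans (mul_le_mul_of_nonneg_left h2 (sq_nonneg _))
  have sE := ((hS j).GW hR w).en hR
  have hpt : ∀ z : ℝ × ℝ, ‖(en (GW w (u j))).1 0 z.1 z.2‖ ≤ 3 / 2 * (ε ^ 2 * K) := by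
    intro z
    rw [Real.norm_of_nonneg (en_nonneg _ _ _ _)]
    rcases le_total (radius z.1 z.2) R with hr | hr
    · rw [en_app]
      have a0 := hD 0 _ _ hr
      have a1 := hD 1 _ _ hr
      have a2 := hD 2 _ _ hr
      linarith
    · rw [sE 0 z.1 z.2 le_rfl (by linarith)]; positivity
  have hI : I (en (GW w (u j))) 0 = ∫ z in sq R, (en (GW w (u j))).1 0 z.1 z.2 := by
    unfold I
    rw [setIntegral_eq_integral_of_forall_compl_eq_zero]
    intro z hz
    exact sE 0 _ _ le_rfl (by have := notMem_sq hz; linarith)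
  have hfin : volume (sq R) < ⊤ := (sq_compact R).measure_lt_top
  have h4 := norm_setIntegral_le_of_norm_le_const hfin (fun z _ => hpt z)
  have h5 : I (en (GW w (u j))) 0 ≤ 3 / 2 * (ε ^ 2 * K) * m := by
    rw [hI]; exact (le_abs_self _).trans h4
  refine h5.trans ?_
  have h6 : 3 / 2 * K * m ≤ (√(3 / 2 * K * m) + 1) ^ 2 := by
    have hm : 0 ≤ 3 / 2 * K * m := by positivity
    have := Real.sq_sqrt hm
    nlinarith [Real.sqrt_nonneg (3 / 2 * K * m)]
  calc 3 / 2 * (ε ^ 2 * K) * m = (3 / 2 * K * m) * ε ^ 2 := by ring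
    _ ≤ (√(3 / 2 * K * m) + 1) ^ 2 * ε ^ 2 := by gcongr
    _ = _ := by ring

end initial

end SF

/-! ### The scaling multiplier and the weighted energy -/

namespace SF

section conf
variable {R A M c t T : ℝ} {u : Fin 2 → SF}

lemma jp (x y : ℝ) : 0 < 1 + x ^ 2 + y ^ 2 := by positivity

/-- The smooth radius `⟨r⟩ = √(1 + |x|²)`. -/
def cJ : SF := mk (fun _ x y => √(1 + x ^ 2 + y ^ 2)) (by
  show ContDiff ℝ _ (fun p : ℝ × ℝ × ℝ => √(1 + p.2.1 ^ 2 + p.2.2 ^ 2))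
  exact ContDiff.sqrt (by fun_prop) fun p => (jp _ _).ne')

/-- The inverse smooth radius `⟨r⟩⁻¹`. -/
def cJi : SF := mk (fun _ x y => (√(1 + x ^ 2 + y ^ 2))⁻¹) (by
  show ContDiff ℝ _ (fun p : ℝ × ℝ × ℝ => (√(1 + p.2.1 ^ 2 + p.2.2 ^ 2))⁻¹)
  exact ContDiff.inv (ContDiff.sqrt (by fun_prop) fun p => (jp _ _).ne')
    fun p => (Real.sqrt_pos.2 (jp _ _)).ne')

@[simp] lemma cJ_app (x y : ℝ) : cJ.1 t x y = √(1 + x ^ 2 + y ^ 2) := rfl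
@[simp] lemma cJi_app (x y : ℝ) : cJi.1 t x y = (√(1 + x ^ 2 + y ^ 2))⁻¹ := rfl

lemma D1Ji (x y : ℝ) : (Dd 1 cJi).1 t x y = -x * (√(1 + x ^ 2 + y ^ 2))⁻¹ ^ 3 := by
  refine Dd_unique1 _ _ _ _ ?_
  have h : HasDerivAt (fun s : ℝ => 1 + s ^ 2 + y ^ 2) (2 * x) x := by
    have := (((hasDerivAt_id x).pow 2).const_add 1).add_const (y ^ 2)
    simpa using this
  refine ((h.sqrt (jp x y).ne').inv (Real.sqrt_pos.2 (jp x y)).ne').congr_deriv ?_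
  have := (Real.sqrt_pos.2 (jp x y)).ne'
  field_simp

lemma D2Ji (x y : ℝ) : (Dd 2 cJi).1 t x y = -y * (√(1 + x ^ 2 + y ^ 2))⁻¹ ^ 3 := by
  refine Dd_unique2 _ _ _ _ ?_
  have h : HasDerivAt (fun s : ℝ => 1 + x ^ 2 + s ^ 2) (2 * y) y := by
    have := ((hasDerivAt_id y).pow 2).const_add (1 + x ^ 2)
    simpa using this
  refine ((h.sqrt (jp x y).ne').inv (Real.sqrt_pos.2 (jp x y)).ne').congr_deriv ?_
  have := (Real.sqrt_pos.2 (jp x y)).ne'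
  field_simp

/-- The scaling density `t e + (x·∇f + f/2) ∂ₜf`. -/
def Qd (f : SF) : SF :=
  cT * en f + (cX * Dd 1 f + cY * Dd 2 f + (1 / 2 : ℝ) • f) * Dd 0 f

/-- The spatial flux of the scaling density. -/
def Fx (k : Fin 3) (ck : SF) (f : SF) : SF :=
  (1 / 2 : ℝ) • (ck * Dd 0 f ^ 2) + Dd k f * G 0 f -
    (1 / 2 : ℝ) • (ck * (Dd 1 f ^ 2 + Dd 2 f ^ 2)) + (1 / 2 : ℝ) • (Dd k f * f)

/-- Differential form of the identity for the multiplier `S + 1/2`. In two space dimensions the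
scaling field leaves no bulk term. -/
lemma Qd_identity (f : SF) : Dd 0 (Qd f) =
    Dd 1 (Fx 1 cX f) + Dd 2 (Fx 2 cY f) + Box f * (G 0 f + (1 / 2 : ℝ) • f) := by
  apply ext'; intro t x y
  simp only [Qd, Fx, en, Box, G0, map_add, map_sub, Derivation.map_smul, Derivation.leibniz,
    smul_eq_mul, pow_two, D10, D20, D21, D0T, D1T, D2T, D0X, D1X, D2X, D0Y, D1Y, D2Y, add_app,
    sub_app, smul_app, mul_app, cT_app, cX_app, cY_app, zero_app, one_app]
  ring

lemma Supp.Qd (hR : 0 < R) {f : SF} (hf : Supp R f) : Supp R (Qd f) :=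
  ((hf.en hR).mul_left _).add ((hf.Dd hR 0).mul_left _)

lemma Supp.Fx (hR : 0 < R) {f : SF} (hf : Supp R f) (k : Fin 3) (ck : SF) :
    Supp R (Fx k ck f) :=
  (((((hf.Dd hR 0).pow two_ne_zero).mul_left _).smul _).add ((hf.Dd hR k).mul_right _) |>.sub
    (((((hf.Dd hR 1).pow two_ne_zero).add ((hf.Dd hR 2).pow two_ne_zero)).mul_left _).smul _)).add
    ((hf.mul_left _).smul _)

/-- Integrated form of `Qd_identity`. -/
lemma Qd_deriv (hR : 0 < R) {f : SF} (hf : Supp R f) (ht : 0 < t) :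
    HasDerivAt (I (Qd f)) (I (Box f * (G 0 f + (1 / 2 : ℝ) • f)) t) t := by
  refine (I_hasDerivAt hR (hf.Qd hR) ht).congr_deriv ?_
  rw [Qd_identity, I_add (((hf.Fx hR 1 cX).Dd hR 1).add ((hf.Fx hR 2 cY).Dd hR 2))
    ((hf.box hR).mul_right _) ht.le, I_add ((hf.Fx hR 1 cX).Dd hR 1) ((hf.Fx hR 2 cY).Dd hR 2) ht.le,
    I_D1 hR (hf.Fx hR 1 cX) ht.le, I_D2 hR (hf.Fx hR 2 cY) ht.le]
  ring

/-- The part of the scaling density not multiplied by `t` is at least `-⟨r⟩ e`, once a quarter of the divergence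
of `⟨r⟩⁻¹ x f²` is added: the divergence supplies what is needed to complete the square in `f`. -/
lemma conf_alg {J i x y a b d f : ℝ} (hJ : 0 < J) (hi : i * J = 1) (hJ2 : J ^ 2 = 1 + x ^ 2 + y ^ 2) :
    -J * (1 / 2 * (d ^ 2 + a ^ 2 + b ^ 2)) ≤
      (x * a + y * b + 1 / 2 * f) * d +
      1 / 2 * (((-x * i ^ 3) * x * f ^ 2 / 2 + i * f ^ 2 / 2 + i * x * f * a) +
        ((-y * i ^ 3) * y * f ^ 2 / 2 + i * f ^ 2 / 2 + i * y * f * b)) := by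
  have hi0 : 0 < i := by
    by_contra h
    nlinarith [mul_nonneg (neg_nonneg.2 (not_lt.1 h)) hJ.le]
  set m := x * a + y * b with hm
  have e1 : (x ^ 2 + y ^ 2) * i ^ 3 = i - i ^ 3 := by
    have : x ^ 2 + y ^ 2 = J ^ 2 - 1 := by linarith
    rw [this]
    have : J ^ 2 * i ^ 3 = (i * J) ^ 2 * i := by ring
    rw [sub_mul, this, hi]; ring
  have e2 : 1 / 2 * (((-x * i ^ 3) * x * f ^ 2 / 2 + i * f ^ 2 / 2 + i * x * f * a) +
        ((-y * i ^ 3) * y * f ^ 2 / 2 + i * f ^ 2 / 2 + i * y * f * b)) =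
      1 / 2 * (i * f ^ 2 / 2 + i ^ 3 * f ^ 2 / 2 + i * f * m) := by
    have : (-x * i ^ 3) * x * f ^ 2 / 2 + (-y * i ^ 3) * y * f ^ 2 / 2 =
        -(i - i ^ 3) * f ^ 2 / 2 := by rw [← e1]; ring
    rw [hm]; linarith
  rw [e2]
  -- Cauchy–Schwarz for the radial derivative
  have h1 : m ^ 2 ≤ (J ^ 2) * (a ^ 2 + b ^ 2) := by
    rw [hJ2, hm]; nlinarith [sq_nonneg (x * b - y * a), sq_nonneg a, sq_nonneg b]
  have h2 : i * m ^ 2 ≤ J * (a ^ 2 + b ^ 2) := by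
    have := mul_le_mul_of_nonneg_left h1 hi0.le
    have e : i * (J ^ 2 * (a ^ 2 + b ^ 2)) = (i * J) * (J * (a ^ 2 + b ^ 2)) := by ring
    rw [e, hi, one_mul] at this; exact this
  have h3 : 0 ≤ J * (d + i * (m + 1 / 2 * f)) ^ 2 := by positivity
  have e3 : J * (d + i * (m + 1 / 2 * f)) ^ 2 = J * d ^ 2 + 2 * (i * J) * d * (m + 1 / 2 * f) +
      (i * J) * i * (m + 1 / 2 * f) ^ 2 := by ring
  rw [e3, hi] at h3
  have h4 : 0 ≤ i * f ^ 2 := by positivity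
  have h5 : 0 ≤ i ^ 3 * f ^ 2 := by positivity
  nlinarith

/-- A pointwise lower bound for the scaling density, modulo a divergence. -/
lemma conf_lower (f : SF) (x y : ℝ) :
    ((cT - cJ + (R + 2) • (1 : SF)) * en f).1 t x y ≤
      (Qd f + (R + 2) • en f + (1 / 2 : ℝ) • (Dd 1 ((1 / 2 : ℝ) • (cJi * cX * f ^ 2)) +
        Dd 2 ((1 / 2 : ℝ) • (cJi * cY * f ^ 2)))).1 t x y := by
  have hJ := Real.sqrt_pos.2 (jp x y)
  have h := conf_alg (a := (Dd 1 f).1 t x y) (b := (Dd 2 f).1 t x y) (d := (Dd 0 f).1 t x y)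
    (f := f.1 t x y) hJ (inv_mul_cancel₀ hJ.ne') (Real.sq_sqrt (jp x y).le)
  have hx := D1Ji (t := t) x y
  have hy := D2Ji (t := t) x y
  simp only [Qd, map_add, map_sub, Derivation.map_smul, Derivation.leibniz,
    smul_eq_mul, pow_two (f : SF), D1X, D2Y, add_app, sub_app, smul_app, mul_app, cT_app, cX_app,
    cY_app, one_app, en_app, cJ_app, cJi_app, hx, hy]
  linarith

lemma jle (x y : ℝ) : √(1 + x ^ 2 + y ^ 2) ≤ radius x y + 1 := by
  rw [Real.sqrt_le_left (by have := radius_nonneg x y; positivity)]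
  have := radius_sq x y; have := radius_nonneg x y
  nlinarith

/-- The energy with weight `p` is controlled by the scaling density. -/
lemma wint_le_conf (hR : 0 < R) {f : SF} (hf : Supp R f) (ht : 0 ≤ t) (a : Fin 3) :
    wint R 1 (Dd a f) t ≤ 2 * (I (Qd f) t + (R + 2) * I (en f) t) := by
  set W : SF := (cT - cJ + (R + 2) • (1 : SF)) * en f with hW
  have sW : Supp R W := (hf.en hR).mul_left _
  have h1 : wint R 1 (Dd a f) t ≤ I ((2 : ℝ) • W) t := by
    unfold wint I
    have hi := w_integrable ((hf.Dd hR a).pow (n := 2) two_ne_zero) ht 1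
    refine integral_mono hi ((sW.smul 2).integrable ht) fun z => ?_
    have e1 := sq_le_en f t z.1 z.2 a
    have e0 := en_nonneg f t z.1 z.2
    have e2 := jle z.1 z.2
    rcases le_total (radius z.1 z.2) (t + R) with hr | hr
    · simp only [hW, smul_app, mul_app, add_app, sub_app, cT_app, cJ_app, one_app, pow_one]
      calc _ ≤ (t + R + 1 - radius z.1 z.2) * (2 * (en f).1 t z.1 z.2) :=
            mul_le_mul_of_nonneg_left e1 (by linarith)
        _ ≤ (t - √(1 + z.1 ^ 2 + z.2 ^ 2) + (R + 2) * 1) * (2 * (en f).1 t z.1 z.2) :=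
            mul_le_mul_of_nonneg_right (by linarith) (by linarith)
        _ = _ := by ring
    · have z1 := hf.Dd hR a t z.1 z.2 ht hr
      have z2 := sW t z.1 z.2 ht hr
      simp only [smul_app, z1, z2]; simp
  have sq1 : Supp R ((1 / 2 : ℝ) • (cJi * cX * f ^ 2)) := ((hf.pow two_ne_zero).mul_left _).smul _
  have sq2 : Supp R ((1 / 2 : ℝ) • (cJi * cY * f ^ 2)) := ((hf.pow two_ne_zero).mul_left _).smul _
  have s1 := (hf.Qd hR).add ((hf.en hR).smul (R + 2))
  have s2 := ((sq1.Dd hR 1).add (sq2.Dd hR 2)).smul (1 / 2 : ℝ)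
  have h2 : I W t ≤ I (Qd f) t + (R + 2) * I (en f) t := by
    refine (I_mono sW (s1.add s2) ht fun x y => conf_lower f x y).trans (le_of_eq ?_)
    rw [I_add s1 s2 ht, I_add (hf.Qd hR) ((hf.en hR).smul _) ht, I_smul, I_smul,
      I_add (sq1.Dd hR 1) (sq2.Dd hR 2) ht, I_D1 hR sq1 ht, I_D2 hR sq2 ht]
    ring
  rw [I_smul] at h1
  linarith

/-- Index set of the low-order gradient components. -/
def Ix3 : Finset (Fin 2 × List (Fin 7) × Fin 3) :=
  Finset.univ ×ˢ (Wd 3 ×ˢ Finset.univ)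

lemma mem_Ix3 {q : Fin 2 × List (Fin 7) × Fin 3} : q ∈ Ix3 ↔ q.2.1.length ≤ 3 := by
  simp [Ix3, mem_Wd]

/-- Sum of squares of low-order gradient components. -/
def Z3 (u : Fin 2 → SF) : SF := ∑ q ∈ Ix3, (Dd q.2.2 (GW q.2.1 (u q.1))) ^ 2

lemma Z3_app (x y : ℝ) : (Z3 u).1 t x y =
    ∑ q ∈ Ix3, (Dd q.2.2 (GW q.2.1 (u q.1))).1 t x y ^ 2 := by
  rw [Z3, sum_app]; rfl

lemma Z3_nonneg (x y : ℝ) : 0 ≤ (Z3 u).1 t x y := by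
  rw [Z3_app]; exact Finset.sum_nonneg fun q _ => sq_nonneg _

lemma le_Z3 (x y : ℝ) {q : Fin 2 × List (Fin 7) × Fin 3} (hq : q ∈ Ix3) :
    (Dd q.2.2 (GW q.2.1 (u q.1))).1 t x y ^ 2 ≤ (Z3 u).1 t x y := by
  rw [Z3_app]
  exact Finset.single_le_sum (f := fun q : Fin 2 × List (Fin 7) × Fin 3 =>
    (Dd q.2.2 (GW q.2.1 (u q.1))).1 t x y ^ 2) (fun q _ => sq_nonneg _) hq

/-- The constant of the scaling-energy source. -/
def Cq : ℝ := 3 ^ 3 * (3 ^ 3 * (2 ^ 3) ^ 2 * 2 ^ 3)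
lemma Cq_pos : 0 < Cq := by unfold Cq; positivity

/-- Crude decay bounds the low-order gradient by `M p^{-1/2}`. -/
lemma Z3_le (hm : 0 ≤ M) (hC : CB R u M t) {x y : ℝ} (hr : radius x y ≤ t + R) :
    √((Z3 u).1 t x y) ≤ (Ix3.card + 1) * (M / √(t + R + 1 - radius x y)) := by
  have hp : 0 < √(t + R + 1 - radius x y) := Real.sqrt_pos.2 (by linarith)
  have hb : 0 ≤ M / √(t + R + 1 - radius x y) := by positivity
  refine Real.sqrt_le_iff.2 ⟨by positivity, ?_⟩
  rw [Z3_app]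
  have h : ∀ q ∈ Ix3, (Dd q.2.2 (GW q.2.1 (u q.1))).1 t x y ^ 2 ≤
      (M / √(t + R + 1 - radius x y)) ^ 2 := by
    intro q hq
    have := (hC q.1 q.2.1 ((mem_Ix3.1 hq).trans (by norm_num)) x y hr).2 q.2.2
    rw [← sq_abs]
    exact pow_le_pow_left₀ (abs_nonneg _) this 2
  refine (Finset.sum_le_card_nsmul _ _ _ h).trans ?_
  rw [nsmul_eq_mul, mul_pow]
  refine mul_le_mul_of_nonneg_right ?_ (sq_nonneg _)
  have : (0 : ℝ) ≤ Ix3.card := by positivity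
  nlinarith

/-- The nonlinearity is cubic in the low-order gradient. -/
lemma conf_box (hu : Solves u) (ht : 0 ≤ t) (j : Fin 2) {w : List (Fin 7)} (hw : w.length ≤ 3)
    (x y : ℝ) : |(Box (GW w (u j))).1 t x y| ≤ Cq * √((Z3 u).1 t x y) ^ 3 := by
  have h : ∀ j (w : List (Fin 7)), w.length ≤ 3 → ∀ a,
      |(Dd a (GW w (u j))).1 t x y| ≤ √((Z3 u).1 t x y) * 1 ^ w.length := by
    intro j w hw a
    have hq : ((j, w, a) : Fin 2 × List (Fin 7) × Fin 3) ∈ Ix3 := mem_Ix3.2 hw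
    rw [one_pow, mul_one]
    exact Real.abs_le_sqrt (le_Z3 (q := (j, w, a)) x y hq)
  have hbox := hu.box_le (K := 3) (N := 3) (by norm_num) ht (Real.sqrt_nonneg _)
    (Real.sqrt_nonneg _) le_rfl h h j w hw
  refine hbox.trans (le_of_eq ?_)
  rw [Cq]; ring

/-- Crude decay bounds one of the three gradient factors by `M p^{-1/2}` and the multiplier `(S + 1/2) f`
by `M p^{1/2}`, so that the weights cancel; the two other factors remain. -/
lemma conf_source (hR : 0 < R) (hu : Solves u) (hS : ∀ j, Supp R (u j)) (ht : 0 ≤ t)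
    (hm : 0 ≤ M) (hC : CB R u M t) (j : Fin 2) {w : List (Fin 7)} (hw : w.length ≤ 3) (x y : ℝ) :
    (Box (GW w (u j)) * (G 0 (GW w (u j)) + (1 / 2 : ℝ) • GW w (u j))).1 t x y ≤
      ((2 * Cq * (Ix3.card + 1) * M ^ 2) • Z3 u).1 t x y := by
  have hCq := Cq_pos
  have hZ0 : 0 ≤ (Z3 u).1 t x y := Z3_nonneg x y
  rw [smul_app]
  rcases le_total (radius x y) (t + R) with hr | hr
  swap
  · rw [mul_app, (((hS j).GW hR w).box hR) t x y ht hr, zero_mul]; positivity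
  have hb := conf_box hu ht j hw x y
  have hz := Z3_le hm hC hr
  have hs : |(G 0 (GW w (u j)) + (1 / 2 : ℝ) • GW w (u j)).1 t x y| ≤
      2 * (M * √(t + R + 1 - radius x y)) := by
    have h1 := (hC j (w ++ [0]) (by simp; omega) x y hr).1
    have h2 := (hC j w (by omega) x y hr).1
    rw [GW_append] at h1
    rw [add_app, smul_app]
    refine (abs_add_le _ _).trans ?_
    rw [abs_mul, abs_of_pos (by norm_num : (0:ℝ) < 1 / 2)]
    have h1' : |(G 0 (GW w (u j))).1 t x y| ≤ M * √(t + R + 1 - radius x y) := h1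
    linarith [abs_nonneg ((GW w (u j)).1 t x y)]
  have hp : 0 < √(t + R + 1 - radius x y) := Real.sqrt_pos.2 (by linarith)
  rw [mul_app]
  refine (le_abs_self _).trans ?_
  rw [abs_mul]
  have hq3 : √((Z3 u).1 t x y) ^ 3 ≤ (Z3 u).1 t x y *
      ((Ix3.card + 1) * (M / √(t + R + 1 - radius x y))) := by
    calc √((Z3 u).1 t x y) ^ 3 = √((Z3 u).1 t x y) ^ 2 * √((Z3 u).1 t x y) := by ring
      _ = (Z3 u).1 t x y * √((Z3 u).1 t x y) := by rw [Real.sq_sqrt hZ0]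
      _ ≤ _ := mul_le_mul_of_nonneg_left hz hZ0
  calc _ ≤ (Cq * ((Z3 u).1 t x y * ((Ix3.card + 1) * (M / √(t + R + 1 - radius x y))))) *
        (2 * (M * √(t + R + 1 - radius x y))) :=
        mul_le_mul (hb.trans (mul_le_mul_of_nonneg_left hq3 hCq.le)) hs (abs_nonneg _)
          (by positivity)
    _ = _ := by field_simp

/-- The low-order energy. -/
lemma Z3_int (hR : 0 < R) (hS : ∀ j, Supp R (u j)) (hE : EB u A T) (ht : 0 ≤ t) (htT : t ≤ T) :
    I (Z3 u) t ≤ Ix3.card * (A ^ 2 * (1 + t) ^ ((1 : ℝ) / 25)) := by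
  unfold Z3
  rw [I_sum _ (fun q _ => (((hS q.1).GW hR q.2.1).Dd hR q.2.2).pow two_ne_zero) ht]
  refine (Finset.sum_le_card_nsmul _ _ _ fun q hq => ?_).trans (le_of_eq (nsmul_eq_mul _ _))
  have h3 := mem_Ix3.1 hq
  refine (hE t ht htT q.1 q.2.1 (h3.trans (by norm_num)) q.2.2).trans ?_
  refine mul_le_mul_of_nonneg_left ?_ (sq_nonneg A)
  refine Real.rpow_le_rpow_of_exponent_le (by linarith) ?_
  have : (q.2.1.length : ℝ) ≤ 3 := by exact_mod_cast h3
  linarith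

/-- The energy weighted with the distance to the light cone grows at most like `t^{1/4}`. -/
lemma weighted_energy (hR : 1 ≤ R) (hu : Solves u) (hS : ∀ j, Supp R (u j))
    (hc : 0 ≤ c) (hc1 : c ≤ 1) (h : ∀ T, EB u A T ∧ CT R u c T) (j : Fin 2)
    (w : List (Fin 7)) (hw : w.length ≤ 3) : ∃ C, 0 ≤ C ∧ ∀ t, 0 ≤ t → ∀ a,
      wint R 1 (Dd a (GW w (u j))) t ≤ C * (1 + t) ^ ((1 : ℝ) / 4) := by
  have hR0 : 0 < R := by linarith
  have hCq := Cq_pos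
  have sf := (hS j).GW hR0 w
  set f := GW w (u j) with hf
  set K : ℝ := 2 * Cq * (Ix3.card + 1) * (Ix3.card * A ^ 2) with hK
  have hK0 : 0 ≤ K := by positivity
  -- The source is `t^{-7/8}` from crude decay times `t^{1/25}` from the energy, less than `t^{-3/4}`.
  have hder : ∀ t, 0 < t → I (Box f * (G 0 f + (1 / 2 : ℝ) • f)) t ≤
      K * (1 + t) ^ ((1 : ℝ) / 4 - 1) := by
    intro t ht
    have hτ : 0 < 1 + t := by linarith
    have sZ : Supp R (Z3 u) := Supp.sum _ fun q _ =>
      (((hS q.1).GW hR0 q.2.1).Dd hR0 q.2.2).pow two_ne_zero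
    have hm : 0 ≤ c * (1 + t) ^ (-(7 / 16) : ℝ) := by positivity
    refine (I_mono ((sf.box hR0).mul_right _) (sZ.smul _) ht.le fun x y =>
      conf_source hR0 hu hS ht.le hm ((h t).2 t ht.le le_rfl) j hw x y).trans ?_
    rw [I_smul]
    have hZ := Z3_int hR0 hS (h t).1 ht.le le_rfl
    have hm2 : (c * (1 + t) ^ (-(7 / 16) : ℝ)) ^ 2 ≤ (1 + t) ^ (-(7 / 8) : ℝ) := by
      rw [mul_pow, ← Real.rpow_mul_natCast hτ.le]
      refine (mul_le_of_le_one_left (by positivity) (pow_le_one₀ hc hc1)).trans (le_of_eq ?_)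
      congr 1; norm_num
    calc _ ≤ 2 * Cq * (Ix3.card + 1) * (1 + t) ^ (-(7 / 8) : ℝ) *
          (Ix3.card * (A ^ 2 * (1 + t) ^ ((1 : ℝ) / 25))) := by
          refine mul_le_mul ?_ hZ (I_nonneg fun x y => Z3_nonneg x y) (by positivity)
          exact mul_le_mul_of_nonneg_left hm2 (by positivity)
      _ = K * ((1 + t) ^ (-(7 / 8) : ℝ) * (1 + t) ^ ((1 : ℝ) / 25)) := by rw [hK]; ring
      _ ≤ _ := by
          refine mul_le_mul_of_nonneg_left ?_ hK0
          rw [← Real.rpow_add hτ]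
          exact Real.rpow_le_rpow_of_exponent_le (by linarith) (by norm_num)
  have hg : ∀ s, 0 ≤ s → HasDerivAt (fun s : ℝ => 4 * K * (1 + s) ^ ((1 : ℝ) / 4))
      (K * (1 + s) ^ ((1 : ℝ) / 4 - 1)) s := by
    intro s hs
    have h1 : HasDerivAt (fun t : ℝ => 1 + t) 1 s := (hasDerivAt_id s).const_add 1
    refine ((h1.rpow_const (p := (1 : ℝ) / 4) (Or.inl (by linarith))).const_mul
      (4 * K)).congr_deriv ?_
    ring
  have hQ : ∀ t, 0 ≤ t → I (Qd f) t ≤ |I (Qd f) 0| + 4 * K * (1 + t) ^ ((1 : ℝ) / 4) := by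
    intro t ht
    have key := growth ht (I_continuousOn (sf.Qd hR0) t)
      (fun s hs => (hg s hs.1).continuousAt.continuousWithinAt)
      (fun s hs => Qd_deriv hR0 sf hs.1) (fun s hs => hg s hs.1.le)
      (fun s hs => hder s hs.1)
    have := le_abs_self (I (Qd f) 0)
    have h2 : 0 ≤ 4 * K * (1 + (0 : ℝ)) ^ ((1 : ℝ) / 4) := by positivity
    linarith
  refine ⟨2 * (|I (Qd f) 0| + 4 * K + (R + 2) * (3 / 2 * A ^ 2)), by positivity, ?_⟩
  intro t ht a
  have hτ : 0 < 1 + t := by linarith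
  have hX : 1 ≤ (1 + t) ^ ((1 : ℝ) / 4) := Real.one_le_rpow (by linarith) (by norm_num)
  have hEn : I (en f) t ≤ 3 / 2 * A ^ 2 * (1 + t) ^ ((1 : ℝ) / 4) := by
    have hD : ∀ a, I (Dd a f ^ 2) t ≤ A ^ 2 * (1 + t) ^ ((1 : ℝ) / 4) := by
      intro a
      refine ((h t).1 t ht le_rfl j w (hw.trans (by norm_num)) a).trans ?_
      refine mul_le_mul_of_nonneg_left ?_ (sq_nonneg A)
      refine Real.rpow_le_rpow_of_exponent_le (by linarith) ?_
      have : (w.length : ℝ) ≤ 3 := by exact_mod_cast hw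
      linarith
    have s := fun a => (sf.Dd hR0 a).pow (n := 2) two_ne_zero
    unfold en
    rw [I_smul, I_add ((s 0).add (s 1)) (s 2) ht, I_add (s 0) (s 1) ht]
    have := hD 0; have := hD 1; have := hD 2
    linarith
  have h1 := wint_le_conf hR0 sf ht a
  have h2 := hQ t ht
  have h3 : |I (Qd f) 0| ≤ |I (Qd f) 0| * (1 + t) ^ ((1 : ℝ) / 4) :=
    le_mul_of_one_le_right (abs_nonneg _) hX
  have h4 := mul_le_mul_of_nonneg_left hEn (show 0 ≤ R + 2 by linarith)
  nlinarith

/-- Improved decay of the gradient away from the light cone. -/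
lemma weighted_decay (hR : 1 ≤ R) (hu : Solves u) (hS : ∀ j, Supp R (u j))
    (hc : 0 ≤ c) (hc1 : c ≤ 1) (h : ∀ T, EB u A T ∧ CT R u c T) : ∃ C, 0 ≤ C ∧
    ∀ j t, 0 ≤ t → ∀ a, wint R 1 (Dd a (u j)) t ≤ C * (1 + t) ^ ((1 : ℝ) / 4) ∧
      ∀ x y, radius x y ≤ t + R → |(Dd a (u j)).1 t x y| ≤
        C * (1 + t) ^ (-(3 / 8) : ℝ) / (t + R + 1 - radius x y) := by
  have h1 : ∀ q : Fin 2 × List (Fin 7) × Fin 3, ∃ C, 0 ≤ C ∧ (q ∈ Ix3 → ∀ t, 0 ≤ t → ∀ a,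
      wint R 1 (Dd a (GW q.2.1 (u q.1))) t ≤ C * (1 + t) ^ ((1 : ℝ) / 4)) := by
    intro q
    by_cases hq : q ∈ Ix3
    · obtain ⟨C, hC, hh⟩ := weighted_energy hR hu hS hc hc1 h q.1 q.2.1 (mem_Ix3.1 hq)
      exact ⟨C, hC, fun _ => hh⟩
    · exact ⟨0, le_rfl, fun h => absurd h hq⟩
  choose C hC0 hC using h1
  obtain ⟨C2, hC2, hks⟩ := grad_ks hR
  set K := ∑ q ∈ Ix3, C q with hK
  have hK0 : 0 ≤ K := Finset.sum_nonneg fun q _ => hC0 q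
  have hw : ∀ j (w : List (Fin 7)), w.length ≤ 3 → ∀ t, 0 ≤ t → ∀ a,
      wint R 1 (Dd a (GW w (u j))) t ≤ K * (1 + t) ^ ((1 : ℝ) / 4) := by
    intro j w hw t ht a
    have hq : ((j, w, a) : Fin 2 × List (Fin 7) × Fin 3) ∈ Ix3 := mem_Ix3.2 hw
    refine (hC (j, w, a) hq t ht a).trans ?_
    refine mul_le_mul_of_nonneg_right ?_ (by positivity)
    rw [hK]
    exact Finset.single_le_sum (f := fun q => C q) (fun q _ => hC0 q) hq
  refine ⟨K + √(C2 * K), by positivity, ?_⟩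
  intro j t ht a
  have hτ : 0 < 1 + t := by linarith
  refine ⟨(hw j [] (by simp) t ht a).trans ?_, ?_⟩
  · refine mul_le_mul_of_nonneg_right ?_ (by positivity)
    linarith [Real.sqrt_nonneg (C2 * K)]
  intro x y hr
  have hp : 0 < t + R + 1 - radius x y := by linarith
  have key := hks (u j) (hS j) t ht 1 le_rfl (K * (1 + t) ^ ((1 : ℝ) / 4)) (by positivity)
    (fun v hv a => hw j v hv t ht a) a x y hr
  rw [le_div_iff₀ hp]
  have h3 : (|(Dd a (u j)).1 t x y| * (t + R + 1 - radius x y)) ^ 2 ≤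
      (√(C2 * K) * (1 + t) ^ (-(3 / 8) : ℝ)) ^ 2 := by
    rw [mul_pow, mul_pow, Real.sq_sqrt (by positivity), sq_abs, ← Real.rpow_mul_natCast hτ.le]
    have e : (1 + t) ^ (-(3 / 8) * ((2 : ℕ) : ℝ)) = (1 + t) ^ ((1 : ℝ) / 4) / (1 + t) := by
      rw [← Real.rpow_sub_one hτ.ne']; congr 1; norm_num
    rw [e, ← mul_div_assoc, le_div_iff₀ hτ]
    norm_num at key
    nlinarith
  have h4 := abs_le_of_sq_le_sq h3 (by positivity)
  refine ((le_abs_self _).trans (abs_le_of_sq_le_sq h3 (by positivity))).trans ?_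
  refine mul_le_mul_of_nonneg_right ?_ (by positivity)
  linarith

end conf

end SF

/-! ### Limits along rays and their domination -/

namespace SF

section limits
variable {R c C σ a b t : ℝ} {u : Fin 2 → SF}

/-- Monotonicity along a ray: after adding an explicit decaying correction, `|V|` is non-increasing. -/
lemma ray_mono (hR : 1 ≤ R) (hu : Solves u) (hc : 0 ≤ c) (hc1 : c ≤ 1) (hC : ∀ T, CT R u c T)
    (hab : a ^ 2 + b ^ 2 = 1) (hσ : σ ≤ R) (j : Fin 2) {s : ℝ} (hs : tin σ ≤ s) (hst : s ≤ t) :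
    |prof (u j) σ a b t| - -(20 * R * √(R + 1 - σ) * (1 + t) ^ (-(13 / 16) : ℝ)) ≤
      |prof (u j) σ a b s| - -(20 * R * √(R + 1 - σ) * (1 + s) ^ (-(13 / 16) : ℝ)) := by
  have h0 := tin_nonneg σ
  have hreg : ∀ s, tin σ ≤ s → 0 < s + σ := fun s hs => by have := tin_reg hs; linarith
  have hm : ∀ s : ℝ, 0 ≤ s → 0 ≤ c * (1 + s) ^ (-(7 / 16) : ℝ) := fun s hs => by positivity
  have hp1 : 1 ≤ √(R + 1 - σ) := Real.one_le_sqrt.2 (by linarith)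
  set p := √(R + 1 - σ)
  have H : ∀ x ∈ Set.Ioo s t, ∃ e, HasDerivAt (prof (u j) σ a b)
      (-((1 / 2 * (Dd 0 (u (j + 1))).1 x ((x + σ) * a) ((x + σ) * b) ^ 2) * prof (u j) σ a b x) + e) x
      ∧ |e| ≤ 20 * R * p * (13 / 16 * (1 + x) ^ (-(29 / 16) : ℝ)) := by
    intro x hx
    have hx0 : 0 < x := (h0.trans hs).trans_lt hx.1
    obtain ⟨e, he1, he2⟩ := ray_eq hR hu (hC x x hx0.le le_rfl) (hm x hx0.le) hab hx0
      (tin_reg (hs.trans hx.1.le)) hσ j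
    refine ⟨e, he1, he2.trans ?_⟩
    have hτ : 0 < 1 + x := by linarith
    have hτs : 0 < √(1 + x) := Real.sqrt_pos.2 hτ
    have a2 := cub_time hR hc hc1 hx0.le hσ
    have a1 : 5 * ((c * (1 + x) ^ (-(7 / 16) : ℝ)) * p) / ((1 + x) * √(1 + x)) ≤
        5 * (R * p * (1 + x) ^ (-(29 / 16) : ℝ)) := by
      have e : (1 + x) ^ (-(31 / 16) : ℝ) * ((1 + x) * √(1 + x)) = (1 + x) ^ (-(7 / 16) : ℝ) := by
        rw [Real.sqrt_eq_rpow, ← Real.rpow_one_add' hτ.le (by norm_num), ← Real.rpow_add hτ]; norm_num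
      rw [← e, div_le_iff₀ (by positivity)]
      have a3 : (1 + x) ^ (-(31 / 16) : ℝ) ≤ (1 + x) ^ (-(29 / 16) : ℝ) :=
        Real.rpow_le_rpow_of_exponent_le (by linarith) (by norm_num)
      have a5 : c ≤ R := by linarith
      calc 5 * ((c * ((1 + x) ^ (-(31 / 16) : ℝ) * ((1 + x) * √(1 + x)))) * p)
          = 5 * (c * p * (1 + x) ^ (-(31 / 16) : ℝ)) * ((1 + x) * √(1 + x)) := by ring
        _ ≤ 5 * (R * p * (1 + x) ^ (-(29 / 16) : ℝ)) * ((1 + x) * √(1 + x)) := by gcongr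
    have a4 : c * (1 + x) ^ (-(29 / 16) : ℝ) ≤ p * (1 + x) ^ (-(29 / 16) : ℝ) := by
      gcongr; linarith
    have a6 := mul_le_mul_of_nonneg_left a4 (by linarith : 0 ≤ 10 * R)
    have a7 : 0 ≤ R * p * (1 + x) ^ (-(29 / 16) : ℝ) := by positivity
    linarith
  choose! e he1 he2 using H
  have hd : ∀ x, 0 ≤ x → HasDerivAt (fun x => -(20 * R * p * (1 + x) ^ (-(13 / 16) : ℝ)))
      (20 * R * p * (13 / 16 * (1 + x) ^ (-(29 / 16) : ℝ))) x := by
    intro x hx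
    have h1 : HasDerivAt (fun t : ℝ => 1 + t) 1 x := (hasDerivAt_id x).const_add 1
    have h2 := (h1.rpow_const (p := (-(13 / 16) : ℝ)) (Or.inl (by linarith))).const_mul (20 * R * p)
    refine h2.neg.congr_deriv ?_
    rw [show (-(13 / 16) - 1 : ℝ) = -(29 / 16) by norm_num]
    ring
  have hs0 := h0.trans hs
  have := damped (g := fun x => -(20 * R * p * (1 + x) ^ (-(13 / 16) : ℝ))) hst
    (fun x hx => (prof_cont (u j) hab (hreg x (hs.trans hx.1))).continuousWithinAt)
    (fun x hx => (hd x (hs0.trans hx.1)).continuousAt.continuousWithinAt)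
    he1 (fun s hs => by positivity) (fun x hx => hd x (hs0.trans hx.1.le)) he2
  linarith

/-- Rays outside the cone carry no profile. -/
lemma prof_zero {f : SF} (hf : Supp R f) (hR : 0 < R) (hab : a ^ 2 + b ^ 2 = 1) (ht : 0 ≤ t)
    (hσ : R ≤ σ) : prof f σ a b t = 0 := by
  have hr : t + R ≤ radius ((t + σ) * a) ((t + σ) * b) := by
    rw [radius_polar (by linarith) hab]; linarith
  have h := fun i => hf.Dd hR i t _ _ ht hr
  unfold prof fr
  rw [h 0, h 1, h 2, hf _ _ _ ht hr]; simp

/-- Existence of the limit along every ray. -/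
lemma exists_lim (hR : 1 ≤ R) (hu : Solves u) (hS : ∀ j, Supp R (u j)) (hc : 0 ≤ c) (hc1 : c ≤ 1)
    (hC : ∀ T, CT R u c T) (hab : a ^ 2 + b ^ 2 = 1) (j : Fin 2) :
    ∃ L, Tendsto (prof (u j) σ a b) atTop (𝓝 L) := by
  rcases le_total σ R with hσ | hσ
  · refine converges (t₀ := tin σ) (fun x hx => (prof_cont (u j) hab ?_).continuousWithinAt)
      (fun s t hs hst => ray_mono hR hu hc hc1 hC hab hσ j hs hst) (l := -(20 * R * √(R + 1 - σ) * 0)) ?_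
    · have := tin_reg hx; have := (tin_nonneg σ).trans hx; linarith
    · refine (Tendsto.const_mul _ ?_).neg
      exact (tendsto_rpow_neg_atTop (by norm_num)).comp (tendsto_atTop_add_const_left _ _ tendsto_id)
  · refine ⟨0, tendsto_const_nhds.congr' ?_⟩
    filter_upwards [eventually_ge_atTop 0] with t ht
    exact (prof_zero (hS j) (by linarith) hab ht hσ).symm

/-- The asymptotic profile of `f` along the ray with parameters `σ`, `(a, b)`. -/
def prf (f : SF) (σ a b : ℝ) : ℝ := limUnder atTop (prof f σ a b)

lemma prf_tendsto (hR : 1 ≤ R) (hu : Solves u) (hS : ∀ j, Supp R (u j)) (hc : 0 ≤ c) (hc1 : c ≤ 1)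
    (hC : ∀ T, CT R u c T) (hab : a ^ 2 + b ^ 2 = 1) (σ : ℝ) (j : Fin 2) :
    Tendsto (prof (u j) σ a b) atTop (𝓝 (prf (u j) σ a b)) :=
  tendsto_nhds_limUnder (exists_lim hR hu hS hc hc1 hC hab j)

lemma prf_zero {f : SF} (hf : Supp R f) (hR : 0 < R) (hab : a ^ 2 + b ^ 2 = 1)
    (hσ : R ≤ σ) : prf f σ a b = 0 := by
  refine Tendsto.limUnder_eq (tendsto_const_nhds.congr' ?_)
  filter_upwards [eventually_ge_atTop 0] with t ht
  exact (prof_zero hf hR hab ht hσ).symm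

/-- On `0 < r` the operator in the statement is the profile. -/
lemma Vop_eq (f : SF) (hab : a ^ 2 + b ^ 2 = 1) (hr : 0 < t + σ) :
    Vop f.1 t σ a b = prof f σ a b t := by
  set x := (t + σ) * a
  set y := (t + σ) * b
  have hrad : radius x y = t + σ := radius_polar hr.le hab
  have hpos : (0 : ℝ) < x ^ 2 + y ^ 2 := by
    have : x ^ 2 + y ^ 2 = (t + σ) ^ 2 := by rw [← hrad, radius_sq]
    rw [this]; positivity
  have hsq : √(x ^ 2 + y ^ 2) = t + σ := hrad
  have hx : x / (t + σ) = a := by simp only [x]; field_simp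
  have hy : y / (t + σ) = b := by simp only [y]; field_simp
  have hrs : 0 < √(t + σ) := Real.sqrt_pos.2 hr
  have e1 : HasDerivAt (fun s => radius s y ^ ((1 : ℝ) / 2)) (a / (2 * √(t + σ))) x := by
    have h1 : HasDerivAt (fun s : ℝ => s ^ 2 + y ^ 2) (2 * x) x := by
      simpa using ((hasDerivAt_id x).pow 2).add_const (y ^ 2)
    have h2 := h1.sqrt hpos.ne'
    have h3 := h2.rpow_const (p := (1 : ℝ) / 2) (Or.inl (by rw [hsq]; exact hr.ne'))
    refine h3.congr_deriv ?_
    rw [hsq, show ((1 : ℝ) / 2 - 1) = -(1 / 2) by norm_num, Real.rpow_neg hr.le, ← Real.sqrt_eq_rpow,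
      ← hx]
    field_simp
  have e2 : HasDerivAt (fun s => radius x s ^ ((1 : ℝ) / 2)) (b / (2 * √(t + σ))) y := by
    have h1 : HasDerivAt (fun s : ℝ => x ^ 2 + s ^ 2) (2 * y) y := by
      simpa using ((hasDerivAt_id y).pow 2).const_add (x ^ 2)
    have h2 := h1.sqrt hpos.ne'
    have h3 := h2.rpow_const (p := (1 : ℝ) / 2) (Or.inl (by rw [hsq]; exact hr.ne'))
    refine h3.congr_deriv ?_
    rw [hsq, show ((1 : ℝ) / 2 - 1) = -(1 / 2) by norm_num, Real.rpow_neg hr.le, ← Real.sqrt_eq_rpow,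
      ← hy]
    field_simp
  have d0 := ((hasDerivAt_t f t x y).const_mul (radius x y ^ ((1 : ℝ) / 2))).deriv
  have d1 := (e1.mul (hasDerivAt_x f t x y)).deriv
  have d2 := (e2.mul (hasDerivAt_y f t x y)).deriv
  have hrt : radius x y ^ ((1 : ℝ) / 2) = √(t + σ) := by rw [hrad, Real.sqrt_eq_rpow]
  rw [hrt] at d1 d2
  rw [hrt] at d0
  unfold Vop Uop
  show 1 / 2 * (x / radius x y * p1 _ t x y + y / radius x y * p2 _ t x y - pt _ t x y) = _
  rw [hrad, hx, hy]
  unfold p1 p2 pt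
  unfold prof fr
  show 1 / 2 * (a * deriv (fun s => radius s y ^ ((1 : ℝ) / 2) * f.1 t s y) x + b *
    deriv (fun s => radius x s ^ ((1 : ℝ) / 2) * f.1 t x s) y -
    deriv (fun s => radius x y ^ ((1 : ℝ) / 2) * f.1 s x y) t) = _
  rw [hrt]
  have d1' : deriv (fun s => radius s y ^ ((1 : ℝ) / 2) * f.1 t s y) x = _ := d1
  have d2' : deriv (fun s => radius x s ^ ((1 : ℝ) / 2) * f.1 t x s) y = _ := d2
  rw [d1', d2', d0]
  have hab' : b ^ 2 = 1 - a ^ 2 := by linarith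
  have hq : √(t + σ) * √(t + σ) = t + σ := Real.mul_self_sqrt hr.le
  show 1 / 2 * (a * (a / (2 * √(t + σ)) * f.1 t x y + √(t + σ) * (Dd 1 f).1 t x y) +
    b * (b / (2 * √(t + σ)) * f.1 t x y + √(t + σ) * (Dd 2 f).1 t x y) -
    √(t + σ) * (Dd 0 f).1 t x y) = √(t + σ) / 2 * (a * (Dd 1 f).1 t x y + b * (Dd 2 f).1 t x y -
      (Dd 0 f).1 t x y) + f.1 t x y / (4 * √(t + σ))
  field_simp
  linear_combination 4 * (f.1 t x y) * hab

end limits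

section domination
variable {R c C σ a b t : ℝ} {u : Fin 2 → SF}

/-- The region `p² ≤ 1 + t` lies in `1 + t ≤ 4r`. -/
lemma near_reg (hR : 1 ≤ R) (hσ : σ ≤ R) (h : (R + 1 - σ) ^ 2 ≤ 1 + t) :
    1 + t ≤ 4 * (t + σ) := by
  nlinarith [sq_nonneg (R + 1 - σ - 1 / 2), sq_nonneg (R + 1 - σ - 1)]

/-- The profile on entering the region `p² ≤ 1 + t`. -/
lemma prof_enter (hR : 1 ≤ R) (hc : 0 ≤ c) (hc1 : c ≤ 1) (hC : ∀ T, CT R u c T) (hC0 : 0 ≤ C)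
    (hD : ∀ j t, 0 ≤ t → ∀ i x y, radius x y ≤ t + R →
      |(Dd i (u j)).1 t x y| ≤ C * (1 + t) ^ (-(3 / 8) : ℝ) / (t + R + 1 - radius x y))
    (hab : a ^ 2 + b ^ 2 = 1) (hσ : σ ≤ R) (ht : 1 + t = (R + 1 - σ) ^ 2) (j : Fin 2) :
    |prof (u j) σ a b t| ≤ (2 * R * C + 1) * (R + 1 - σ) ^ (-(3 / 4) : ℝ) := by
  -- At `1 + t = p²` the bound `√r · t^{-3/8} p^{-1}` for the profile is `p^{-3/4}`.
  have hreg := near_reg hR hσ ht.ge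
  have hp : 1 ≤ R + 1 - σ := by linarith
  have hp0 : 0 < R + 1 - σ := by linarith
  have ht0 : 0 ≤ t := by nlinarith
  have hr : 0 < t + σ := by linarith
  have hrs : 0 < √(t + σ) := Real.sqrt_pos.2 hr
  have h1 := ((hC t t ht0 le_rfl).ray hab hr.le hσ j (w := []) (by simp)).1
  have hd : ∀ i, _ := fun i => hD j t ht0 i ((t + σ) * a) ((t + σ) * b)
    (by rw [radius_polar hr.le hab]; linarith)
  rw [radius_polar hr.le hab, show t + R + 1 - (t + σ) = R + 1 - σ by ring] at hd
  rw [GW_nil] at h1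
  have hsτ : √(1 + t) = R + 1 - σ := by rw [ht, Real.sqrt_sq hp0.le]
  have b1 := sqrt_le_R hR ht0 hσ
  have b2 := sqrt_quarter (by linarith : 0 ≤ 1 + t) hreg
  rw [hsτ] at b1 b2
  rw [ht, ← Real.rpow_natCast, ← Real.rpow_mul hp0.le] at hd h1
  set p := R + 1 - σ
  have d0 := hd 0
  have d1 := hd 1
  have d2 := hd 2
  have ha : |a| ≤ 1 := abs_le_one_iff_mul_self_le_one.2 (by nlinarith [sq_nonneg b])
  have hb : |b| ≤ 1 := abs_le_one_iff_mul_self_le_one.2 (by nlinarith [sq_nonneg a])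
  unfold prof fr
  set D0 := (Dd 0 (u j)).1 t ((t + σ) * a) ((t + σ) * b)
  set D1 := (Dd 1 (u j)).1 t ((t + σ) * a) ((t + σ) * b)
  set D2 := (Dd 2 (u j)).1 t ((t + σ) * a) ((t + σ) * b)
  set F := (u j).1 t ((t + σ) * a) ((t + σ) * b)
  have e0 : ((2 : ℕ) : ℝ) * (-(3 / 8)) = -(3 / 4) := by norm_num
  rw [e0] at d0 d1 d2
  have e1 : |a * D1 + b * D2 - D0| ≤ 3 * (C * p ^ (-(3 / 4) : ℝ) / p) := by
    refine (abs_sub _ _).trans ?_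
    have := abs_add_le (a * D1) (b * D2)
    rw [abs_mul, abs_mul] at this
    have := mul_le_mul ha d1 (abs_nonneg _) zero_le_one
    have := mul_le_mul hb d2 (abs_nonneg _) zero_le_one
    linarith
  have hP : 0 < p ^ (-(3 / 4) : ℝ) := Real.rpow_pos_of_pos hp0 _
  rw [add_mul]
  refine (abs_add_le _ _).trans (add_le_add ?_ ?_)
  · rw [abs_mul, abs_of_pos (by positivity : 0 < √(t + σ) / 2)]
    calc √(t + σ) / 2 * |a * D1 + b * D2 - D0| ≤ (R * p) / 2 * (3 * (C * p ^ (-(3 / 4) : ℝ) / p)) := by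
          gcongr
      _ = 3 / 2 * (R * C * p ^ (-(3 / 4) : ℝ)) := by field_simp
      _ ≤ _ := by
        have : 0 ≤ R * C * p ^ (-(3 / 4) : ℝ) := by positivity
        linarith
  · rw [abs_div, abs_of_pos (by positivity : 0 < 4 * √(t + σ)), div_le_iff₀ (by positivity), one_mul]
    refine h1.trans ?_
    have e2 : p ^ (((2 : ℕ) : ℝ) * (-(7 / 16))) * √p = p ^ (-(3 / 8) : ℝ) := by
      rw [Real.sqrt_eq_rpow, ← Real.rpow_add hp0]; norm_num
    have e3 : p ^ (-(3 / 4) : ℝ) * p = p ^ (1 / 4 : ℝ) := by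
      rw [← Real.rpow_add_one hp0.ne']; norm_num
    have e4 : p ^ (-(3 / 8) : ℝ) ≤ p ^ (1 / 4 : ℝ) :=
      Real.rpow_le_rpow_of_exponent_le hp (by norm_num)
    rw [mul_assoc, e2]
    have e5 : 0 < p ^ (-(3 / 8) : ℝ) := Real.rpow_pos_of_pos hp0 _
    nlinarith [mul_le_mul_of_nonneg_left b2 hP.le]

/-- `|V| ≤ K p^{-3/4}` in the region `p² ≤ 1 + t`: the bound holds on entering the region and is propagated
by `ray_mono`. -/
lemma prof_dom (hR : 1 ≤ R) (hu : Solves u) (hc : 0 ≤ c) (hc1 : c ≤ 1) (hC : ∀ T, CT R u c T)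
    (hC0 : 0 ≤ C)
    (hD : ∀ j t, 0 ≤ t → ∀ i x y, radius x y ≤ t + R →
      |(Dd i (u j)).1 t x y| ≤ C * (1 + t) ^ (-(3 / 8) : ℝ) / (t + R + 1 - radius x y))
    (hab : a ^ 2 + b ^ 2 = 1) (hσ : σ ≤ R) (ht : (R + 1 - σ) ^ 2 ≤ 1 + t) (j : Fin 2) :
    |prof (u j) σ a b t| ≤ (2 * R * C + 1 + 20 * R) * (R + 1 - σ) ^ (-(3 / 4) : ℝ) := by
  have hp : 1 ≤ R + 1 - σ := by linarith
  have hp0 : 0 < R + 1 - σ := by linarith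
  set s := (R + 1 - σ) ^ 2 - 1 with hs
  have hs1 : 1 + s = (R + 1 - σ) ^ 2 := by rw [hs]; ring
  have hs0 : 0 ≤ s := by nlinarith
  have h1 := prof_enter hR hc hc1 hC hC0 hD hab hσ hs1 j
  have h2 := ray_mono (t := t) hR hu hc hc1 hC hab hσ j (tin_le hs0 (near_reg hR hσ hs1.ge))
    (by linarith)
  have h3 : 0 ≤ 20 * R * √(R + 1 - σ) * (1 + t) ^ (-(13 / 16) : ℝ) :=
    mul_nonneg (by positivity) (Real.rpow_nonneg (by linarith) _)
  have h4 : √(R + 1 - σ) * (1 + s) ^ (-(13 / 16) : ℝ) ≤ (R + 1 - σ) ^ (-(3 / 4) : ℝ) := by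
    rw [hs1, ← Real.rpow_natCast, ← Real.rpow_mul hp0.le, Real.sqrt_eq_rpow, ← Real.rpow_add hp0]
    exact Real.rpow_le_rpow_of_exponent_le hp (by norm_num)
  have h5 := mul_le_mul_of_nonneg_left h4 (by linarith : 0 ≤ 20 * R)
  linarith

/-- The bound of `prof_dom` in the limit. -/
lemma prf_dom (hR : 1 ≤ R) (hu : Solves u) (hS : ∀ j, Supp R (u j)) (hc : 0 ≤ c) (hc1 : c ≤ 1)
    (hC : ∀ T, CT R u c T) (hC0 : 0 ≤ C)
    (hD : ∀ j t, 0 ≤ t → ∀ i x y, radius x y ≤ t + R →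
      |(Dd i (u j)).1 t x y| ≤ C * (1 + t) ^ (-(3 / 8) : ℝ) / (t + R + 1 - radius x y))
    (hab : a ^ 2 + b ^ 2 = 1) (hσ : σ ≤ R) (j : Fin 2) :
    |prf (u j) σ a b| ≤ (2 * R * C + 1 + 20 * R) * (R + 1 - σ) ^ (-(3 / 4) : ℝ) := by
  refine le_of_tendsto (prf_tendsto hR hu hS hc hc1 hC hab σ j).abs ?_
  filter_upwards [eventually_ge_atTop ((R + 1 - σ) ^ 2)] with t ht
  exact prof_dom hR hu hc hc1 hC hC0 hD hab hσ (by linarith) j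

end domination

end SF

/-! ### The profile part of the defect -/

namespace SF

/-- The decay information about a global solution from which scattering is deduced: crude decay (with
constant `c`), the weighted energy bound and the improved decay away from the cone (with constant `C`). -/
structure Good (R : ℝ) (u : Fin 2 → SF) (c C : ℝ) : Prop where
  hR : 1 ≤ R
  hu : Solves u
  hS : ∀ j, Supp R (u j)
  hc : 0 ≤ c
  hc1 : c ≤ 1
  hC : ∀ T, CT R u c T
  hC0 : 0 ≤ C
  hW : ∀ j t, 0 ≤ t → ∀ i, wint R 1 (Dd i (u j)) t ≤ C * (1 + t) ^ ((1 : ℝ) / 4)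
  hD : ∀ j t, 0 ≤ t → ∀ i x y, radius x y ≤ t + R →
    |(Dd i (u j)).1 t x y| ≤ C * (1 + t) ^ (-(3 / 8) : ℝ) / (t + R + 1 - radius x y)

/-- The part of the `L²` defect, on the ray `σ`, which is due to the profile: `|V - V⁺|²` once the
ray has entered `p² ≤ 1 + t`, and `|V⁺|²` before. -/
def Hf (R : ℝ) (f : SF) (t σ a b : ℝ) : ℝ :=
  if (R + 1 - σ) ^ 2 ≤ 1 + t then (prof f σ a b t - prf f σ a b) ^ 2 else prf f σ a b ^ 2

lemma Hf_nonneg (R : ℝ) (f : SF) (t σ a b : ℝ) : 0 ≤ Hf R f t σ a b := by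
  unfold Hf; split_ifs <;> positivity

/-- `Hf` in the coordinates `(σ, θ)`, extended by zero. -/
def kf (R : ℝ) (f : SF) (t : ℝ) (q : ℝ × ℝ) : ENNReal :=
  if q.1 < R ∧ q.2 ∈ Set.Ioo (-π) π then ENNReal.ofReal (Hf R f t q.1 (cos q.2) (sin q.2)) else 0

/-- An integrable majorant of `kf`. -/
def kb (R K : ℝ) (q : ℝ × ℝ) : ENNReal :=
  if q.1 < R ∧ q.2 ∈ Set.Ioo (-π) π then
    ENNReal.ofReal (4 * K ^ 2 * (R + 1 - q.1) ^ (-(3 / 2) : ℝ)) else 0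

section
variable {R c C K σ a b t : ℝ} {u : Fin 2 → SF}

/-- The majorant is integrable: `p^{-3/2}` on `p ≥ 1`. -/
lemma kb_fin (R K : ℝ) : ∫⁻ q, kb R K q ≠ ⊤ := by
  have h1 : Integrable ((Set.Ioi (1 : ℝ)).indicator (fun s : ℝ => s ^ (-(3 / 2) : ℝ))) :=
    (integrableOn_Ioi_rpow_of_lt (by norm_num) one_pos).integrable_indicator measurableSet_Ioi
  have h2 : Integrable ((Set.Ioo (-π) π).indicator (fun _ : ℝ => 4 * K ^ 2)) := by
    refine IntegrableOn.integrable_indicator ?_ measurableSet_Ioo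
    exact integrableOn_const (by simp)
  have h3 := (h1.comp_sub_left (R + 1)).mul_prod h2
  rw [← Measure.volume_eq_prod] at h3
  refine ne_top_of_le_ne_top h3.lintegral_lt_top.ne (lintegral_mono fun q => ?_)
  unfold kb
  split_ifs with h
  · refine le_of_eq ?_
    rw [Set.indicator_of_mem (show R + 1 - q.1 ∈ Set.Ioi (1 : ℝ) by
      simp only [Set.mem_Ioi]; linarith [h.1]), Set.indicator_of_mem h.2]
    ring_nf
  · exact zero_le

/-- Domination, uniformly in time. -/
lemma kf_le (h : Good R u c C) (j : Fin 2) (t : ℝ) (q : ℝ × ℝ) :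
    kf R (u j) t q ≤ kb R (2 * R * C + 1 + 20 * R) q := by
  obtain ⟨hR, hu, hS, hc, hc1, hC, hC0, hW, hD⟩ := h
  unfold kf kb
  split_ifs with hq
  · refine ENNReal.ofReal_le_ofReal ?_
    have hcs := cos_sq_add_sin_sq q.2
    have hp : 0 < R + 1 - q.1 := by linarith [hq.1]
    have h1 := prf_dom hR hu hS hc hc1 hC hC0 hD hcs hq.1.le j
    set K := 2 * R * C + 1 + 20 * R
    have e : (R + 1 - q.1) ^ (-(3 / 2) : ℝ) = ((R + 1 - q.1) ^ (-(3 / 4) : ℝ)) ^ 2 := by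
      rw [← Real.rpow_mul_natCast hp.le]; norm_num
    rw [e]
    set P := (R + 1 - q.1) ^ (-(3 / 4) : ℝ)
    unfold Hf
    split_ifs with hn
    · have h2 := prof_dom hR hu hc hc1 hC hC0 hD hcs hq.1.le hn j
      have h3 := (abs_sub (prof (u j) q.1 (cos q.2) (sin q.2) t) (prf (u j) q.1 (cos q.2) (sin q.2))).trans
        (add_le_add h2 h1)
      have h4 := pow_le_pow_left₀ (abs_nonneg _) h3 2
      rw [sq_abs] at h4
      exact h4.trans (le_of_eq (by ring))
    · have h4 := pow_le_pow_left₀ (abs_nonneg _) h1 2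
      rw [sq_abs] at h4
      refine h4.trans ?_
      rw [mul_pow]
      nlinarith [mul_nonneg (sq_nonneg K) (sq_nonneg P)]
  · exact le_rfl

lemma prof_meas (f : SF) (t : ℝ) :
    Measurable (fun q : ℝ × ℝ => prof f q.1 (cos q.2) (sin q.2) t) := by
  have h : ∀ g : SF, Measurable (fun q : ℝ × ℝ =>
      g.1 t ((t + q.1) * cos q.2) ((t + q.1) * sin q.2)) := fun g =>
    ((cont_slice g t).comp (g := fun z : ℝ × ℝ => g.1 t z.1 z.2)
      (f := fun q : ℝ × ℝ => ((t + q.1) * cos q.2, (t + q.1) * sin q.2)) (by fun_prop)).measurable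
  unfold prof fr
  have h0 := h (Dd 0 f)
  have h1 := h (Dd 1 f)
  have h2 := h (Dd 2 f)
  have h3 := h f
  have hs : Measurable (fun q : ℝ × ℝ => √(t + q.1)) := by fun_prop
  have hc : Measurable (fun q : ℝ × ℝ => cos q.2) := by fun_prop
  have hn : Measurable (fun q : ℝ × ℝ => sin q.2) := by fun_prop
  exact ((hs.div_const 2).mul (((hc.mul h1).add (hn.mul h2)).sub h0)).add (h3.div (hs.const_mul 4))

lemma prf_meas (h : Good R u c C) (j : Fin 2) :
    Measurable (fun q : ℝ × ℝ => prf (u j) q.1 (cos q.2) (sin q.2)) := by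
  refine measurable_of_tendsto_metrizable (fun n : ℕ => prof_meas (u j) (n : ℝ))
    (tendsto_pi_nhds.2 fun q => ?_)
  exact (prf_tendsto h.hR h.hu h.hS h.hc h.hc1 h.hC (cos_sq_add_sin_sq q.2) q.1 j).comp
    tendsto_natCast_atTop_atTop

lemma kf_meas (h : Good R u c C) (j : Fin 2) (t : ℝ) : Measurable (kf R (u j) t) := by
  unfold kf Hf
  have h1 := prof_meas (u j) t
  have h2 := prf_meas h j
  refine Measurable.ite ?_ (Measurable.ennreal_ofReal (Measurable.ite ?_ ?_ ?_)) measurable_const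
  · exact (measurableSet_lt measurable_fst measurable_const).inter (measurable_snd measurableSet_Ioo)
  · exact measurableSet_le (by fun_prop) measurable_const
  · exact (h1.sub h2).pow_const 2
  · exact h2.pow_const 2

/-- For every ray the condition `p² ≤ 1 + t` holds for large `t`, and `V → V⁺` on it; dominated
convergence applies. -/
lemma kf_tendsto (h : Good R u c C) (j : Fin 2) :
    Tendsto (fun t => ∫⁻ q, kf R (u j) t q) atTop (𝓝 0) := by
  have := tendsto_lintegral_filter_of_dominated_convergence (μ := (volume : Measure (ℝ × ℝ)))
    (l := (atTop : Filter ℝ)) (F := fun t q => kf R (u j) t q) (f := fun _ => 0)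
    (kb R (2 * R * C + 1 + 20 * R)) (.of_forall fun t => kf_meas h j t)
    (.of_forall fun t => .of_forall fun q => kf_le h j t q) (kb_fin _ _) (.of_forall fun q => ?_)
  · simpa using this
  unfold kf
  split_ifs with hq
  · rw [← ENNReal.ofReal_zero]
    refine ENNReal.tendsto_ofReal ?_
    have h1 := prf_tendsto h.hR h.hu h.hS h.hc h.hc1 h.hC (cos_sq_add_sin_sq q.2) q.1 j
    have h2 := (h1.sub_const (prf (u j) q.1 (cos q.2) (sin q.2))).pow 2
    rw [sub_self, zero_pow two_ne_zero] at h2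
    refine h2.congr' ?_
    filter_upwards [eventually_ge_atTop ((R + 1 - q.1) ^ 2)] with t ht
    unfold Hf
    rw [if_pos (by linarith)]
  · exact tendsto_const_nhds

/-- Integration of the profile part of the defect over the plane, in polar coordinates. -/
lemma kf_polar (R : ℝ) (f : SF) (t : ℝ) :
    ∫⁻ z : ℝ × ℝ, ENNReal.ofReal (if radius z.1 z.2 - t < R then Hf R f t (radius z.1 z.2 - t)
      (z.1 / radius z.1 z.2) (z.2 / radius z.1 z.2) / radius z.1 z.2 else 0) ≤
    ∫⁻ q, kf R f t q := by
  rw [← lintegral_comp_polarCoord_symm, ← lintegral_sub_right_eq_self (kf R f t) (t, 0)]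
  refine (setLIntegral_mono' polarCoord.open_target.measurableSet fun q hq => ?_).trans
    (setLIntegral_le_lintegral _ _)
  rw [polarCoord_target] at hq
  have hq1 : 0 < q.1 := hq.1
  have hrad : radius (q.1 * cos q.2) (q.1 * sin q.2) = q.1 := radius_cs hq1.le _
  rw [polarCoord_symm_apply]
  show ENNReal.ofReal q.1 * ENNReal.ofReal (if radius (q.1 * cos q.2) (q.1 * sin q.2) - t < R then
    Hf R f t (radius (q.1 * cos q.2) (q.1 * sin q.2) - t)
      (q.1 * cos q.2 / radius (q.1 * cos q.2) (q.1 * sin q.2))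
      (q.1 * sin q.2 / radius (q.1 * cos q.2) (q.1 * sin q.2)) /
        radius (q.1 * cos q.2) (q.1 * sin q.2) else 0) ≤ _
  rw [hrad, mul_div_cancel_left₀ _ hq1.ne', mul_div_cancel_left₀ _ hq1.ne']
  unfold kf
  by_cases h : q.1 - t < R
  · rw [if_pos h, if_pos ⟨h, by simpa using hq.2⟩, ← ENNReal.ofReal_mul hq1.le]
    simp only [Prod.fst_sub, Prod.snd_sub, sub_zero]
    rw [mul_div_cancel₀ _ hq1.ne']
  · rw [if_neg h]; simp

/-- Pointwise bound for one component of the defect. -/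
lemma defect_le (h : Good R u c C) (j : Fin 2) (i : Fin 3) (hab : a ^ 2 + b ^ 2 = 1) (ht : 0 ≤ t)
    (hr : 0 < t + σ) (hσ : σ < R) :
    ((Dd i (u j)).1 t ((t + σ) * a) ((t + σ) * b) - hat a b i * (prf (u j) σ a b / √(t + σ))) ^ 2 ≤
      800 * (1 + t) ^ (-(19 / 8) : ℝ) + 2 * (1 + t) ^ (-(1 / 2) : ℝ) *
        ((R + 1 - σ) * (Dd i (u j)).1 t ((t + σ) * a) ((t + σ) * b) ^ 2) +
      2 * (Hf R (u j) t σ a b / (t + σ)) := by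
  have hτ : 0 < 1 + t := by linarith
  have hp : 1 ≤ R + 1 - σ := by linarith
  have hp0 : 0 < R + 1 - σ := by linarith
  have hrs : 0 < √(t + σ) := Real.sqrt_pos.2 hr
  have hrq : √(t + σ) ^ 2 = t + σ := Real.sq_sqrt hr.le
  have hh : hat a b i ^ 2 ≤ 1 := by
    fin_cases i
    · simp [hat]
    · simp only [hat]; show a ^ 2 ≤ 1; nlinarith [sq_nonneg b]
    · simp only [hat]; show b ^ 2 ≤ 1; nlinarith [sq_nonneg a]
  have hA : 0 ≤ 800 * (1 + t) ^ (-(19 / 8) : ℝ) := by positivity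
  have hB : 0 ≤ 2 * (1 + t) ^ (-(1 / 2) : ℝ) *
        ((R + 1 - σ) * (Dd i (u j)).1 t ((t + σ) * a) ((t + σ) * b) ^ 2) := by positivity
  have key : ∀ X : ℝ, (hat a b i * (X / √(t + σ))) ^ 2 ≤ X ^ 2 / (t + σ) := by
    intro X
    rw [mul_pow, div_pow, hrq]
    exact mul_le_of_le_one_left (by positivity) hh
  have sqs : ∀ A B : ℝ, (A - B) ^ 2 ≤ 2 * A ^ 2 + 2 * B ^ 2 := fun A B => by
    nlinarith [sq_nonneg (A + B)]
  unfold Hf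
  split_ifs with hn
  · have h1 := grad_err (h.hC t t ht le_rfl) (mul_nonneg h.hc (by positivity)) hab ht
      (near_reg h.hR hσ.le hn) hσ.le j (w := []) (by simp) i
    rw [GW_nil] at h1
    have h2 := pow_le_pow_left₀ (abs_nonneg _) h1 2
    rw [sq_abs] at h2
    have h3 : (20 * (c * (1 + t) ^ (-(7 / 16) : ℝ) * √(R + 1 - σ)) / (1 + t)) ^ 2 ≤
        400 * (1 + t) ^ (-(19 / 8) : ℝ) := by
      have e1 : √(R + 1 - σ) ^ 2 = R + 1 - σ := Real.sq_sqrt hp0.le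
      have e2 : R + 1 - σ ≤ (1 + t) ^ (1 / 2 : ℝ) := by
        rw [← Real.sqrt_eq_rpow]; exact Real.le_sqrt_of_sq_le hn
      have e3 : (1 + t) ^ (-(19 / 8) : ℝ) * (1 + t) ^ 2 =
          ((1 + t) ^ (-(7 / 16) : ℝ)) ^ 2 * (1 + t) ^ (1 / 2 : ℝ) := by
        rw [← Real.rpow_mul_natCast hτ.le, ← Real.rpow_natCast (1 + t) 2, ← Real.rpow_add hτ,
          ← Real.rpow_add hτ]
        norm_num
      rw [div_pow, div_le_iff₀ (by positivity), mul_assoc 400, e3]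
      have e4 : c ^ 2 ≤ 1 := pow_le_one₀ h.hc h.hc1
      calc (20 * (c * (1 + t) ^ (-(7 / 16) : ℝ) * √(R + 1 - σ))) ^ 2
          = 400 * (c ^ 2 * (((1 + t) ^ (-(7 / 16) : ℝ)) ^ 2 * √(R + 1 - σ) ^ 2)) := by ring
        _ ≤ 400 * (1 * (((1 + t) ^ (-(7 / 16) : ℝ)) ^ 2 * (1 + t) ^ (1 / 2 : ℝ))) := by
            rw [e1]; gcongr
        _ = _ := by ring
    have h4 := key (prf (u j) σ a b - prof (u j) σ a b t)
    have h5 := sqs ((Dd i (u j)).1 t ((t + σ) * a) ((t + σ) * b) -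
      hat a b i * (prof (u j) σ a b t / √(t + σ)))
      (hat a b i * ((prf (u j) σ a b - prof (u j) σ a b t) / √(t + σ)))
    have e5 : (prof (u j) σ a b t - prf (u j) σ a b) ^ 2 = (prf (u j) σ a b - prof (u j) σ a b t) ^ 2 := by
      ring
    have e6 : (Dd i (u j)).1 t ((t + σ) * a) ((t + σ) * b) -
      hat a b i * (prof (u j) σ a b t / √(t + σ)) -
      hat a b i * ((prf (u j) σ a b - prof (u j) σ a b t) / √(t + σ)) =
      (Dd i (u j)).1 t ((t + σ) * a) ((t + σ) * b) - hat a b i * (prf (u j) σ a b / √(t + σ)) := by ring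
    rw [e6] at h5
    rw [e5]
    linarith
  · have h4 := key (prf (u j) σ a b)
    have h5 := sqs ((Dd i (u j)).1 t ((t + σ) * a) ((t + σ) * b))
      (hat a b i * (prf (u j) σ a b / √(t + σ)))
    have h6 : 1 ≤ (1 + t) ^ (-(1 / 2) : ℝ) * (R + 1 - σ) := by
      rw [Real.rpow_neg hτ.le, ← div_eq_inv_mul, ← Real.sqrt_eq_rpow, one_le_div (Real.sqrt_pos.2 hτ)]
      exact Real.sqrt_le_iff.2 ⟨hp0.le, (not_le.1 hn).le⟩
    have h7 := mul_le_mul_of_nonneg_right h6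
      (sq_nonneg ((Dd i (u j)).1 t ((t + σ) * a) ((t + σ) * b)))
    linarith

end
end SF

/-! ### Convergence in mean square and the conclusion -/

namespace SF

section
variable {R c C σ a b t : ℝ} {u : Fin 2 → SF}

/-- The integrand of `scatDist`. -/
def defect (f : SF) (Vp : ℝ → ℝ → ℝ → ℝ) (t : ℝ) (z : ℝ × ℝ) : ℝ :=
  ((Dd 0 f).1 t z.1 z.2 - (-1) * Vsharp Vp t z.1 z.2) ^ 2 +
    ((Dd 1 f).1 t z.1 z.2 - (z.1 / radius z.1 z.2) * Vsharp Vp t z.1 z.2) ^ 2 +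
    ((Dd 2 f).1 t z.1 z.2 - (z.2 / radius z.1 z.2) * Vsharp Vp t z.1 z.2) ^ 2

lemma scatDist_eq (f : SF) (Vp : ℝ → ℝ → ℝ → ℝ) (t : ℝ) :
    scatDist f.1 Vp t = √(∫ z, defect f Vp t z) := by
  unfold scatDist defect
  rw [pt_eq, p1_eq, p2_eq]

/-- `defect_le` summed over the components, in Cartesian coordinates. Outside the cone the defect vanishes. -/
lemma defect_bound (h : Good R u c C) (j : Fin 2) (ht : 0 ≤ t) {z : ℝ × ℝ}
    (hz : 0 < radius z.1 z.2) :
    ENNReal.ofReal (defect (u j) (prf (u j)) t z) ≤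
      (sq (t + R)).indicator (fun _ => ENNReal.ofReal (2400 * (1 + t) ^ (-(19 / 8) : ℝ))) z +
      ENNReal.ofReal (2 * (1 + t) ^ (-(1 / 2) : ℝ) *
        ∑ i, (t + R + 1 - radius z.1 z.2) ^ 1 * (Dd i (u j)).1 t z.1 z.2 ^ 2) +
      6 * ENNReal.ofReal (if radius z.1 z.2 - t < R then Hf R (u j) t (radius z.1 z.2 - t)
        (z.1 / radius z.1 z.2) (z.2 / radius z.1 z.2) / radius z.1 z.2 else 0) := by
  have hR0 : 0 < R := by linarith [h.hR]
  obtain ⟨x, y⟩ := z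
  simp only at hz ⊢
  have hab : (x / radius x y) ^ 2 + (y / radius x y) ^ 2 = 1 := by
    rw [div_pow, div_pow, ← add_div, ← radius_sq x y, div_self (by positivity)]
  by_cases hr : radius x y - t < R
  · rw [if_pos hr]
    have hd := fun i => defect_le (σ := radius x y - t) h j i hab ht (by linarith) hr
    have ex : (t + (radius x y - t)) * (x / radius x y) = x := by
      rw [add_sub_cancel]; field_simp
    have ey : (t + (radius x y - t)) * (y / radius x y) = y := by
      rw [add_sub_cancel]; field_simp
    rw [ex, ey, add_sub_cancel, show R + 1 - (radius x y - t) = t + R + 1 - radius x y by ring] at hd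
    have hmem : (x, y) ∈ sq (t + R) := by
      by_contra hc
      have := notMem_sq hc
      simp only at this
      linarith
    rw [Set.indicator_of_mem hmem]
    have hp : 0 ≤ t + R + 1 - radius x y := by linarith
    have hH := Hf_nonneg R (u j) t (radius x y - t) (x / radius x y) (y / radius x y)
    rw [show (6 : ENNReal) = ENNReal.ofReal 6 by norm_num, ← ENNReal.ofReal_mul (by norm_num),
      ← ENNReal.ofReal_add (by positivity) (by positivity),
      ← ENNReal.ofReal_add (by positivity) (by positivity)]
    refine ENNReal.ofReal_le_ofReal ?_
    unfold defect Vsharp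
    have hV : ∀ V : ℝ, radius x y ^ (-(1 : ℝ) / 2) * V = V / √(radius x y) := by
      intro V
      rw [show -(1 : ℝ) / 2 = -(1 / 2) by norm_num, Real.rpow_neg hz.le, ← Real.sqrt_eq_rpow]
      ring
    simp only [hV, Fin.sum_univ_three, pow_one]
    have d0 := hd 0
    have d1 := hd 1
    have d2 := hd 2
    have h0 : hat (x / radius x y) (y / radius x y) 0 = -1 := rfl
    have h1 : hat (x / radius x y) (y / radius x y) 1 = x / radius x y := rfl
    have h2 : hat (x / radius x y) (y / radius x y) 2 = y / radius x y := rfl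
    rw [h0] at d0
    rw [h1] at d1
    rw [h2] at d2
    linarith
  · have hr' : t + R ≤ radius x y := by linarith
    have h0 : defect (u j) (prf (u j)) t (x, y) = 0 := by
      unfold defect Vsharp
      simp only
      rw [prf_zero (h.hS j) hR0 hab (by linarith), (h.hS j).Dd hR0 0 t x y ht hr',
        (h.hS j).Dd hR0 1 t x y ht hr', (h.hS j).Dd hR0 2 t x y ht hr']
      simp
    rw [h0]; simp

lemma wterm_integrable (h : Good R u c C) (j : Fin 2) (ht : 0 ≤ t) (i : Fin 3) :
    Integrable (fun z : ℝ × ℝ => (t + R + 1 - radius z.1 z.2) ^ 1 * (Dd i (u j)).1 t z.1 z.2 ^ 2) := by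
  have := w_integrable (((h.hS j).Dd (by linarith [h.hR]) i).pow two_ne_zero) ht 1
  simpa only [pow_app] using this

/-- The integrated defect: the area `O(t²)` times `t^{-19/8}`, the weighted energy `t^{1/4}` times
`t^{-1/2}`, and the profile part. -/
lemma lintegral_defect (h : Good R u c C) (j : Fin 2) (ht : 0 ≤ t) :
    ∫⁻ z, ENNReal.ofReal (defect (u j) (prf (u j)) t z) ≤
      ENNReal.ofReal (9600 * R ^ 2 * (1 + t) ^ (-(3 / 8) : ℝ)) +
      ENNReal.ofReal (6 * C * (1 + t) ^ (-(1 / 4) : ℝ)) + 6 * ∫⁻ q, kf R (u j) t q := by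
  have hR0 : 0 < R := by linarith [h.hR]
  have hτ : 0 < 1 + t := by linarith
  have hae : ∀ᵐ z : ℝ × ℝ, 0 < radius z.1 z.2 := by
    have : ∀ᵐ z : ℝ × ℝ, z ≠ 0 := compl_mem_ae_iff.2 (measure_singleton 0)
    filter_upwards [this] with z hz
    refine lt_of_le_of_ne (radius_nonneg _ _) fun h0 => hz ?_
    have h1 := abs_x_le z.1 z.2
    have h2 := abs_y_le z.1 z.2
    rw [← h0] at h1 h2
    exact Prod.ext (abs_nonpos_iff.1 h1) (abs_nonpos_iff.1 h2)
  have hms : MeasurableSet (sq (t + R)) := (sq_compact _).measurableSet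
  have hI : Integrable (fun z : ℝ × ℝ => 2 * (1 + t) ^ (-(1 / 2) : ℝ) *
      ∑ i, (t + R + 1 - radius z.1 z.2) ^ 1 * (Dd i (u j)).1 t z.1 z.2 ^ 2) :=
    (integrable_finsetSum _ fun i _ => wterm_integrable h j ht i).const_mul _
  have hc2 : Continuous (fun z : ℝ × ℝ => 2 * (1 + t) ^ (-(1 / 2) : ℝ) *
      ∑ i, (t + R + 1 - radius z.1 z.2) ^ 1 * (Dd i (u j)).1 t z.1 z.2 ^ 2) := by
    refine continuous_const.mul (continuous_finset_sum _ fun i _ => (pw_cont R t 1).mul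
      ((cont_slice (Dd i (u j)) t).pow 2))
  refine (lintegral_mono_ae (hae.mono fun z hz => defect_bound h j ht hz)).trans ?_
  have hm : Measurable (fun z : ℝ × ℝ =>
      (sq (t + R)).indicator (fun _ => ENNReal.ofReal (2400 * (1 + t) ^ (-(19 / 8) : ℝ))) z +
      ENNReal.ofReal (2 * (1 + t) ^ (-(1 / 2) : ℝ) *
        ∑ i, (t + R + 1 - radius z.1 z.2) ^ 1 * (Dd i (u j)).1 t z.1 z.2 ^ 2)) :=
    (measurable_const.indicator hms).add hc2.measurable.ennreal_ofReal
  rw [lintegral_add_left hm,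
    lintegral_add_left (measurable_const.indicator hms), lintegral_const_mul' _ _ (by norm_num)]
  refine add_le_add (add_le_add ?_ ?_) ?_
  · rw [lintegral_indicator_const hms]
    have hvol : volume (sq (t + R)) = ENNReal.ofReal ((2 * (t + R)) ^ 2) := by
      unfold sq
      rw [Measure.volume_eq_prod, Measure.prod_prod, Real.volume_Icc,
        ← ENNReal.ofReal_mul (by linarith)]
      ring_nf
    rw [hvol, ← ENNReal.ofReal_mul (by positivity)]
    refine ENNReal.ofReal_le_ofReal ?_
    have e1 : (1 + t) ^ (-(3 / 8) : ℝ) = (1 + t) ^ (-(19 / 8) : ℝ) * (1 + t) ^ 2 := by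
      rw [← Real.rpow_natCast (1 + t) 2, ← Real.rpow_add hτ]; norm_num
    have e2 : t + R ≤ R * (1 + t) := by nlinarith [h.hR]
    rw [e1]
    calc 2400 * (1 + t) ^ (-(19 / 8) : ℝ) * (2 * (t + R)) ^ 2
        ≤ 2400 * (1 + t) ^ (-(19 / 8) : ℝ) * (2 * (R * (1 + t))) ^ 2 := by gcongr
      _ = _ := by ring
  · rw [← ofReal_integral_eq_lintegral_ofReal hI]
    · refine ENNReal.ofReal_le_ofReal ?_
      rw [integral_const_mul, integral_finsetSum _ fun i _ => wterm_integrable h j ht i]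
      have h1 : ∑ i, ∫ z : ℝ × ℝ, (t + R + 1 - radius z.1 z.2) ^ 1 * (Dd i (u j)).1 t z.1 z.2 ^ 2 ≤
          ∑ _i : Fin 3, C * (1 + t) ^ ((1 : ℝ) / 4) :=
        Finset.sum_le_sum fun i _ => h.hW j t ht i
      rw [Finset.sum_const, Finset.card_univ, Fintype.card_fin, nsmul_eq_mul] at h1
      have e1 : (1 + t) ^ (-(1 / 4) : ℝ) = (1 + t) ^ (-(1 / 2) : ℝ) * (1 + t) ^ ((1 : ℝ) / 4) := by
        rw [← Real.rpow_add hτ]; norm_num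
      rw [e1]
      refine (mul_le_mul_of_nonneg_left h1 (by positivity)).trans (le_of_eq ?_)
      push_cast; ring
    · refine .of_forall fun z => ?_
      refine mul_nonneg (by positivity) (Finset.sum_nonneg fun i _ => ?_)
      by_cases hr : t + R ≤ radius z.1 z.2
      · rw [(h.hS j).Dd hR0 i t _ _ ht hr]; simp
      · exact mul_nonneg (by rw [pow_one]; linarith [not_le.1 hr]) (sq_nonneg _)
  · exact mul_le_mul_right (kf_polar R (u j) t) 6

/-- Convergence of the gradient to its profile in `L²`. -/
theorem scat_tendsto (h : Good R u c C) (j : Fin 2) :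
    Tendsto (fun t => scatDist (u j).1 (prf (u j)) t) atTop (𝓝 0) := by
  have hp : ∀ k : ℝ, 0 < k → Tendsto (fun t : ℝ => (1 + t) ^ (-k)) atTop (𝓝 0) := fun k hk =>
    (tendsto_rpow_neg_atTop hk).comp (tendsto_atTop_add_const_left _ _ tendsto_id)
  have h1 := ENNReal.tendsto_ofReal ((hp (3 / 8) (by norm_num)).const_mul (9600 * R ^ 2))
  have h2 := ENNReal.tendsto_ofReal ((hp (1 / 4) (by norm_num)).const_mul (6 * C))
  have h3 := ENNReal.Tendsto.const_mul (a := 6) (kf_tendsto h j) (Or.inr (by norm_num))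
  have h4 := (h1.add h2).add h3
  simp only [mul_zero, ENNReal.ofReal_zero, add_zero] at h4
  have h5 : Tendsto (fun t => ∫ z, defect (u j) (prf (u j)) t z) atTop (𝓝 0) := by
    rw [tendsto_zero_iff_enorm_tendsto_zero]
    refine tendsto_of_tendsto_of_tendsto_of_le_of_le' tendsto_const_nhds h4
      (.of_forall fun _ => zero_le) ?_
    filter_upwards [eventually_ge_atTop 0] with t ht
    refine (enorm_integral_le_lintegral_enorm _).trans (le_trans (le_of_eq ?_)
      (lintegral_defect h j ht))
    refine lintegral_congr fun z => Real.enorm_of_nonneg ?_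
    unfold defect; positivity
  have h6 := h5.sqrt
  rw [Real.sqrt_zero] at h6
  exact h6.congr fun t => (scatDist_eq (u j) (prf (u j)) t).symm

lemma Vop_tendsto (h : Good R u c C) (j : Fin 2) (hab : a ^ 2 + b ^ 2 = 1) (σ : ℝ) :
    Tendsto (fun t => Vop (u j).1 t σ a b) atTop (𝓝 (prf (u j) σ a b)) := by
  refine (prf_tendsto h.hR h.hu h.hS h.hc h.hc1 h.hC hab σ j).congr' ?_
  filter_upwards [eventually_gt_atTop (-σ)] with t ht
  exact (Vop_eq (u j) hab (by linarith)).symm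

end

/-- A function of the space variables as a (time-independent) space-time function. -/
def lift (f : ℝ → ℝ → ℝ) (hf : SmoothCompact2 f) : SF :=
  ⟨fun _ x y => f x y, (sm3_iff _).2 (hf.1.comp (contDiff_snd (𝕜 := ℝ) (E := ℝ) (F := ℝ × ℝ)))⟩

lemma exists_radius {f : ℝ → ℝ → ℝ} (hf : SmoothCompact2 f) :
    ∃ R, ∀ x y, R < radius x y → f x y = 0 := by
  obtain ⟨M, hM⟩ := hf.2.isCompact.isBounded.exists_norm_le
  refine ⟨|M| + |M|, fun x y h => ?_⟩
  by_contra h0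
  have h1 := hM (x, y) (subset_tsupport (fun p : ℝ × ℝ => f p.1 p.2) h0)
  rw [Prod.norm_def] at h1
  have hx := (le_max_left _ _).trans h1
  have hy := (le_max_right _ _).trans h1
  simp only [Real.norm_eq_abs] at hx hy
  have : radius x y ≤ |x| + |y| :=
    Real.sqrt_le_iff.2 ⟨by positivity, by
      nlinarith [sq_abs x, sq_abs y, mul_nonneg (abs_nonneg x) (abs_nonneg y)]⟩
  linarith [le_abs_self M]

/-- Small data solutions have the decay properties collected in `Good`. -/
theorem exists_good (f g : Fin 2 → SF) {R : ℝ} (hR : 1 ≤ R)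
    (hf : ∀ j x y, R < radius x y → (f j).1 0 x y = 0)
    (hg : ∀ j x y, R < radius x y → (g j).1 0 x y = 0) :
    ∃ ε₀ : ℝ, 0 < ε₀ ∧ ∀ ε : ℝ, 0 < ε → ε < ε₀ → ∀ u : Fin 2 → SF, Solves u →
      (∀ j x y, (u j).1 0 x y = ε * (f j).1 0 x y) →
      (∀ j x y, (Dd 0 (u j)).1 0 x y = ε * (g j).1 0 x y) → ∃ c C, Good R u c C := by
  have hR0 : 0 < R := by linarith
  obtain ⟨e0, he0, hboot⟩ := bootstrap hR
  obtain ⟨C0, hC0, hinit⟩ := init_energy hR0 f g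
  refine ⟨min 1 (e0 / C0), by positivity, fun ε hε hlt u hu hu0 hu1 => ?_⟩
  have hS : ∀ j, Supp R (u j) := finite_propagation hR0 hu fun j x y hr => by
    rw [hu0, hu1, hf j x y hr, hg j x y hr]; simp
  have hε1 : C0 * ε ≤ e0 := by
    have := (lt_min_iff.1 hlt).2
    rw [lt_div_iff₀ hC0] at this
    linarith
  obtain ⟨A, M, c, hA, hM, hc, hc1, hb⟩ := hboot (C0 * ε) (by positivity) hε1 u hu hS
    (hinit ε u hε (lt_min_iff.1 hlt).1.le hu hS hu0 hu1)
  obtain ⟨C, hC, hd⟩ := weighted_decay hR hu hS hc hc1 fun T => ⟨(hb T).1, (hb T).2.2⟩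
  exact ⟨c, C, hR, hu, hS, hc, hc1, fun T => (hb T).2.2, hC, fun j t ht i => (hd j t ht i).1,
    fun j t ht i x y h => (hd j t ht i).2 x y h⟩

end SF

/-- the limits `V_j⁺` exist and `∂u_j(t)` converges to
`ω̂ V_j^{+,#}(t)` in `L²(ℝ²)`. -/
theorem scattering_profile (f1 f2 g1 g2 : ℝ → ℝ → ℝ)
    (hf1 : SmoothCompact2 f1) (hf2 : SmoothCompact2 f2)
    (hg1 : SmoothCompact2 g1) (hg2 : SmoothCompact2 g2) :
    ∃ ε₀ : ℝ, 0 < ε₀ ∧ ∀ ε : ℝ, 0 < ε → ε < ε₀ →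
      ∀ u1 u2 : ℝ → ℝ → ℝ → ℝ, IsSolution ε f1 f2 g1 g2 u1 u2 →
        ∃ V1p V2p : ℝ → ℝ → ℝ → ℝ,
          (∀ σ ω1 ω2 : ℝ, ω1 ^ 2 + ω2 ^ 2 = 1 →
            Tendsto (fun t => Vop u1 t σ ω1 ω2) atTop (nhds (V1p σ ω1 ω2)) ∧
            Tendsto (fun t => Vop u2 t σ ω1 ω2) atTop (nhds (V2p σ ω1 ω2))) ∧
          Tendsto (fun t => scatDist u1 V1p t) atTop (nhds 0) ∧
          Tendsto (fun t => scatDist u2 V2p t) atTop (nhds 0) := by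
  obtain ⟨R1, h1⟩ := SF.exists_radius hf1
  obtain ⟨R2, h2⟩ := SF.exists_radius hf2
  obtain ⟨R3, h3⟩ := SF.exists_radius hg1
  obtain ⟨R4, h4⟩ := SF.exists_radius hg2
  have hle : ∀ x ∈ [R1, R2, R3, R4], x ≤ 1 + |R1| + |R2| + |R3| + |R4| := by
    have e1 := le_abs_self R1
    have e2 := le_abs_self R2
    have e3 := le_abs_self R3
    have e4 := le_abs_self R4
    have := abs_nonneg R1
    have := abs_nonneg R2
    have := abs_nonneg R3
    have := abs_nonneg R4
    simp only [List.mem_cons, List.not_mem_nil, or_false, forall_eq_or_imp, forall_eq]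
    refine ⟨?_, ?_, ?_, ?_⟩ <;> linarith
  have hR : 1 ≤ 1 + |R1| + |R2| + |R3| + |R4| := by
    have := abs_nonneg R1
    have := abs_nonneg R2
    have := abs_nonneg R3
    have := abs_nonneg R4
    linarith
  obtain ⟨ε₀, hε₀, H⟩ := SF.exists_good ![SF.lift f1 hf1, SF.lift f2 hf2]
    ![SF.lift g1 hg1, SF.lift g2 hg2] hR
    (Fin.forall_fin_two.2 ⟨fun x y h => h1 x y ((hle R1 (by simp)).trans_lt h),
      fun x y h => h2 x y ((hle R2 (by simp)).trans_lt h)⟩)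
    (Fin.forall_fin_two.2 ⟨fun x y h => h3 x y ((hle R3 (by simp)).trans_lt h),
      fun x y h => h4 x y ((hle R4 (by simp)).trans_lt h)⟩)
  refine ⟨ε₀, hε₀, fun ε hε hlt u1 u2 hu => ?_⟩
  set v1 : SF := ⟨u1, hu.smooth1⟩ with hv1
  set v2 : SF := ⟨u2, hu.smooth2⟩ with hv2
  have hbox : ∀ v : SF, dAlembert v.1 = (SF.Box v).1 := by
    intro v
    funext t x y
    unfold dAlembert SF.Box
    rw [SF.pt_eq, SF.p1_eq, SF.p2_eq, SF.pt_eq, SF.p1_eq, SF.p2_eq]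
    rfl
  have hsol : SF.Solves ![v1, v2] := by
    refine Fin.forall_fin_two.2 ⟨fun t x y ht => ?_, fun t x y ht => ?_⟩
    · have := hu.pde1 t x y ht
      rw [show dAlembert u1 = (SF.Box v1).1 from hbox v1, show pt u1 = (SF.Dd 0 v1).1 from SF.pt_eq v1,
        show pt u2 = (SF.Dd 0 v2).1 from SF.pt_eq v2] at this
      exact this
    · have := hu.pde2 t x y ht
      rw [show dAlembert u2 = (SF.Box v2).1 from hbox v2, show pt u1 = (SF.Dd 0 v1).1 from SF.pt_eq v1,
        show pt u2 = (SF.Dd 0 v2).1 from SF.pt_eq v2] at this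
      exact this
  obtain ⟨c, C, hG⟩ := H ε hε hlt ![v1, v2] hsol
    (Fin.forall_fin_two.2 ⟨hu.init1, hu.init2⟩)
    (Fin.forall_fin_two.2 ⟨fun x y => by
      have := hu.initd1 x y
      rw [show pt u1 = (SF.Dd 0 v1).1 from SF.pt_eq v1] at this
      exact this, fun x y => by
      have := hu.initd2 x y
      rw [show pt u2 = (SF.Dd 0 v2).1 from SF.pt_eq v2] at this
      exact this⟩)
  exact ⟨SF.prf v1, SF.prf v2, fun σ a b hab => ⟨SF.Vop_tendsto hG 0 hab σ, SF.Vop_tendsto hG 1 hab σ⟩,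
    SF.scat_tendsto hG 0, SF.scat_tendsto hG 1⟩

end
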